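/- arXiv:2303.02855 — 4 statements merged into one kernel-verified Lean document; each statement's English description precedes it below -/
import Mathlib

section
/- Symbol-count reduction: Let M be a Turing machine with n states and m ≥ 2 tape symbols, let b ≥ 2, and set l = ⌈log_b m⌉. Then there exists a Turing machine M' with exactly b tape symbols and at most n·[(l−1) + (1 + b + b² + … + b^{l−1}) + 2m(l−1)] states — in particular fewer than 2(m+1)·n·⌈log_b m⌉ states — such that M' halts on the blank tape if and only if M halts on the blank tape, and when both halt, M' performs at least as many steps as M. -/
open Turing

/-- Iterated `TM0.step`: run the machine for `n` steps, returning `none` if it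
halts strictly before that. -/
def multistep {Γ Λ : Type} [Inhabited Γ] [Inhabited Λ]
    (M : TM0.Machine Γ Λ) : ℕ → TM0.Cfg Γ Λ → Option (TM0.Cfg Γ Λ)
  | 0, c => some c
  | n + 1, c => (TM0.step M c).bind (multistep M n)

/-- Started from configuration `c₀`, the machine reaches after exactly `T`
steps a configuration on which the transition function is undefined. -/
def HaltsFromIn {Γ Λ : Type} [Inhabited Γ] [Inhabited Λ]
    (M : TM0.Machine Γ Λ) (c₀ : TM0.Cfg Γ Λ) (T : ℕ) : Prop :=
  ∃ c, multistep M T c₀ = some c ∧ TM0.step M c = none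

/-- The machine halts on the blank tape in exactly `T` steps. -/
def HaltsIn {Γ Λ : Type} [Inhabited Γ] [Inhabited Λ]
    (M : TM0.Machine Γ Λ) (T : ℕ) : Prop :=
  HaltsFromIn M (TM0.init []) T

section Generic

variable {Γ Λ Γ' Λ' : Type} [Inhabited Γ] [Inhabited Λ] [Inhabited Γ'] [Inhabited Λ']

theorem multistep_add_some (M : TM0.Machine Γ Λ) (i j : ℕ) (c c' : TM0.Cfg Γ Λ)
    (h : multistep M i c = some c') : multistep M (i + j) c = multistep M j c' := by
  induction i generalizing c with
  | zero => simp only [multistep, Option.some.injEq] at h; subst h; simp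
  | succ i ih =>
    rw [Nat.succ_add]
    simp only [multistep] at h ⊢
    cases hs : TM0.step M c with
    | none => simp [hs] at h
    | some d => simp only [hs, Option.bind_some] at h ⊢; exact ih d h

theorem multistep_halt (M : TM0.Machine Γ Λ) (j : ℕ) (c : TM0.Cfg Γ Λ)
    (h : TM0.step M c = none) : multistep M (j + 1) c = none := by
  simp [multistep, h]

/-- a halting time bounds the length of any run -/
theorem halts_bound (M : TM0.Machine Γ Λ) (c d : TM0.Cfg Γ Λ) (T i : ℕ)
    (h : HaltsFromIn M c T) (hi : multistep M i c = some d) : i ≤ T := by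
  obtain ⟨e, he, he'⟩ := h
  by_contra hlt
  obtain ⟨j, rfl⟩ : ∃ j, i = T + (j + 1) := ⟨i - T - 1, by omega⟩
  rw [multistep_add_some M _ _ _ _ he, multistep_halt M j e he'] at hi
  simp at hi

/-- running the big machine along a run of the small one -/
theorem sim_run (M : TM0.Machine Γ Λ) (N : TM0.Machine Γ' Λ')
    (tr : TM0.Cfg Γ Λ → TM0.Cfg Γ' Λ' → Prop)
    (hs : ∀ a b a', tr a b → TM0.step M a = some a' →
      ∃ k b', multistep N (k + 1) b = some b' ∧ tr a' b')
    (T : ℕ) (a a' : TM0.Cfg Γ Λ) (b : TM0.Cfg Γ' Λ') (h : tr a b)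
    (hr : multistep M T a = some a') :
    ∃ k b', T ≤ k ∧ multistep N k b = some b' ∧ tr a' b' := by
  induction T generalizing a b with
  | zero =>
    simp only [multistep, Option.some.injEq] at hr
    subst hr
    exact ⟨0, b, le_rfl, rfl, h⟩
  | succ T ih =>
    simp only [multistep] at hr
    cases ha : TM0.step M a with
    | none => simp [ha] at hr
    | some a₁ =>
      simp only [ha, Option.bind_some] at hr
      obtain ⟨k, b₁, hk, ht⟩ := hs a b a₁ h ha
      obtain ⟨k', b', hle, hk', ht'⟩ := ih a₁ b₁ ht hr
      refine ⟨k + 1 + k', b', by omega, ?_, ht'⟩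
      rw [multistep_add_some N _ _ _ _ hk, hk']

theorem not_halts_run (M : TM0.Machine Γ Λ) (a : TM0.Cfg Γ Λ)
    (h : ¬ ∃ T, HaltsFromIn M a T) (T : ℕ) : ∃ a', multistep M T a = some a' := by
  induction T with
  | zero => exact ⟨a, rfl⟩
  | succ T ih =>
    obtain ⟨a', ha'⟩ := ih
    cases hs : TM0.step M a' with
    | none => exact absurd ⟨T, a', ha', hs⟩ h
    | some a₁ =>
      refine ⟨a₁, ?_⟩
      rw [multistep_add_some M _ _ _ _ ha']
      simp [multistep, hs]

theorem sim_halts (M : TM0.Machine Γ Λ) (N : TM0.Machine Γ' Λ')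
    (tr : TM0.Cfg Γ Λ → TM0.Cfg Γ' Λ' → Prop)
    (hs : ∀ a b a', tr a b → TM0.step M a = some a' →
      ∃ k b', multistep N (k + 1) b = some b' ∧ tr a' b')
    (hn : ∀ a b, tr a b → TM0.step M a = none → ∃ k, HaltsFromIn N b k)
    (a : TM0.Cfg Γ Λ) (b : TM0.Cfg Γ' Λ') (h : tr a b) :
    ((∃ T, HaltsFromIn N b T) ↔ ∃ T, HaltsFromIn M a T) ∧
    ∀ T T', HaltsFromIn M a T → HaltsFromIn N b T' → T ≤ T' := by
  refine ⟨⟨?_, ?_⟩, ?_⟩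
  · rintro ⟨T, hT⟩
    by_contra hc
    obtain ⟨a', ha'⟩ := not_halts_run M a hc (T + 1)
    obtain ⟨k, b', hle, hk, -⟩ := sim_run M N tr hs _ a a' b h ha'
    have := halts_bound N b b' T k hT hk
    omega
  · rintro ⟨T, a', ha', hh⟩
    obtain ⟨k, b', hle, hk, ht⟩ := sim_run M N tr hs _ a a' b h ha'
    obtain ⟨j, c, hc, hc'⟩ := hn a' b' ht hh
    exact ⟨k + j, c, by rw [multistep_add_some N _ _ _ _ hk, hc], hc'⟩
  · rintro T T' ⟨a', ha', -⟩ hT'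
    obtain ⟨k, b', hle, hk, -⟩ := sim_run M N tr hs _ a a' b h ha'
    exact hle.trans (halts_bound N b b' T' k hT' hk)

/-- Restricting a machine to a supporting set of states does not change halting. -/
theorem restrict_halts (M : TM0.Machine Γ Λ) (S : Set Λ) (hS : TM0.Supports M S) :
    ∃ N : @TM0.Machine Γ S ⟨⟨default, hS.1⟩⟩,
      ∀ T, @HaltsIn Γ S _ ⟨⟨default, hS.1⟩⟩ N T ↔ HaltsIn M T := by
  classical
  letI : Inhabited S := ⟨⟨default, hS.1⟩⟩
  let f : PointedMap Γ Γ := ⟨id, rfl⟩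
  let g₁ : Λ → S := fun q => if h : q ∈ S then ⟨q, h⟩ else default
  let g₂ : S → Λ := Subtype.val
  have hg : ∀ q ∈ S, g₂ (g₁ q) = q := fun q hq => by simp [g₁, g₂, hq]
  have hg0 : g₁ default = default := by
    have : (default : Λ) ∈ S := hS.1
    simp only [g₁, this, dif_pos]; rfl
  have hstep := TM0.Machine.map_step M f f g₁ g₂ (S := S) (fun _ => rfl) hg
  have hrun : ∀ T (c : TM0.Cfg Γ Λ), c.q ∈ S →
      multistep (M.map f f g₁ g₂) T (c.map f g₁) = (multistep M T c).map (TM0.Cfg.map f g₁) := by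
    intro T
    induction T with
    | zero => intro c _; rfl
    | succ T ih =>
      intro c hc
      simp only [multistep]
      rw [← hstep c hc]
      cases hs : TM0.step M c with
      | none => rfl
      | some d =>
        simp only [Option.map_some, Option.bind_some]
        exact ih d (TM0.step_supports M hS hs hc)
  have hmem : ∀ T (c d : TM0.Cfg Γ Λ), c.q ∈ S → multistep M T c = some d → d.q ∈ S := by
    intro T
    induction T with
    | zero => intro c d hc h; simp only [multistep, Option.some.injEq] at h; exact h ▸ hc
    | succ T ih =>
      intro c d hc h
      simp only [multistep] at h
      cases hs : TM0.step M c with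
      | none => simp [hs] at h
      | some e =>
        simp only [hs, Option.bind_some] at h
        exact ih e d (TM0.step_supports M hS hs hc) h
  refine ⟨M.map f f g₁ g₂, fun T => ?_⟩
  have hinit : (TM0.init [] : TM0.Cfg Γ S) = (TM0.init [] : TM0.Cfg Γ Λ).map f g₁ :=
    (TM0.map_init f ⟨g₁, hg0⟩ []).symm
  have h0 : (TM0.init [] : TM0.Cfg Γ Λ).q ∈ S := hS.1
  unfold HaltsIn HaltsFromIn
  rw [hinit, hrun T _ h0]
  constructor
  · rintro ⟨c, hc, hc'⟩
    obtain ⟨d, hd, rfl⟩ := Option.map_eq_some_iff.1 hc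
    refine ⟨d, hd, ?_⟩
    rw [← hstep d (hmem T _ d h0 hd)] at hc'
    simpa using hc'
  · rintro ⟨d, hd, hd'⟩
    refine ⟨d.map f g₁, by rw [hd]; rfl, ?_⟩
    rw [← hstep d (hmem T _ d h0 hd), hd']
    rfl

end Generic

/-- States of the simulating machine: reading, moving left before a write, writing, moving left. -/
inductive SimSt (Γ' Λ : Type) : Type
  | rd : Λ → List Γ' → SimSt Γ' Λ
  | mv : Λ → Γ' → List Γ' → SimSt Γ' Λ
  | wr : Λ → Γ' → List Γ' → SimSt Γ' Λ
  | lf : Λ → ℕ → SimSt Γ' Λ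

namespace SimSt

variable {Γ Λ Γ' : Type} [Inhabited Γ] [Inhabited Λ] [Inhabited Γ']

instance : Inhabited (SimSt Γ' Λ) := ⟨rd default []⟩

/-- Continue writing the (reversed) list. -/
def goW (q : Λ) : List Γ' → SimSt Γ' Λ
  | [] => rd q []
  | c :: w => mv q c w

/-- Continue moving left. -/
def goL (q : Λ) : ℕ → SimSt Γ' Λ
  | 0 => rd q []
  | k + 1 => lf q k

theorem goW_cons (q : Λ) (c : Γ') (w : List Γ') : goW q (c :: w) = mv q c w := rfl

theorem goL_succ (q : Λ) (k : ℕ) : (goL q (k + 1) : SimSt Γ' Λ) = lf q k := rfl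

/-- What to do once a whole block is read and decoded. -/
def act (l : ℕ) (renc : Γ → List Γ') :
    Option (Λ × TM0.Stmt Γ) → Option (SimSt Γ' Λ × TM0.Stmt Γ')
  | none => none
  | some (q, TM0.Stmt.move Dir.right) => some (rd q [], TM0.Stmt.move Dir.right)
  | some (q, TM0.Stmt.move Dir.left) => some (goL q (2 * l - 2), TM0.Stmt.move Dir.left)
  | some (q, TM0.Stmt.write a) =>
    match renc a with
    | [] => none
    | c :: w => some (goW q w, TM0.Stmt.write c)

/-- The simulating machine (infinitely many states, finitely many used). -/
def machine (l : ℕ) (renc : Γ → List Γ') (dec : List Γ' → Γ) (M : TM0.Machine Γ Λ) :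
    TM0.Machine Γ' (SimSt Γ' Λ)
  | rd q w, c =>
    if w.length + 1 < l then some (rd q (c :: w), TM0.Stmt.move Dir.right)
    else act l renc (M q (dec (c :: w)))
  | mv q c w, _ => some (wr q c w, TM0.Stmt.move Dir.left)
  | wr q c w, _ => some (goW q w, TM0.Stmt.write c)
  | lf q k, _ => some (goL q k, TM0.Stmt.move Dir.left)

/-- The states in use. -/
def Good (l : ℕ) : Set (SimSt Γ' Λ) := fun s =>
  match s with
  | rd _ w => w.length < l
  | mv _ _ w => w.length + 1 < l
  | wr _ _ w => w.length + 1 < l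
  | lf _ k => k < 2 * l - 2

theorem good_goW (l : ℕ) (q : Λ) (w : List Γ') (h : w.length < l) : goW q w ∈ Good l := by
  cases w with
  | nil => exact h
  | cons c w => exact h

theorem good_goL (l : ℕ) (hl : 0 < l) (q : Λ) (k : ℕ) (h : k ≤ 2 * l - 2) :
    (goL q k : SimSt Γ' Λ) ∈ Good l := by
  cases k with
  | zero => exact hl
  | succ k => exact h

theorem supports (l : ℕ) (hl : 0 < l) (renc : Γ → List Γ') (hlen : ∀ a, (renc a).length = l)
    (dec : List Γ' → Γ) (M : TM0.Machine Γ Λ) :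
    TM0.Supports (machine l renc dec M) (Good l) := by
  refine ⟨hl, ?_⟩
  intro s a s' st hM hs
  rw [Option.mem_def] at hM
  cases s with
  | rd q w =>
    simp only [machine] at hM
    split_ifs at hM with h
    · simp only [Option.some.injEq, Prod.mk.injEq] at hM
      rw [← hM.1]
      exact h
    · generalize M q (dec (a :: w)) = o at hM
      match o, hM with
      | some (q', TM0.Stmt.move Dir.right), hM =>
        simp only [act, Option.some.injEq, Prod.mk.injEq] at hM
        rw [← hM.1]
        exact hl
      | some (q', TM0.Stmt.move Dir.left), hM =>
        simp only [act, Option.some.injEq, Prod.mk.injEq] at hM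
        rw [← hM.1]
        exact good_goL l hl _ _ le_rfl
      | some (q', TM0.Stmt.write x), hM =>
        have hx := hlen x
        cases hr : renc x with
        | nil => simp [act, hr] at hM
        | cons c v =>
          simp only [act, hr, Option.some.injEq, Prod.mk.injEq] at hM
          rw [hr, List.length_cons] at hx
          rw [← hM.1]
          exact good_goW l _ _ (by omega)
  | mv q c w =>
    simp only [machine, Option.some.injEq, Prod.mk.injEq] at hM
    rw [← hM.1]
    exact hs
  | wr q c w =>
    simp only [machine, Option.some.injEq, Prod.mk.injEq] at hM
    rw [← hM.1]
    have hs' : w.length + 1 < l := hs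
    exact good_goW l _ _ (by omega)
  | lf q k =>
    simp only [machine, Option.some.injEq, Prod.mk.injEq] at hM
    rw [← hM.1]
    have hs' : k < 2 * l - 2 := hs
    exact good_goL l hl _ _ (by omega)

section Runs

variable (l : ℕ) (renc : Γ → List Γ') (dec : List Γ' → Γ) (M : TM0.Machine Γ Λ)

theorem run_read (q : Λ) (c : Γ') (R : ListBlank Γ') (u w : List Γ') (L : ListBlank Γ')
    (h : w.length + u.length + 1 = l) :
    multistep (machine l renc dec M) u.length
      ⟨rd q w, Tape.mk' L (ListBlank.append (u ++ [c]) R)⟩ =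
      some ⟨rd q (u.reverse ++ w), Tape.mk' (ListBlank.append u.reverse L) (R.cons c)⟩ := by
  induction u generalizing w L with
  | nil => rfl
  | cons d u ih =>
    simp only [List.length_cons] at h
    have h1 : w.length + 1 < l := by omega
    simp only [List.length_cons, multistep, TM0.step, machine, h1, if_true, Option.map_some,
      Option.bind_some, Tape.move_right_mk', List.cons_append, ListBlank.append,
      ListBlank.head_cons, ListBlank.tail_cons, Tape.mk'_head]
    rw [ih (d :: w) (L.cons d) (by simp only [List.length_cons]; omega)]
    simp [ListBlank.append_assoc, ListBlank.append]

theorem run_write (q : Λ) (v' v : List Γ') (L Y : ListBlank Γ') (h : v.length = v'.length) :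
    ∃ k, multistep (machine l renc dec M) k
      ⟨goW q v', Tape.mk' (ListBlank.append v L) Y⟩ =
      some ⟨rd q [], Tape.mk' L (ListBlank.append v'.reverse Y)⟩ := by
  induction v' generalizing v Y with
  | nil =>
    obtain rfl : v = [] := by simpa using h
    exact ⟨0, rfl⟩
  | cons c v' ih =>
    cases v with
    | nil => simp at h
    | cons d v =>
      obtain ⟨k, hk⟩ := ih v (Y.cons c) (by simpa using h)
      refine ⟨k + 2, ?_⟩
      simp only [multistep, TM0.step, machine, goW_cons, Option.map_some,
        Option.bind_some, Tape.move_left_mk', Tape.write_mk', ListBlank.append,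
        ListBlank.head_cons, ListBlank.tail_cons]
      rw [hk]
      simp [ListBlank.append_assoc, ListBlank.append]

theorem run_left (q : Λ) (u : List Γ') (L Y : ListBlank Γ') :
    ∃ k, multistep (machine l renc dec M) k
      ⟨goL q u.length, Tape.mk' (ListBlank.append u L) Y⟩ =
      some ⟨rd q [], Tape.mk' L (ListBlank.append u.reverse Y)⟩ := by
  induction u generalizing Y with
  | nil => exact ⟨0, rfl⟩
  | cons c u ih =>
    obtain ⟨k, hk⟩ := ih (Y.cons c)
    refine ⟨k + 1, ?_⟩
    simp only [multistep, TM0.step, machine, goL_succ, List.length_cons, Option.map_some,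
      Option.bind_some, Tape.move_left_mk', ListBlank.append,
      ListBlank.head_cons, ListBlank.tail_cons]
    rw [hk]
    simp [ListBlank.append_assoc, ListBlank.append]

end Runs

/-- The simulating machine simulates. -/
theorem machine_sim (l : ℕ) (hl : 0 < l) (renc : Γ → List Γ') (hlen : ∀ a, (renc a).length = l)
    (hdef : renc default = List.replicate l default)
    (dec : List Γ' → Γ) (hdec : ∀ a, dec (renc a) = a) (M : TM0.Machine Γ Λ) :
    ((∃ T, HaltsIn (machine l renc dec M) T) ↔ ∃ T, HaltsIn M T) ∧
    ∀ T T', HaltsIn M T → HaltsIn (machine l renc dec M) T' → T ≤ T' := by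
  have hf : ∃ n, renc default = List.replicate n default := ⟨l, hdef⟩
  have hf' : ∃ n, (fun a => (renc a).reverse) default = List.replicate n default :=
    ⟨l, by simp [hdef]⟩
  let eL : ListBlank Γ → ListBlank Γ' := fun L => L.flatMap renc hf
  let eR : ListBlank Γ → ListBlank Γ' := fun R => R.flatMap (fun a => (renc a).reverse) hf'
  have eLc : ∀ a L, eL (ListBlank.cons a L) = ListBlank.append (renc a) (eL L) :=
    fun a L => ListBlank.cons_flatMap a L renc hf
  have eRc : ∀ a R, eR (ListBlank.cons a R) = ListBlank.append (renc a).reverse (eR R) :=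
    fun a R => ListBlank.cons_flatMap a R _ hf'
  let tr : TM0.Cfg Γ Λ → TM0.Cfg Γ' (SimSt Γ' Λ) → Prop := fun a b =>
    ∃ q L R, a = ⟨q, Tape.mk' L R⟩ ∧ b = ⟨rd q [], Tape.mk' (eL L) (eR R)⟩
  have hread : ∀ q L a R, ∃ c v, renc a = c :: v ∧
      multistep (machine l renc dec M) v.length
        ⟨rd q [], Tape.mk' (eL L) (eR (ListBlank.cons a R))⟩ =
      some ⟨rd q v, Tape.mk' (ListBlank.append v (eL L)) ((eR R).cons c)⟩ := by
    intro q L a R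
    have ha := hlen a
    cases hr : renc a with
    | nil => rw [hr] at ha; simp at ha; omega
    | cons c v =>
      rw [hr] at ha
      refine ⟨c, v, rfl, ?_⟩
      have := run_read l renc dec M q c (eR R) v.reverse [] (eL L) (by simpa using ha)
      rw [eRc, hr]
      simpa using this
  have hact : ∀ q L a R c v, renc a = c :: v →
      TM0.step (machine l renc dec M)
        ⟨rd q v, Tape.mk' (ListBlank.append v (eL L)) ((eR R).cons c)⟩ =
      (act l renc (M q a)).map fun p => ⟨p.1, match p.2 with
        | TM0.Stmt.move d => (Tape.mk' (ListBlank.append v (eL L)) ((eR R).cons c)).move d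
        | TM0.Stmt.write x => (Tape.mk' (ListBlank.append v (eL L)) ((eR R).cons c)).write x⟩ := by
    intro q L a R c v hr
    have ha := hlen a
    rw [hr, List.length_cons] at ha
    have h1 : ¬ (v.length + 1 < l) := by omega
    simp only [TM0.step, machine, Tape.mk'_head, ListBlank.head_cons, h1, if_false]
    rw [← hr, hdec]
    rfl
  refine sim_halts M (machine l renc dec M) tr ?_ ?_ (TM0.init []) (TM0.init []) ?_
  · rintro _ _ a' ⟨q, L, R₀, rfl, rfl⟩ hstep
    obtain ⟨a, R, rfl⟩ : ∃ a R, R₀ = ListBlank.cons a R := ⟨_, _, (ListBlank.cons_head_tail R₀).symm⟩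
    obtain ⟨c, v, hr, hrun⟩ := hread q L a R
    have ha := hlen a
    rw [hr, List.length_cons] at ha
    have hst := hact q L a R c v hr
    suffices h : ∃ s k b', TM0.step (machine l renc dec M)
        ⟨rd q v, Tape.mk' (ListBlank.append v (eL L)) ((eR R).cons c)⟩ = some s ∧
        multistep (machine l renc dec M) k s = some b' ∧ tr a' b' by
      obtain ⟨s, k, b', h1, h2, h3⟩ := h
      refine ⟨v.length + k, b', ?_, h3⟩
      rw [Nat.add_assoc, multistep_add_some _ _ _ _ _ hrun]
      simp only [multistep, h1, Option.bind_some, h2]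
    rw [hst]
    simp only [TM0.step, Tape.mk'_head, ListBlank.head_cons] at hstep
    generalize M q a = o at hstep
    match o, hstep with
    | some (q', TM0.Stmt.move Dir.right), hstep =>
      simp only [Option.map_some, Option.some.injEq, Tape.move_right_mk', ListBlank.head_cons,
        ListBlank.tail_cons] at hstep
      refine ⟨_, 0, _, rfl, rfl, q', _, _, hstep.symm, ?_⟩
      simp only [Tape.move_right_mk', ListBlank.head_cons, ListBlank.tail_cons]
      rw [eLc, hr]
      rfl
    | some (q', TM0.Stmt.move Dir.left), hstep =>
      obtain ⟨a₀, L, rfl⟩ : ∃ a L', L = ListBlank.cons a L' :=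
        ⟨_, _, (ListBlank.cons_head_tail L).symm⟩
      simp only [Option.map_some, Option.some.injEq, Tape.move_left_mk', ListBlank.head_cons,
        ListBlank.tail_cons] at hstep
      have ha₀ := hlen a₀
      obtain ⟨x, u, hu⟩ : ∃ x u, v ++ renc a₀ = x :: u := by
        cases h : v ++ renc a₀ with
        | nil =>
          have := congrArg List.length h
          simp at this
          rw [this.2] at ha₀
          simp at ha₀
          omega
        | cons x u => exact ⟨x, u, rfl⟩
      have hul : 2 * l - 2 = u.length := by
        have := congrArg List.length hu
        simp only [List.length_append, List.length_cons] at this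
        omega
      obtain ⟨k, hk⟩ := run_left l renc dec M q' u (eL L) (((eR R).cons c).cons x)
      refine ⟨_, k, _, rfl, ?_, q', L, ListBlank.cons a₀ (ListBlank.cons a R), hstep.symm, rfl⟩
      simp only [Tape.move_left_mk']
      rw [eLc, ← ListBlank.append_assoc, hu, hul]
      simp only [ListBlank.append, ListBlank.head_cons, ListBlank.tail_cons]
      rw [hk, eRc, eRc, hr]
      have e2 : ((eR R).cons c).cons x = ListBlank.append [x] (ListBlank.append [c] (eR R)) := rfl
      rw [e2, ← ListBlank.append_assoc, ← List.reverse_cons, ← hu]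
      simp [ListBlank.append_assoc]
    | some (q', TM0.Stmt.write x), hstep =>
      simp only [Option.map_some, Option.some.injEq, Tape.write_mk', ListBlank.tail_cons] at hstep
      have hx := hlen x
      cases hrx : renc x with
      | nil => rw [hrx] at hx; simp at hx; omega
      | cons c' v' =>
        rw [hrx, List.length_cons] at hx
        obtain ⟨k, hk⟩ := run_write l renc dec M q' v' v (eL L) ((eR R).cons c') (by omega)
        refine ⟨⟨goW q' v', Tape.mk' (ListBlank.append v (eL L)) ((eR R).cons c')⟩, k, _, ?_, hk,
          q', L, ListBlank.cons x R, hstep.symm, ?_⟩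
        · simp [act, hrx]
        · rw [eRc, hrx, List.reverse_cons, ListBlank.append_assoc]
          rfl
  · rintro _ _ ⟨q, L, R₀, rfl, rfl⟩ hstep
    obtain ⟨a, R, rfl⟩ : ∃ a R, R₀ = ListBlank.cons a R := ⟨_, _, (ListBlank.cons_head_tail R₀).symm⟩
    obtain ⟨c, v, hr, hrun⟩ := hread q L a R
    refine ⟨v.length, _, hrun, ?_⟩
    rw [hact q L a R c v hr]
    simp only [TM0.step, Tape.mk'_head, ListBlank.head_cons, Option.map_eq_none_iff] at hstep
    rw [hstep]
    rfl
  · exact ⟨default, ListBlank.mk [], ListBlank.mk [], rfl, rfl⟩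

/-- Finite parametrization of the states in use. -/
abbrev Par (l : ℕ) (Γ' Λ : Type) : Type :=
  Λ × ((Σ i : Fin l, (Fin i → Γ')) ⊕
    ((Bool × Σ i : Fin (l - 1), (Fin ((i : ℕ) + 1) → Γ')) ⊕ Fin (2 * l - 2)))

/-- The parametrization. -/
def ofPar (l : ℕ) : Par l Γ' Λ → SimSt Γ' Λ
  | (q, Sum.inl ⟨_, f⟩) => rd q (List.ofFn f)
  | (q, Sum.inr (Sum.inl (true, ⟨_, f⟩))) => mv q (f 0) (List.ofFn fun j => f j.succ)
  | (q, Sum.inr (Sum.inl (false, ⟨_, f⟩))) => wr q (f 0) (List.ofFn fun j => f j.succ)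
  | (q, Sum.inr (Sum.inr k)) => lf q k

theorem exists_par (l : ℕ) (s : SimSt Γ' Λ) (hs : s ∈ Good l) : ∃ p : Par l Γ' Λ, ofPar l p = s := by
  cases s with
  | rd q w =>
    exact ⟨(q, Sum.inl ⟨⟨w.length, hs⟩, w.get⟩), by simp [ofPar]⟩
  | mv q c w =>
    have h : w.length + 1 < l := hs
    exact ⟨(q, Sum.inr (Sum.inl (true, ⟨⟨w.length, by omega⟩, (c :: w).get⟩))), by simp [ofPar]⟩
  | wr q c w =>
    have h : w.length + 1 < l := hs
    exact ⟨(q, Sum.inr (Sum.inl (false, ⟨⟨w.length, by omega⟩, (c :: w).get⟩))), by simp [ofPar]⟩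
  | lf q k =>
    exact ⟨(q, Sum.inr (Sum.inr ⟨k, hs⟩)), rfl⟩

theorem exists_fintype_good (l : ℕ) [Fintype Γ'] [Fintype Λ] :
    ∃ i : Fintype (Good l : Set (SimSt Γ' Λ)),
      @Fintype.card (Good l : Set (SimSt Γ' Λ)) i ≤ Fintype.card Λ *
        ((∑ i ∈ Finset.range l, Fintype.card Γ' ^ i) +
          (2 * (∑ i ∈ Finset.range (l - 1), Fintype.card Γ' ^ (i + 1)) + (2 * l - 2))) := by
  classical
  choose g hg using fun s : (Good l : Set (SimSt Γ' Λ)) => exists_par l s.1 s.2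
  have hinj : Function.Injective g := fun s t h => Subtype.ext (by rw [← hg s, ← hg t, h])
  refine ⟨Fintype.ofInjective g hinj, ?_⟩
  letI := Fintype.ofInjective g hinj
  refine (Fintype.card_le_of_injective g hinj).trans (le_of_eq ?_)
  simp [Par, Fintype.card_prod, Fintype.card_sum, Fintype.card_sigma, Finset.sum_range]

end SimSt

theorem exists_code {Γ Γ' : Type} [Fintype Γ] [Inhabited Γ] [Fintype Γ'] [Inhabited Γ'] (l : ℕ)
    (h : Fintype.card Γ ≤ Fintype.card Γ' ^ l) :
    ∃ renc : Γ → List Γ', (∀ a, (renc a).length = l) ∧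
      renc default = List.replicate l default ∧ Function.Injective renc := by
  classical
  obtain ⟨e⟩ : Nonempty (Γ ↪ (Fin l → Γ')) :=
    Function.Embedding.nonempty_of_card_le (by simpa using h)
  let σ : Equiv.Perm (Fin l → Γ') := Equiv.swap (e default) (fun _ => default)
  refine ⟨fun a => List.ofFn (σ (e a)), by simp, ?_, ?_⟩
  · simp [σ, List.ofFn_const]
  · intro a b hab
    exact e.injective (σ.injective (List.ofFn_injective hab))

theorem geom_bound (b k : ℕ) (hb : 2 ≤ b) :
    (∑ i ∈ Finset.range (k + 1), b ^ i) + 1 ≤ 2 * b ^ k := by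
  induction k with
  | zero => simp
  | succ k ih =>
    rw [Finset.sum_range_succ, pow_succ]
    have : b ^ k * 2 ≤ b ^ k * b := Nat.mul_le_mul_left _ hb
    omega

/-- Symbol-count reduction: any TM with `n` states and `m ≥ 2` symbols can be
simulated by a TM with exactly `b` symbols (`b ≥ 2`) and at most
`n·[(l−1) + (1 + b + … + b^(l−1)) + 2m(l−1)]` states, where `l = ⌈log_b m⌉`;
in particular fewer than `2(m+1)·n·⌈log_b m⌉` states.  The new machine halts
on blank tape iff the original does, and takes at least as many steps. -/
theorem symbol_reduction (n m b : ℕ) (hm : 2 ≤ m) (hb : 2 ≤ b)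
    (Γ Λ : Type) [Fintype Γ] [Inhabited Γ] [Fintype Λ] [Inhabited Λ]
    (hΓ : Fintype.card Γ = m) (hΛ : Fintype.card Λ = n)
    (M : Turing.TM0.Machine Γ Λ) :
    ∃ (Γ' Λ' : Type) (_iΓ : Fintype Γ') (jΓ : Inhabited Γ')
      (_iΛ : Fintype Λ') (jΛ : Inhabited Λ'),
      Fintype.card Γ' = b ∧
      Fintype.card Λ' ≤
        n * ((Nat.clog b m - 1) + (∑ i ∈ Finset.range (Nat.clog b m), b ^ i)
          + 2 * m * (Nat.clog b m - 1)) ∧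
      Fintype.card Λ' < 2 * (m + 1) * n * Nat.clog b m ∧
      ∃ M' : @Turing.TM0.Machine Γ' Λ' jΛ,
        ((∃ T, @HaltsIn Γ' Λ' jΓ jΛ M' T) ↔ ∃ T, HaltsIn M T) ∧
        (∀ T T', HaltsIn M T → @HaltsIn Γ' Λ' jΓ jΛ M' T' → T ≤ T') := by
  classical
  have hlpos : 0 < Nat.clog b m := Nat.clog_pos (by omega) (by omega)
  have hpow : m ≤ b ^ Nat.clog b m := Nat.le_pow_clog (by omega) m
  have hlt : ∀ i, i < Nat.clog b m → b ^ i < m := fun i hi => Nat.pow_lt_of_lt_clog hi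
  generalize Nat.clog b m = l at hlpos hpow hlt
  obtain ⟨k, rfl⟩ : ∃ k, l = k + 1 := ⟨l - 1, by omega⟩
  letI : Inhabited (Fin b) := ⟨⟨0, by omega⟩⟩
  obtain ⟨renc, hlen, hdef, hinj⟩ := exists_code (Γ := Γ) (Γ' := Fin b) (k + 1) (by simpa [hΓ] using hpow)
  obtain ⟨iΛ, hcard⟩ := SimSt.exists_fintype_good (Γ' := Fin b) (Λ := Λ) (k + 1)
  have hsup := SimSt.supports (k + 1) hlpos renc hlen (Function.invFun renc) M
  obtain ⟨N, hN⟩ := restrict_halts _ _ hsup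
  have hsim := SimSt.machine_sim (k + 1) hlpos renc hlen hdef (Function.invFun renc)
    (Function.leftInverse_invFun hinj) M
  have hn : 0 < n := by rw [← hΛ]; exact Fintype.card_pos
  have hS : ∑ i ∈ Finset.range k, b ^ (i + 1) ≤ k * (m - 1) := by
    have := Finset.sum_le_card_nsmul (Finset.range k) (fun i => b ^ (i + 1)) (m - 1) (by
      intro i hi
      have := hlt (i + 1) (by have := Finset.mem_range.1 hi; omega)
      omega)
    simpa using this
  have hG := geom_bound b k hb
  have hk := hlt k (by omega)
  have hkm : k * (m - 1) + k = k * m := by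
    obtain ⟨m', rfl⟩ : ∃ m', m = m' + 1 := ⟨m - 1, by omega⟩
    simp; ring
  have hB : @Fintype.card (SimSt.Good (k + 1) : Set (SimSt (Fin b) Λ)) iΛ ≤
      n * ((k + 1 - 1) + (∑ i ∈ Finset.range (k + 1), b ^ i) + 2 * m * (k + 1 - 1)) := by
    refine hcard.trans ?_
    rw [hΛ, Fintype.card_fin]
    refine Nat.mul_le_mul_left _ ?_
    simp only [Nat.add_sub_cancel]
    have : 2 * m * k = 2 * (k * m) := by ring
    omega
  refine ⟨Fin b, (SimSt.Good (k + 1) : Set (SimSt (Fin b) Λ)), inferInstance, inferInstance, iΛ,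
    ⟨⟨default, hsup.1⟩⟩, Fintype.card_fin b, hB, lt_of_le_of_lt hB ?_, N, ?_, ?_⟩
  · have e : 2 * (m + 1) * n * (k + 1) = n * (2 * (m + 1) * (k + 1)) := by ring
    rw [e]
    refine Nat.mul_lt_mul_of_pos_left ?_ hn
    simp only [Nat.add_sub_cancel]
    have : 2 * m * k = 2 * (k * m) := by ring
    have : 2 * (m + 1) * (k + 1) = 2 * (k * m) + 2 * m + 2 * k + 2 := by ring
    omega
  · simp only [hN]
    exact hsim.1
  · intro T T' hT hT'
    exact hsim.2 T T' hT ((hN T').1 hT')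
end

section
/- State-count reduction to 2b+1 states: for every Turing machine M with n ≥ 2 states and m tape symbols and every b ≥ 2, setting l = ⌈log_b n⌉, there exists a Turing machine M' with exactly 2b+1 states and at most (n·(b+1)/(b−1) + 2(l−1) + (b^l−1)/(b−1))·m tape symbols such that M' halts on the blank tape if and only if M halts on the blank tape, and when both halt, M' performs at least as many steps as M. -/
open Turing

namespace Red

/-- Five working states and `k` unused ones. -/
abbrev St (k : ℕ) := Option (Bool × Bool) ⊕ Fin k

/-- Home state: simulate the original machine -/
abbrev sH {k : ℕ} : St k := Sum.inl none
/-- about to move (true = right) -/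
abbrev sO {k : ℕ} (d : Bool) : St k := Sum.inl (some (true, d))
/-- just arrived by a move (true = right) -/
abbrev sA {k : ℕ} (d : Bool) : St k := Sum.inl (some (false, d))

abbrev Sym (n : ℕ) (Γ : Type) := Option (Fin n) × Γ

def dirOf : Bool → Dir
  | true => Dir.right
  | false => Dir.left

instance instSt (k : ℕ) : Inhabited (St k) := ⟨sH⟩
instance instSym (n : ℕ) (Γ : Type) [Inhabited Γ] : Inhabited (Sym n Γ) := ⟨(none, default)⟩

variable {Γ Λ : Type} [Inhabited Γ] [Inhabited Λ]

/-- The simulating machine. A state is moved to the neighbouring cell in unary: the cell on the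
right is incremented and the cell on the left is decremented, until the source cell is exhausted. -/
def mach (n k : ℕ) (hn : 0 < n) (e : Λ ≃ Fin n) (M : TM0.Machine Γ Λ) :
    TM0.Machine (Sym n Γ) (St k)
  | Sum.inr _, _ => none
  | Sum.inl none, (none, a) => some (sH, TM0.Stmt.write (some (e default), a))
  | Sum.inl none, (some i, a) =>
    match M (e.symm i) a with
    | none => none
    | some (q, TM0.Stmt.write a') => some (sH, TM0.Stmt.write (some (e q), a'))
    | some (q, TM0.Stmt.move Dir.right) => some (sO true, TM0.Stmt.write (some (e q), a))
    | some (q, TM0.Stmt.move Dir.left) => some (sO false, TM0.Stmt.write (some (e q), a))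
  | Sum.inl (some (true, d)), (none, _) => some (sH, TM0.Stmt.move (dirOf d))
  | Sum.inl (some (true, d)), (some _, _) => some (sA d, TM0.Stmt.move (dirOf d))
  | Sum.inl (some (false, true)), (none, a) =>
      some (sO false, TM0.Stmt.write (some ⟨0, hn⟩, a))
  | Sum.inl (some (false, true)), (some i, a) =>
      some (sO false, TM0.Stmt.write (if h : i.1 + 1 < n then some ⟨i.1 + 1, h⟩ else none, a))
  | Sum.inl (some (false, false)), (none, a) =>
      some (sO true, TM0.Stmt.write (some ⟨n - 1, Nat.sub_lt hn Nat.one_pos⟩, a))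
  | Sum.inl (some (false, false)), (some i, a) =>
      some (sO true, TM0.Stmt.write
        (if 0 < i.1 then some ⟨i.1 - 1, lt_of_le_of_lt (Nat.sub_le _ _) i.2⟩ else none, a))

def raw (n : ℕ) : PointedMap Γ (Sym n Γ) := ⟨fun a => (none, a), rfl⟩

/-- Translation of configurations. -/
def tr (n k : ℕ) (e : Λ ≃ Fin n) (c : TM0.Cfg Γ Λ) : TM0.Cfg (Sym n Γ) (St k) :=
  ⟨sH, ⟨(some (e c.q), c.Tape.head), c.Tape.left.map (raw n), c.Tape.right.map (raw n)⟩⟩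

/-- reach in some number of steps -/
def Rch {Γ Λ : Type} [Inhabited Γ] [Inhabited Λ] (M : TM0.Machine Γ Λ) (j : ℕ)
    (c c' : TM0.Cfg Γ Λ) : Prop := ∃ t, j ≤ t ∧ multistep M t c = some c'

theorem multistep_add {Γ Λ : Type} [Inhabited Γ] [Inhabited Λ] (M : TM0.Machine Γ Λ) (s t : ℕ)
    (c : TM0.Cfg Γ Λ) : multistep M (s + t) c = (multistep M s c).bind (multistep M t) := by
  induction s generalizing c with
  | zero => simp [multistep]
  | succ s ih =>
    rw [Nat.succ_add]
    simp only [multistep]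
    cases TM0.step M c with
    | none => rfl
    | some c1 => simp [ih]

theorem Rch.trans {Γ Λ : Type} [Inhabited Γ] [Inhabited Λ] {M : TM0.Machine Γ Λ} {i j : ℕ}
    {a b c : TM0.Cfg Γ Λ} (h : Rch M i a b) (h' : Rch M j b c) : Rch M (i + j) a c := by
  obtain ⟨s, hs, es⟩ := h
  obtain ⟨t, ht, et⟩ := h'
  exact ⟨s + t, by omega, by rw [multistep_add, es]; exact et⟩

theorem Rch.mono {Γ Λ : Type} [Inhabited Γ] [Inhabited Λ] {M : TM0.Machine Γ Λ} {i j : ℕ}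
    {a b : TM0.Cfg Γ Λ} (h : Rch M i a b) (hij : j ≤ i) : Rch M j a b := by
  obtain ⟨s, hs, es⟩ := h
  exact ⟨s, by omega, es⟩

theorem Rch.head {Γ Λ : Type} [Inhabited Γ] [Inhabited Λ] {M : TM0.Machine Γ Λ} {j : ℕ}
    {a b c : TM0.Cfg Γ Λ} (h : TM0.step M a = some b) (h' : Rch M j b c) : Rch M (j + 1) a c := by
  obtain ⟨t, ht, et⟩ := h'
  exact ⟨t + 1, by omega, by simp [multistep, h, et]⟩

theorem Rch.rfl' {Γ Λ : Type} [Inhabited Γ] [Inhabited Λ] {M : TM0.Machine Γ Λ}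
    {a : TM0.Cfg Γ Λ} : Rch M 0 a a := ⟨0, le_rfl, rfl⟩

theorem loop_right (n k : ℕ) (hn : 0 < n) (e : Λ ≃ Fin n) (M : TM0.Machine Γ Λ) (a x : Γ)
    (L R : ListBlank (Sym n Γ)) (i : ℕ) : ∀ (j : ℕ) (h : j + i < n),
    Rch (mach n k hn e M) 0 ⟨sA false, ⟨(some ⟨i, by omega⟩, a), L, R.cons (some ⟨j, by omega⟩, x)⟩⟩
      ⟨sH, ⟨(some ⟨j + i, h⟩, x), L.cons (none, a), R⟩⟩ := by
  induction i with
  | zero =>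
    intro j h
    refine Rch.mono (i := 0 + 1 + 1) (Rch.head (b := ⟨sO true, ⟨(none, a), L, R.cons (some ⟨j, by omega⟩, x)⟩⟩) ?_ (Rch.head ?_ Rch.rfl')) (by omega)
    · simp [TM0.step, mach, Tape.write]
    · simp [TM0.step, mach, Tape.move, dirOf]
  | succ i ih =>
    intro j h
    have h2 := ih (j + 1) (by omega)
    have e1 : (⟨j + 1 + i, by omega⟩ : Fin n) = ⟨j + (i + 1), h⟩ := Fin.ext (by simp; omega)
    rw [e1] at h2
    refine Rch.mono (i := 0 + 1 + 1 + 1 + 1) (Rch.head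
      (b := ⟨sO true, ⟨(some ⟨i, by omega⟩, a), L, R.cons (some ⟨j, by omega⟩, x)⟩⟩) ?_ (Rch.head
      (b := ⟨sA true, ⟨(some ⟨j, by omega⟩, x), L.cons (some ⟨i, by omega⟩, a), R⟩⟩) ?_ (Rch.head
      (b := ⟨sO false, ⟨(some ⟨j + 1, by omega⟩, x), L.cons (some ⟨i, by omega⟩, a), R⟩⟩) ?_
      (Rch.head ?_ h2)))) (by omega)
    · simp [TM0.step, mach, Tape.write]
    · simp [TM0.step, mach, Tape.move, dirOf]
    · have : j + 1 < n := by omega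
      simp [TM0.step, mach, Tape.write, this]
    · simp [TM0.step, mach, Tape.move, dirOf]

theorem loop_left (n k : ℕ) (hn : 0 < n) (e : Λ ≃ Fin n) (M : TM0.Machine Γ Λ) (a x : Γ)
    (L R : ListBlank (Sym n Γ)) (i : ℕ) : ∀ (s t q : ℕ) (_ : s + i + 1 = n) (_ : t = q + i)
    (h : t < n),
    Rch (mach n k hn e M) 0 ⟨sA true, ⟨(some ⟨s, by omega⟩, a), L.cons (some ⟨t, h⟩, x), R⟩⟩
      ⟨sH, ⟨(some ⟨q, by omega⟩, x), L, R.cons (none, a)⟩⟩ := by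
  induction i with
  | zero =>
    intro s t q h1 h2 h
    obtain rfl : t = q := by omega
    refine Rch.mono (i := 0 + 1 + 1) (Rch.head (b := ⟨sO false, ⟨(none, a), L.cons (some ⟨t, h⟩, x), R⟩⟩) ?_ (Rch.head ?_ Rch.rfl')) (by omega)
    · have : ¬ (s + 1 < n) := by omega
      simp [TM0.step, mach, Tape.write, this]
    · simp [TM0.step, mach, Tape.move, dirOf]
  | succ i ih =>
    intro s t q h1 h2 h
    have h3 := ih (s + 1) (t - 1) q (by omega) (by omega) (by omega)
    refine Rch.mono (i := 0 + 1 + 1 + 1 + 1) (Rch.head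
      (b := ⟨sO false, ⟨(some ⟨s + 1, by omega⟩, a), L.cons (some ⟨t, h⟩, x), R⟩⟩) ?_ (Rch.head
      (b := ⟨sA false, ⟨(some ⟨t, by omega⟩, x), L, R.cons (some ⟨s + 1, by omega⟩, a)⟩⟩) ?_ (Rch.head
      (b := ⟨sO true, ⟨(some ⟨t - 1, by omega⟩, x), L, R.cons (some ⟨s + 1, by omega⟩, a)⟩⟩) ?_
      (Rch.head ?_ h3)))) (by omega)
    · have : s + 1 < n := by omega
      simp [TM0.step, mach, Tape.write, this]
    · simp [TM0.step, mach, Tape.move, dirOf]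
    · have : 0 < t := by omega
      simp [TM0.step, mach, Tape.write, this]
    · simp [TM0.step, mach, Tape.move, dirOf]

theorem sim_none (n k : ℕ) (hn : 0 < n) (e : Λ ≃ Fin n) (M : TM0.Machine Γ Λ)
    (c : TM0.Cfg Γ Λ) (h : TM0.step M c = none) :
    TM0.step (mach n k hn e M) (tr n k e c) = none := by
  obtain ⟨q, a, L, R⟩ := c
  have h' : M q a = none := by simpa [TM0.step] using h
  simp [TM0.step, mach, tr, h']

theorem sim_some (n k : ℕ) (hn : 0 < n) (e : Λ ≃ Fin n) (M : TM0.Machine Γ Λ)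
    (c c' : TM0.Cfg Γ Λ) (h : TM0.step M c = some c') :
    Rch (mach n k hn e M) 1 (tr n k e c) (tr n k e c') := by
  obtain ⟨q, a, L, R⟩ := c
  simp only [TM0.step, Option.map_eq_some_iff] at h
  obtain ⟨⟨q', s⟩, h1, rfl⟩ := h
  rcases s with (_ | _) | a'
  · -- left
    have e2 := (e q').2
    have h3 := loop_left n k hn e M a L.head (L.tail.map (raw n)) (R.map (raw n))
      (n - 1 - (e q').1) (e q').1 (n - 1) (e q').1 (by omega) (by omega) (by omega)
    refine Rch.mono (i := 0 + 1 + 1 + 1 + 1) (Rch.head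
      (b := ⟨sO false, ⟨(some (e q'), a), L.map (raw n), R.map (raw n)⟩⟩) ?_ (Rch.head
      (b := ⟨sA false, ⟨(none, L.head), L.tail.map (raw n), (R.map (raw n)).cons (some (e q'), a)⟩⟩) ?_ (Rch.head
      (b := ⟨sO true, ⟨(some ⟨n - 1, by omega⟩, L.head), L.tail.map (raw n), (R.map (raw n)).cons (some (e q'), a)⟩⟩) ?_
      (Rch.head (b := ⟨sA true, ⟨(some (e q'), a), (L.tail.map (raw n)).cons (some ⟨n - 1, by omega⟩, L.head), R.map (raw n)⟩⟩) ?_ ?_)))) (by omega)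
    · simp [TM0.step, mach, tr, h1, Tape.write]
    · simp [TM0.step, mach, Tape.move, dirOf, raw]
    · simp [TM0.step, mach, Tape.write]
    · simp [TM0.step, mach, Tape.move, dirOf]
    · simpa [tr, Tape.move, raw] using h3
  · -- right
    have e2 := (e q').2
    have h3 := loop_right n k hn e M a R.head (L.map (raw n)) (R.tail.map (raw n))
      (e q').1 0 (by omega)
    refine Rch.mono (i := 0 + 1 + 1 + 1 + 1) (Rch.head
      (b := ⟨sO true, ⟨(some (e q'), a), L.map (raw n), R.map (raw n)⟩⟩) ?_ (Rch.head
      (b := ⟨sA true, ⟨(none, R.head), (L.map (raw n)).cons (some (e q'), a), R.tail.map (raw n)⟩⟩) ?_ (Rch.head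
      (b := ⟨sO false, ⟨(some ⟨0, by omega⟩, R.head), (L.map (raw n)).cons (some (e q'), a), R.tail.map (raw n)⟩⟩) ?_
      (Rch.head (b := ⟨sA false, ⟨(some (e q'), a), L.map (raw n), (R.tail.map (raw n)).cons (some ⟨0, by omega⟩, R.head)⟩⟩) ?_ ?_)))) (by omega)
    · simp [TM0.step, mach, tr, h1, Tape.write]
    · simp [TM0.step, mach, Tape.move, dirOf, raw]
    · simp [TM0.step, mach, Tape.write]
    · simp [TM0.step, mach, Tape.move, dirOf]
    · simpa [tr, Tape.move, raw] using h3
  · refine Rch.mono (i := 0 + 1) (Rch.head ?_ Rch.rfl') (by omega)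
    simp [TM0.step, mach, tr, h1, Tape.write]

theorem sim_multi (n k : ℕ) (hn : 0 < n) (e : Λ ≃ Fin n) (M : TM0.Machine Γ Λ) (T : ℕ) :
    ∀ (c c' : TM0.Cfg Γ Λ) (_ : multistep M T c = some c'),
    Rch (mach n k hn e M) T (tr n k e c) (tr n k e c') := by
  induction T with
  | zero =>
    intro c c' h
    obtain rfl : c = c' := by simpa [multistep] using h
    exact Rch.rfl'
  | succ T ih =>
    intro c c' h
    simp only [multistep, Option.bind_eq_some_iff] at h
    obtain ⟨c1, h1, h2⟩ := h
    exact ((sim_some n k hn e M c c1 h1).trans (ih _ _ h2)).mono (by omega)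

theorem sim_init (n k : ℕ) (hn : 0 < n) (e : Λ ≃ Fin n) (M : TM0.Machine Γ Λ) :
    Rch (mach n k hn e M) 0 (TM0.init []) (tr n k e (TM0.init [])) := by
  refine Rch.mono (i := 0 + 1) (Rch.head ?_ Rch.rfl') (by omega)
  have hd : (ListBlank.mk ([] : List (Sym n Γ))).head = (none, default) := rfl
  have hd' : (ListBlank.mk ([] : List Γ)).head = default := rfl
  have ht : (ListBlank.mk ([] : List (Sym n Γ))).tail = ListBlank.mk [] := rfl
  have ht' : (ListBlank.mk ([] : List Γ)).tail = ListBlank.mk [] := rfl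
  simp only [TM0.init, Tape.mk₁, Tape.mk₂, Tape.mk', hd, hd', ht, ht', tr, ListBlank.map_mk,
    List.map_nil]
  rfl

theorem halt_of_lt {Γ Λ : Type} [Inhabited Γ] [Inhabited Λ] {M : TM0.Machine Γ Λ} {T s : ℕ}
    (h : HaltsIn M T) (hs : T < s) : multistep M s (TM0.init []) = none := by
  obtain ⟨c, h1, h2⟩ := h
  obtain ⟨d, rfl⟩ : ∃ d, s = T + (d + 1) := ⟨s - T - 1, by omega⟩
  rw [multistep_add, h1]
  simp [multistep, h2]

theorem halts_unique {Γ Λ : Type} [Inhabited Γ] [Inhabited Λ] {M : TM0.Machine Γ Λ} {T s : ℕ}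
    (h : HaltsIn M T) (h' : HaltsIn M s) : T = s := by
  rcases lt_trichotomy T s with hl | hl | hl
  · obtain ⟨c, h1, _⟩ := h'
    rw [halt_of_lt h hl] at h1
    cases h1
  · exact hl
  · obtain ⟨c, h1, _⟩ := h
    rw [halt_of_lt h' hl] at h1
    cases h1

theorem halts_fwd (n k : ℕ) (hn : 0 < n) (e : Λ ≃ Fin n) (M : TM0.Machine Γ Λ) (T : ℕ)
    (h : HaltsIn M T) : ∃ T', T ≤ T' ∧ HaltsIn (mach n k hn e M) T' := by
  obtain ⟨c, h1, h2⟩ := h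
  obtain ⟨t, ht, et⟩ := (sim_init n k hn e M).trans (sim_multi n k hn e M T _ _ h1)
  exact ⟨t, by omega, _, et, sim_none n k hn e M c h2⟩

theorem not_halts {M : TM0.Machine Γ Λ} (h : ¬ ∃ T, HaltsIn M T) (T : ℕ) :
    ∃ c, multistep M T (TM0.init []) = some c := by
  induction T with
  | zero => exact ⟨_, rfl⟩
  | succ T ih =>
    obtain ⟨c, hc⟩ := ih
    rw [multistep_add, hc]
    cases h2 : TM0.step M c with
    | none => exact absurd ⟨T, c, hc, h2⟩ h
    | some c1 => exact ⟨c1, by simp [multistep, h2]⟩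

theorem halts_bwd (n k : ℕ) (hn : 0 < n) (e : Λ ≃ Fin n) (M : TM0.Machine Γ Λ) (T' : ℕ)
    (h : HaltsIn (mach n k hn e M) T') : ∃ T, HaltsIn M T := by
  by_contra hc
  obtain ⟨c, h1⟩ := not_halts hc (T' + 1)
  obtain ⟨t, ht, et⟩ := (sim_init n k hn e M).trans (sim_multi n k hn e M _ _ _ h1)
  rw [halt_of_lt h (by omega)] at et
  cases et

end Red

/-- State-count reduction to `2b+1` states: any TM with `n ≥ 2` states and `m`
symbols can be simulated, for any `b ≥ 2`, by a TM with exactly `2b+1` states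
and at most `(n·(b+1)/(b−1) + 2(l−1) + (b^l−1)/(b−1))·m` symbols, where
`l = ⌈log_b n⌉`; it halts on blank tape iff the original does, with at least
as many steps. -/
theorem state_reduction_2b_plus_one (n m b : ℕ) (hn : 2 ≤ n) (hb : 2 ≤ b)
    (Γ Λ : Type) [Fintype Γ] [Inhabited Γ] [Fintype Λ] [Inhabited Λ]
    (hΓ : Fintype.card Γ = m) (hΛ : Fintype.card Λ = n)
    (M : Turing.TM0.Machine Γ Λ) :
    ∃ (Γ' Λ' : Type) (_iΓ : Fintype Γ') (jΓ : Inhabited Γ')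
      (_iΛ : Fintype Λ') (jΛ : Inhabited Λ'),
      Fintype.card Λ' = 2 * b + 1 ∧
      (Fintype.card Γ' : ℝ) ≤
        ((n : ℝ) * (b + 1) / ((b : ℝ) - 1) + 2 * ((Nat.clog b n : ℝ) - 1)
          + ((b : ℝ) ^ (Nat.clog b n) - 1) / ((b : ℝ) - 1)) * m ∧
      ∃ M' : @Turing.TM0.Machine Γ' Λ' jΛ,
        ((∃ T, @HaltsIn Γ' Λ' jΓ jΛ M' T) ↔ ∃ T, HaltsIn M T) ∧
        (∀ T T', HaltsIn M T → @HaltsIn Γ' Λ' jΓ jΛ M' T' → T ≤ T') := by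
  classical
  have hn0 : 0 < n := by omega
  let e : Λ ≃ Fin n := Fintype.equivFinOfCardEq hΛ
  refine ⟨Red.Sym n Γ, Red.St (2 * b - 4), inferInstance, Red.instSym n Γ, inferInstance,
    Red.instSt _, ?_, ?_, Red.mach n (2 * b - 4) hn0 e M, ⟨?_, ?_⟩, ?_⟩
  · simp [Red.St]
    omega
  · have hc : Fintype.card (Red.Sym n Γ) = (n + 1) * m := by
      simp [Red.Sym, hΓ]
    rw [hc]
    push_cast
    apply mul_le_mul_of_nonneg_right _ (Nat.cast_nonneg m)
    have hl : 1 ≤ Nat.clog b n := Nat.clog_pos (by omega) hn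
    have hl' : (1 : ℝ) ≤ Nat.clog b n := by exact_mod_cast hl
    have hb' : (2 : ℝ) ≤ b := by exact_mod_cast hb
    have hb1 : (0 : ℝ) < (b : ℝ) - 1 := by linarith
    have hn' : (0 : ℝ) ≤ n := Nat.cast_nonneg n
    have h1 : (n : ℝ) ≤ (n : ℝ) * (b + 1) / ((b : ℝ) - 1) := by
      rw [le_div_iff₀ hb1]
      nlinarith
    have h2 : (1 : ℝ) ≤ ((b : ℝ) ^ (Nat.clog b n) - 1) / ((b : ℝ) - 1) := by
      rw [le_div_iff₀ hb1]
      have : (b : ℝ) ≤ (b : ℝ) ^ (Nat.clog b n) :=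
        le_self_pow₀ (by linarith) (by omega)
      linarith
    linarith
  · rintro ⟨T', h⟩
    exact Red.halts_bwd n _ hn0 e M T' h
  · rintro ⟨T, h⟩
    obtain ⟨T', _, h'⟩ := Red.halts_fwd n (2 * b - 4) hn0 e M T h
    exact ⟨T', h'⟩
  · intro T T' h h'
    obtain ⟨T'', hle, h''⟩ := Red.halts_fwd n (2 * b - 4) hn0 e M T h
    rw [Red.halts_unique h' h'']
    exact hle
end

section
/- There exists a Turing machine with 44 states and 8 tape symbols which, started on the blank tape, halts, and the number of steps it performs before halting is greater than n(3). -/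
/-- `friedmanBlock s i` is the block `s_i s_{i+1} … s_{2i}` of the word `s`
(1-based indices); it has length `i + 1` when `2*i ≤ s.length`. -/
def friedmanBlock {α : Type} (s : List α) (i : ℕ) : List α :=
  (s.drop (i - 1)).take (i + 1)

/-- Friedman's property (*): there are no indices `1 ≤ i < j ≤ n/2` such that
`s^(i)` is a (scattered) subword of `s^(j)`.  Note `j ≤ n/2 ↔ 2*j ≤ n`. -/
def SatisfiesStar {α : Type} (s : List α) : Prop :=
  ∀ i j : ℕ, 1 ≤ i → i < j → 2 * j ≤ s.length →
    ¬ (friedmanBlock s i).Sublist (friedmanBlock s j)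

/-- `friedmanN k` = n(k), the length of a longest word over a `k`-letter
alphabet satisfying (*). -/
noncomputable def friedmanN (k : ℕ) : ℕ :=
  sSup {n : ℕ | ∃ s : List (Fin k), s.length = n ∧ SatisfiesStar s}

open Turing

namespace FTM

/-! ### Symbols, states and the machine

Tape symbols: `0` blank, `1,2,3` letters, `4,5,6` marked letters, `7` separator. -/

/-- letter symbols -/
def lt : Fin 3 → Fin 8 := ![1, 2, 3]
/-- marked letter symbols -/
def pr : Fin 3 → Fin 8 := ![4, 5, 6]
/-- remove a mark -/
def up : Fin 8 → Fin 8 := ![0, 1, 2, 3, 1, 2, 3, 7]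

/-- skipping states -/
def skS : Option (Fin 3) → Fin 44
  | none => 20
  | some d => ![21, 22, 23] d
/-- seeking states -/
def seS : Option (Fin 3) → Fin 44
  | none => 24
  | some d => ![25, 26, 27] d
/-- exit states of a sweep -/
def exS : Option (Fin 3) → Fin 44
  | none => 3
  | some _ => 4

abbrev Act := Option (Fin 44 × TM0.Stmt (Fin 8))

/-- move left -/
def goL (q : Fin 44) : Act := some (q, TM0.Stmt.move Dir.left)
/-- move right -/
def goR (q : Fin 44) : Act := some (q, TM0.Stmt.move Dir.right)
/-- write -/
def wr (a : Fin 8) (q : Fin 44) : Act := some (q, TM0.Stmt.write a)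

/-- rows of the skipping states -/
def skT (o : Option (Fin 3)) : Fin 8 → Act :=
  ![none, goL (skS o), goL (skS o), goL (skS o), goL (skS o), goL (skS o), goL (skS o),
    goL (seS o)]

/-- action of a seeking state on a letter -/
def seA (o : Option (Fin 3)) (d : Fin 3) : Act :=
  if o = some d then wr (pr d) (skS o) else goL (skS o)

/-- rows of the seeking states -/
def seT (o : Option (Fin 3)) : Fin 8 → Act :=
  ![goR (exS o), seA o 0, seA o 1, seA o 2, goL (seS o), goL (seS o), goL (seS o), goL 7]

/-- the transition table -/
def tab : ℕ → Fin 8 → Act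
  | 0 => ![wr 7 1, none, none, none, none, none, none, none]
  | 1 => ![wr 3 2, none, none, none, none, none, none, goR 1]
  | 2 => ![wr 3 3, none, none, goR 2, none, none, none, none]
  | 3 => ![wr 7 4, goR 3, goR 3, goR 3, wr 1 3, wr 2 3, wr 3 3, goR 3]
  | 4 => ![wr 3 5, goR 4, goR 4, goR 4, goR 4, goR 4, goR 4, goR 4]
  | 5 => ![none, none, none, goL 5, none, none, none, goL 6]
  | 6 => ![none, wr 4 21, wr 5 22, wr 6 23, goL 6, goL 6, goL 6, goL 24]
  | 7 => ![goR 8, goL 7, goL 7, goL 7, goL 7, goL 7, goL 7, goL 7]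
  | 8 => ![goL 9, goR 8, goR 8, goR 8, wr 1 8, wr 2 8, wr 3 8, goR 8]
  | 9 => ![goL 9, none, none, wr 0 9, none, none, none, wr 0 10]
  | 10 => ![goL 11, none, none, none, none, none, none, none]
  | 11 => ![none, goL 11, goL 11, goL 11, none, none, none, goR 12]
  | 12 => ![goL 9, wr 3 13, wr 1 3, wr 2 3, none, none, none, none]
  | 13 => ![none, none, none, goR 12, none, none, none, none]
  | 20 => skT none
  | 21 => skT (some 0)
  | 22 => skT (some 1)
  | 23 => skT (some 2)
  | 24 => seT none
  | 25 => seT (some 0)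
  | 26 => seT (some 1)
  | 27 => seT (some 2)
  | _ => fun _ => none

/-- the machine -/
def M : TM0.Machine (Fin 8) (Fin 44) := fun q a => tab q.val a

theorem M_sk (o) (a) : M (skS o) a = skT o a := by
  rcases o with _ | d
  · rfl
  · fin_cases d <;> rfl

theorem M_se (o) (a) : M (seS o) a = seT o a := by
  rcases o with _ | d
  · rfl
  · fin_cases d <;> rfl

theorem M_sk_sep (o) : M (skS o) 7 = goL (seS o) := by rw [M_sk]; rfl
theorem M_sk_lt (o) (d) : M (skS o) (lt d) = goL (skS o) := by rw [M_sk]; fin_cases d <;> rfl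
theorem M_sk_pr (o) (d) : M (skS o) (pr d) = goL (skS o) := by rw [M_sk]; fin_cases d <;> rfl
theorem M_se_sep (o) : M (seS o) 7 = goL 7 := by rw [M_se]; rfl
theorem M_se_bl (o) : M (seS o) 0 = goR (exS o) := by rw [M_se]; rfl
theorem M_se_pr (o) (d) : M (seS o) (pr d) = goL (seS o) := by rw [M_se]; fin_cases d <;> rfl
theorem M_se_lt (o) (d) : M (seS o) (lt d) = seA o d := by rw [M_se]; fin_cases d <;> rfl
theorem M_6_lt (d) : M 6 (lt d) = wr (pr d) (skS (some d)) := by fin_cases d <;> rfl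
theorem M_6_pr (d) : M 6 (pr d) = goL 6 := by fin_cases d <;> rfl
theorem M_11_lt (d) : M 11 (lt d) = goL 11 := by fin_cases d <;> rfl
theorem M_7 (a) (h : a ≠ 0) : M 7 a = goL 7 := by fin_cases a <;> first | rfl | exact absurd rfl h
theorem M_4 (a) (h : a ≠ 0) : M 4 a = goR 4 := by fin_cases a <;> first | rfl | exact absurd rfl h

theorem lt_ne (d) : lt d ≠ 0 := by fin_cases d <;> decide
theorem pr_ne (d) : pr d ≠ 0 := by fin_cases d <;> decide
theorem up_lt (d) : up (lt d) = lt d := by fin_cases d <;> rfl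
theorem up_pr (d) : up (pr d) = lt d := by fin_cases d <;> rfl

/-! ### Configurations -/

/-- head on the first cell of `r` -/
def CR (q : Fin 44) (l r : List (Fin 8)) : TM0.Cfg (Fin 8) (Fin 44) :=
  ⟨q, Tape.mk' (ListBlank.mk l) (ListBlank.mk r)⟩

/-- head on the first cell of `l` -/
def CL (q : Fin 44) (l r : List (Fin 8)) : TM0.Cfg (Fin 8) (Fin 44) :=
  ⟨q, Tape.mk' (ListBlank.mk l.tail) (ListBlank.mk (l.headI :: r))⟩

theorem mk_zero : (ListBlank.mk [0] : ListBlank (Fin 8)) = ListBlank.mk [] := by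
  apply ListBlank.ext
  intro i
  rcases i with _ | i <;> simp [ListBlank.nth_mk]

theorem CL_blank (q l) : CL q l [0] = CL q l [] := by
  have h : (ListBlank.mk [l.headI, 0] : ListBlank (Fin 8)) = ListBlank.mk [l.headI] := by
    rw [← ListBlank.cons_mk, mk_zero, ListBlank.cons_mk]
  simp only [CL, h]

theorem CR_cons (q l a r) : CR q l (a :: r) = CL q (a :: l) r := rfl
theorem CR_nil (q l) : CR q l [] = CL q (0 :: l) [] := by
  simp only [CR, CL, List.tail_cons, List.headI, mk_zero]
theorem CL_nil (q r) : CL q [] r = CL q [0] r := rfl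
theorem CR_lblank (q r) : CR q [0] r = CR q [] r := by
  simp only [CR, mk_zero]

/-- `c` halts after at least `k` steps -/
def H (k : ℕ) (c : TM0.Cfg (Fin 8) (Fin 44)) : Prop := ∃ T, k ≤ T ∧ HaltsFromIn M c T

theorem H_step {k c c'} (h : TM0.step M c = some c') (hc : H k c') : H (k + 1) c := by
  obtain ⟨T, hT, d, hd, hs⟩ := hc
  refine ⟨T + 1, by omega, d, ?_, hs⟩
  simp [multistep, h, hd]

theorem H_mono {k k' c} (h : H k c) (hk : k' ≤ k) : H k' c := by
  obtain ⟨T, hT, r⟩ := h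
  exact ⟨T, by omega, r⟩

theorem sL' {k q q' a l r} (h : M q a = goL q') (hc : H k (CL q' l (a :: r))) :
    H (k + 1) (CL q (a :: l) r) := by
  refine H_step ?_ hc
  simp [TM0.step, CL, h, goL, Tape.move_left_mk', ListBlank.cons_mk]

theorem sR' {k q q' a l r} (h : M q a = goR q') (hc : H k (CR q' (a :: l) r)) :
    H (k + 1) (CL q (a :: l) r) := by
  refine H_step ?_ hc
  simp [TM0.step, CL, CR, h, goR, Tape.move_right_mk', ListBlank.cons_mk]

theorem sW' {k q q' a b l r} (h : M q a = wr b q') (hc : H k (CL q' (b :: l) r)) :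
    H (k + 1) (CL q (a :: l) r) := by
  refine H_step ?_ hc
  simp [TM0.step, CL, h, wr, Tape.write_mk', ListBlank.cons_mk]

theorem sL {k q q' a l r} (h : M q a = goL q') (hc : H k (CL q' l (a :: r))) :
    H k (CL q (a :: l) r) := H_mono (sL' h hc) (by omega)
theorem sR {k q q' a l r} (h : M q a = goR q') (hc : H k (CR q' (a :: l) r)) :
    H k (CL q (a :: l) r) := H_mono (sR' h hc) (by omega)
theorem sW {k q q' a b l r} (h : M q a = wr b q') (hc : H k (CL q' (b :: l) r)) :
    H k (CL q (a :: l) r) := H_mono (sW' h hc) (by omega)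

theorem H_halt {q r} (h : M q 0 = none) : H 0 (CL q [] r) := by
  refine ⟨0, le_rfl, _, rfl, ?_⟩
  have : (default : Fin 8) = 0 := rfl
  simp [TM0.step, CL, List.headI, this, h]

theorem sweepL {k q l l' r} (hl : ∀ a ∈ l, M q a = goL q)
    (h : H k (CL q l' (l.reverse ++ r))) : H k (CL q (l ++ l') r) := by
  induction l generalizing r with
  | nil => simpa using h
  | cons a l ih =>
    rw [List.cons_append]
    refine sL (hl a (by simp)) (ih (fun b hb => hl b (by simp [hb])) ?_)
    simpa using h

theorem sweepR {k q l r r'} (hl : ∀ a ∈ r, M q a = goR q)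
    (h : H k (CR q (r.reverse ++ l) r')) : H k (CR q l (r ++ r')) := by
  induction r generalizing l with
  | nil => simpa using h
  | cons a r ih =>
    rw [List.cons_append, CR_cons]
    refine sR (hl a (by simp)) (ih (fun b hb => hl b (by simp [hb])) ?_)
    simpa using h

/-- unmarking sweep to the right -/
theorem unmark {k q l r} (hq : q = 3 ∨ q = 8) (hr : ∀ a ∈ r, a ≠ 0)
    (h : H k (CR q ((r.map up).reverse ++ l) [])) : H k (CR q l r) := by
  induction r generalizing l with
  | nil => simpa using h
  | cons a r ih =>
    rw [CR_cons]
    have ha := hr a (by simp)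
    have h' : H k (CR q (up a :: l) r) := by
      refine ih (fun b hb => hr b (by simp [hb])) ?_
      simpa using h
    rcases hq with rfl | rfl <;> fin_cases a <;>
      first
      | exact absurd rfl ha
      | exact sR rfl h'
      | exact sW (q' := 3) rfl (sR rfl h')
      | exact sW (q' := 8) rfl (sR rfl h')

/-! ### Words on the tape -/

abbrev W := List (Fin 3)

/-- encoding of a stack of words -/
def enc : List W → List (Fin 8)
  | [] => []
  | w :: s => w.map lt ++ 7 :: enc s

/-- encoding of a stack of words with marked initial parts -/
def encP : List (W × W) → List (Fin 8)
  | [] => []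
  | p :: s => p.1.map pr ++ (p.2.map lt ++ 7 :: encP s)

theorem encP_ne (I) : ∀ a ∈ encP I, a ≠ 0 := by
  induction I with
  | nil => simp [encP]
  | cons p I ih =>
    intro a ha
    simp only [encP, List.mem_append, List.mem_map, List.mem_cons] at ha
    rcases ha with ⟨d, _, rfl⟩ | ⟨d, _, rfl⟩ | rfl | ha
    · exact pr_ne d
    · exact lt_ne d
    · decide
    · exact ih a ha

theorem map_up_encP (I) : (encP I).map up = enc (I.map fun p => p.1 ++ p.2) := by
  induction I with
  | nil => rfl
  | cons p I ih =>
    have h7 : up 7 = 7 := rfl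
    simp [encP, enc, ih, Function.comp_def, up_lt, up_pr, h7]

/-- advance one word -/
def adv (o : Option (Fin 3)) : W × W → W × W
  | (a, []) => (a, [])
  | (a, d :: b) => if o = some d then (a ++ [d], b) else (a, d :: b)

theorem adv_join (o p) : (adv o p).1 ++ (adv o p).2 = p.1 ++ p.2 := by
  rcases p with ⟨a, _ | ⟨d, b⟩⟩
  · rfl
  · simp only [adv]
    split_ifs <;> simp

theorem skip_lt {k o} {w : W} {l r} (h : H k (CL (skS o) l ((w.map lt).reverse ++ r))) :
    H k (CL (skS o) (w.map lt ++ l) r) := by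
  refine sweepL ?_ h
  intro a ha
  obtain ⟨d, _, rfl⟩ := List.mem_map.1 ha
  exact M_sk_lt o d

/-- one word in a sweep -/
theorem seek_one {k o} {p : W × W} {l r} (hp : p.2 ≠ [])
    (h : H k (CL (seS o) l ((encP [adv o p]).reverse ++ r))) :
    H k (CL (seS o) (p.1.map pr ++ (p.2.map lt ++ 7 :: l)) r) := by
  rcases p with ⟨a, _ | ⟨d, b⟩⟩
  · exact absurd rfl hp
  refine sweepL ?_ ?_
  · intro x hx
    obtain ⟨d, _, rfl⟩ := List.mem_map.1 hx
    exact M_se_pr o d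
  simp only [List.map_cons, List.cons_append]
  by_cases ho : o = some d
  · refine sW (b := pr d) (q' := skS o) (by rw [M_se_lt, seA, if_pos ho]) ?_
    refine sL (M_sk_pr o d) (skip_lt (sL (M_sk_sep o) ?_))
    simpa [adv, ho, encP] using h
  · refine sL (q' := skS o) (by rw [M_se_lt, seA, if_neg ho]) ?_
    refine skip_lt (sL (M_sk_sep o) ?_)
    simpa [adv, ho, encP] using h

theorem encP_cons (p I) : encP (p :: I) = encP [p] ++ encP I := by simp [encP]

theorem seek_acc {k o I r} (hI : ∀ p ∈ I, p.2 ≠ [])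
    (h : H k (CR (exS o) [] ((encP (I.map (adv o))).reverse ++ r))) :
    H k (CL (seS o) (encP I) r) := by
  induction I generalizing r with
  | nil =>
    rw [encP, CL_nil]
    refine sR (M_se_bl o) ?_
    rw [CR_lblank]
    simpa [encP] using h
  | cons p I ih =>
    refine seek_one (hI p (by simp)) (ih (fun x hx => hI x (by simp [hx])) ?_)
    rw [List.map_cons, encP_cons] at h
    simpa using h

/-- rejecting: unmark everything -/
theorem rejectV {k l r} (hl : ∀ a ∈ l, a ≠ 0) (hr : ∀ a ∈ r, a ≠ 0)
    (h : H k (CR 8 ((r.reverse ++ l).map up) [])) : H k (CL 7 l r) := by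
  rw [← List.append_nil l]
  refine sweepL (fun a ha => M_7 a (hl a ha)) ?_
  rw [CL_nil]
  refine sR (q' := 8) rfl ?_
  rw [CR_lblank]
  refine unmark (Or.inr rfl) ?_ ?_
  · intro a ha
    simp only [List.mem_append, List.mem_reverse] at ha
    rcases ha with ha | ha
    · exact hl a ha
    · exact hr a ha
  · simpa using h

theorem seek_rej {k o I r} (hI : ∃ p ∈ I, p.2 = []) (hr : ∀ a ∈ r, a ≠ 0)
    (h : H k (CR 8 ((r.reverse ++ encP I).map up) [])) :
    H k (CL (seS o) (encP I) r) := by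
  induction I generalizing r with
  | nil => simp at hI
  | cons p I ih =>
    by_cases hp : p.2 = []
    · rw [encP, hp]
      refine sweepL ?_ ?_
      · intro x hx
        obtain ⟨d, _, rfl⟩ := List.mem_map.1 hx
        exact M_se_pr o d
      refine sL (M_se_sep o) (rejectV (encP_ne I) ?_ ?_)
      · intro a ha
        simp only [List.mem_cons, List.mem_append, List.mem_reverse, List.mem_map] at ha
        rcases ha with rfl | ⟨d, _, rfl⟩ | ha
        · decide
        · exact pr_ne d
        · exact hr a ha
      · simpa [encP, hp] using h
    · refine seek_one hp (ih ?_ ?_ ?_)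
      · obtain ⟨x, hx, hx'⟩ := hI
        rcases List.mem_cons.1 hx with rfl | hx
        · exact absurd hx' hp
        · exact ⟨x, hx, hx'⟩
      · intro a ha
        rcases List.mem_append.1 ha with ha | ha
        · exact encP_ne _ a (List.mem_reverse.1 ha)
        · exact hr a ha
      · have e2 : (encP [adv o p]).map up = (encP [p]).map up := by
          rw [map_up_encP, map_up_encP]
          simp [adv_join]
        rw [encP_cons] at h
        simp only [List.map_append, List.map_reverse, List.reverse_append, List.reverse_reverse,
          e2] at h ⊢
        simpa using h

/-! ### The test -/

theorem prim_ne (w : W) : ∀ a ∈ (w.map pr), a ≠ 0 := by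
  intro a ha
  obtain ⟨d, _, rfl⟩ := List.mem_map.1 ha
  exact pr_ne d

theorem three_ne (n : ℕ) : ∀ a ∈ List.replicate n (3 : Fin 8), a ≠ 0 := by
  intro a ha
  rw [List.eq_of_mem_replicate ha]
  decide

theorem up_three (n : ℕ) : (List.replicate n (3 : Fin 8)).map up = List.replicate n 3 := by
  rw [List.map_replicate]; rfl

/-- going back from the right end to the current letter of the top word -/
theorem back {k n l} {w : W} (h : H k (CL 6 l ((w.map pr).reverse ++ 7 :: List.replicate (n + 1) 3))) :
    H k (CR 4 (List.replicate n 3 ++ 7 :: (w.map pr ++ l)) []) := by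
  rw [CR_nil]
  refine sW (q' := 5) (b := 3) rfl ?_
  rw [← List.cons_append, ← List.replicate_succ]
  refine sweepL ?_ ?_
  · intro a ha
    rw [List.eq_of_mem_replicate ha]; rfl
  refine sL (q' := 6) rfl (sweepL ?_ ?_)
  · intro a ha
    obtain ⟨d, _, rfl⟩ := List.mem_map.1 ha
    exact M_6_pr d
  · simpa using h

/-- one test round up to the sweep -/
theorem round1 {k d yb l r} (h : H k (CL (seS (some d)) l (7 :: ((List.map lt yb).reverse ++ pr d :: r)))) :
    H k (CL 6 (List.map lt (d :: yb) ++ 7 :: l) r) := by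
  rw [List.map_cons, List.cons_append]
  exact sW (M_6_lt d) (sL (M_sk_pr _ d) (skip_lt (sL (M_sk_sep _) h)))

theorem sub_adv {d : Fin 3} {y : W} {p : W × W} (hp : p.2 ≠ []) :
    p.2.Sublist (d :: y) ↔ (adv (some d) p).2.Sublist y := by
  rcases p with ⟨a, _ | ⟨e, b⟩⟩
  · exact absurd rfl hp
  · by_cases h : d = e
    · subst h
      simp [adv]
    · have : ¬ (some d = some e) := by simpa using h
      simp only [adv, this, if_false]
      constructor
      · intro hs
        cases hs with
        | cons _ hs => exact hs
        | cons_cons _ hs => exact absurd rfl h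
      · intro hs
        exact hs.cons d

theorem join_adv (o) (I : List (W × W)) :
    (I.map (adv o)).map (fun p => p.1 ++ p.2) = I.map (fun p => p.1 ++ p.2) := by
  simp [List.map_map, Function.comp_def, adv_join]

theorem tape_ne {ya yb : W} {n : ℕ} : ∀ a ∈ (7 : Fin 8) :: ((yb.map lt).reverse ++
    ((ya.map pr).reverse ++ 7 :: List.replicate n 3)), a ≠ 0 := by
  intro a ha
  simp only [List.mem_cons, List.mem_append, List.mem_reverse, List.mem_map] at ha
  rcases ha with rfl | ⟨d, _, rfl⟩ | ⟨d, _, rfl⟩ | rfl | ha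
  · decide
  · exact lt_ne d
  · exact pr_ne d
  · decide
  · exact three_ne n a ha

theorem round2 {k n d} {ya yb : W} {I : List (W × W)} (hI : ∀ p ∈ I, p.2 ≠ [])
    (h : H k (CL 6 (yb.map lt ++ 7 :: encP (I.map (adv (some d))))
      (((ya ++ [d]).map pr).reverse ++ 7 :: List.replicate (n + 1) 3))) :
    H k (CL 6 ((d :: yb).map lt ++ 7 :: encP I)
      ((ya.map pr).reverse ++ 7 :: List.replicate n 3)) := by
  refine round1 (seek_acc hI ?_)
  have h' := back h
  rw [← List.append_nil (List.reverse _ ++ _)]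
  refine sweepR ?_ ?_
  · intro a ha
    refine M_4 a ?_
    rcases List.mem_append.1 ha with ha | ha
    · exact encP_ne _ a (List.mem_reverse.1 ha)
    · refine tape_ne (ya := ya ++ [d]) (yb := yb) (n := n) a ?_
      simpa using ha
  · simpa [exS] using h'

theorem test_acc {k n} {ya yb : W} {I : List (W × W)} (hI : ∀ p ∈ I, ¬ p.2.Sublist yb)
    (h : H k (CR 3 (List.replicate (n + yb.length) 3 ++
      7 :: enc ((ya ++ yb) :: I.map fun p => p.1 ++ p.2)) [])) :
    H k (CL 6 (yb.map lt ++ 7 :: encP I)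
      ((ya.map pr).reverse ++ 7 :: List.replicate n 3)) := by
  have hne : ∀ p ∈ I, p.2 ≠ [] := fun p hp e => hI p hp (by rw [e]; exact List.nil_sublist _)
  induction yb generalizing ya n I with
  | nil =>
    refine sL (q' := seS none) rfl (seek_acc hne ?_)
    refine unmark (Or.inl rfl) ?_ ?_
    · intro a ha
      rcases List.mem_append.1 ha with ha | ha
      · exact encP_ne _ a (List.mem_reverse.1 ha)
      · exact tape_ne (ya := ya) (yb := []) (n := n) a (by simpa using ha)
    · have e := join_adv none I
      have e3 : up 3 = 3 := rfl
      have e7 : up 7 = 7 := rfl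
      simp only [List.map_append, List.map_reverse, List.map_cons, map_up_encP, e, up_three,
        List.map_map, Function.comp_def, up_pr, e7]
      simpa [enc, exS] using h
  | cons d yb ih =>
    refine round2 hne (ih ?_ ?_ ?_)
    · intro p hp
      obtain ⟨x, hx, rfl⟩ := List.mem_map.1 hp
      rw [← sub_adv (hne x hx)]
      exact hI x hx
    · rw [join_adv]
      have : n + 1 + yb.length = n + (d :: yb).length := by simp; omega
      rw [this]
      simpa using h
    · intro p hp
      obtain ⟨x, hx, rfl⟩ := List.mem_map.1 hp
      intro e
      refine hI x hx ((sub_adv (hne x hx)).2 ?_)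
      rw [e]; exact List.nil_sublist _

theorem test_rej {k n} {ya yb : W} {I : List (W × W)} (hI : ∃ p ∈ I, p.2.Sublist yb)
    (h : ∀ m, H k (CR 8 (List.replicate m 3 ++
      7 :: enc ((ya ++ yb) :: I.map fun p => p.1 ++ p.2)) [])) :
    H k (CL 6 (yb.map lt ++ 7 :: encP I)
      ((ya.map pr).reverse ++ 7 :: List.replicate n 3)) := by
  have e7 : up 7 = 7 := rfl
  induction yb generalizing ya n I with
  | nil =>
    refine sL (q' := seS none) rfl (seek_rej ?_ ?_ ?_)
    · obtain ⟨p, hp, hs⟩ := hI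
      exact ⟨p, hp, List.sublist_nil.1 hs⟩
    · intro a ha
      exact tape_ne (ya := ya) (yb := []) (n := n) a (by simpa using ha)
    · simp only [List.map_append, List.map_reverse, List.map_cons, map_up_encP, up_three,
        List.map_map, Function.comp_def, up_pr, e7, List.reverse_append, List.reverse_cons,
        List.reverse_reverse]
      simpa [enc] using h n
  | cons d yb ih =>
    by_cases hne : ∀ p ∈ I, p.2 ≠ []
    · refine round2 hne (ih ?_ ?_)
      · obtain ⟨p, hp, hs⟩ := hI
        exact ⟨_, List.mem_map_of_mem hp, (sub_adv (hne p hp)).1 hs⟩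
      · rw [join_adv]
        simpa using h
    · push Not at hne
      refine round1 (seek_rej hne ?_ ?_)
      · intro a ha
        exact tape_ne (ya := ya ++ [d]) (yb := yb) (n := n) a (by simpa using ha)
      · simp only [List.map_append, List.map_reverse, List.map_cons, map_up_encP, up_three,
          List.map_map, Function.comp_def, up_pr, up_lt, e7, List.reverse_append,
          List.reverse_cons, List.reverse_reverse]
        simpa [enc] using h n

/-! ### Top level of the search -/

/-- about to test the top word -/
def St (s : List W) := CR 3 (enc s) []
/-- about to replace the top word by its predecessor -/
def P (s : List W) := CL 11 (enc s) []

theorem enc_eq (s : List W) : enc s = encP (s.map fun w => ([], w)) := by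
  induction s with
  | nil => rfl
  | cons w s ih => simp [enc, encP, ih]

theorem start {k} {w : W} {s : List W} (h : H k (CL 6 (w.map lt ++ 7 :: enc s)
    ((List.map pr []).reverse ++ 7 :: List.replicate 1 3))) : H (k + 2) (St (w :: s)) := by
  rw [St, CR_nil]
  refine sW' (k := k + 1) (q' := 4) (b := 7) rfl (sR' (q' := 4) rfl ?_)
  exact back (n := 0) (w := []) h

theorem accept {k} {w : W} {s : List W} (hs : ∀ x ∈ s, ¬ x.Sublist w)
    (h : H k (St (List.replicate (w.length + 1) 2 :: w :: s))) : H (k + 2) (St (w :: s)) := by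
  refine start ?_
  rw [enc_eq]
  refine test_acc ?_ ?_
  · intro p hp
    obtain ⟨x, hx, rfl⟩ := List.mem_map.1 hp
    exact hs x hx
  · have : lt 2 = 3 := rfl
    simpa [St, enc, List.map_map, Function.comp_def, this, add_comm] using h

theorem eraseE {k m l} (h : H k (CL 11 l [])) : H k (CL 9 (List.replicate m 3 ++ 7 :: l) []) := by
  induction m with
  | zero =>
    refine sW (q' := 10) (b := 0) rfl (sL (q' := 11) rfl ?_)
    rw [CL_blank]; exact h
  | succ m ih =>
    rw [List.replicate_succ, List.cons_append]
    refine sW (q' := 9) (b := 0) rfl (sL (q' := 9) rfl ?_)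
    rw [CL_blank]; exact ih

theorem reject {k} {w : W} {s : List W} (hs : ∃ x ∈ s, x.Sublist w)
    (h : H k (P (w :: s))) : H k (St (w :: s)) := by
  refine H_mono (start (k := k) ?_) (by omega)
  rw [enc_eq]
  refine test_rej ?_ ?_
  · obtain ⟨x, hx, h'⟩ := hs
    exact ⟨_, List.mem_map_of_mem hx, h'⟩
  · intro m
    rw [CR_nil]
    refine sL (q' := 9) rfl ?_
    rw [CL_blank]
    refine eraseE ?_
    simpa [P, List.map_map, Function.comp_def] using h

/-- predecessor in the enumeration of words of given length -/
def pd : W → Option W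
  | [] => none
  | d :: t => if d = 0 then (pd t).map (2 :: ·) else some ((d - 1) :: t)

/-- position in the enumeration -/
def val : W → ℕ
  | [] => 0
  | d :: t => d.val + 3 * val t

theorem pd_some {t t' : W} (h : pd t = some t') : val t = val t' + 1 ∧ t'.length = t.length := by
  induction t generalizing t' with
  | nil => simp [pd] at h
  | cons d t ih =>
    by_cases hd : d = 0
    · simp only [pd, hd, if_true, Option.map_eq_some_iff] at h
      obtain ⟨u, hu, rfl⟩ := h
      obtain ⟨h1, h2⟩ := ih hu
      refine ⟨?_, by simp [h2]⟩
      simp [val, hd, h1]; omega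
    · simp only [pd, hd, if_false, Option.some.injEq] at h
      subst h
      refine ⟨?_, by simp⟩
      fin_cases d <;> simp_all [val] <;> omega

theorem pd_none {t : W} (h : pd t = none) : val t = 0 := by
  induction t with
  | nil => rfl
  | cons d t ih =>
    by_cases hd : d = 0
    · simp only [pd, hd, if_true, Option.map_eq_none_iff] at h
      simp [val, hd, ih h]
    · simp [pd, hd] at h

theorem val_le (t : W) : val t ≤ val (List.replicate t.length 2) := by
  induction t with
  | nil => simp
  | cons d t ih =>
    simp only [List.length_cons, List.replicate_succ, val]
    have : ((2 : Fin 3) : ℕ) = 2 := rfl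
    omega

theorem val_inj {t u : W} (hl : t.length = u.length) (h : val t = val u) : t = u := by
  induction t generalizing u with
  | nil => simpa using hl.symm
  | cons d t ih =>
    rcases u with _ | ⟨e, u⟩
    · simp at hl
    · simp only [val] at h
      have h1 : d = e := by ext; omega
      have h2 : t = u := ih (by simpa using hl) (by omega)
      rw [h1, h2]

theorem decD_some {k l} {t t' : W} (ht : pd t = some t')
    (h : H k (CR 3 ((t'.map lt).reverse ++ l) [])) : H k (CR 12 l (t.map lt)) := by
  induction t generalizing t' l with
  | nil => simp [pd] at ht
  | cons d t ih =>
    rw [List.map_cons, CR_cons]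
    by_cases hd : d = 0
    · simp only [pd, hd, if_true, Option.map_eq_some_iff] at ht
      obtain ⟨u, hu, rfl⟩ := ht
      subst hd
      refine sW (q' := 13) (b := 3) rfl (sR (q' := 12) rfl (ih hu ?_))
      have : lt 2 = 3 := rfl
      simpa [this] using h
    · simp only [pd, hd, if_false, Option.some.injEq] at ht
      subst ht
      have h0 : ∀ e : Fin 3, H k (CR 3 ((List.map lt (e :: t)).reverse ++ l) []) →
          H k (CL 3 (lt e :: l) (t.map lt)) := by
        intro e he
        rw [← CR_cons, ← List.map_cons]
        refine unmark (Or.inl rfl) ?_ ?_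
        · intro a ha
          obtain ⟨d, _, rfl⟩ := List.mem_map.1 ha
          exact lt_ne d
        · simpa [Function.comp_def, up_lt] using he
      have h1 := h0 _ h
      fin_cases d
      · exact absurd rfl hd
      · exact sW (q' := 3) (b := 1) rfl h1
      · exact sW (q' := 3) (b := 2) rfl h1

theorem decD_none {k l} {t : W} (ht : pd t = none)
    (h : H k (CL 9 (List.replicate t.length 3 ++ l) [])) : H k (CR 12 l (t.map lt)) := by
  induction t generalizing l with
  | nil =>
    rw [List.map_nil, CR_nil]
    refine sL (q' := 9) rfl ?_
    rw [CL_blank]; exact h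
  | cons d t ih =>
    rw [List.map_cons, CR_cons]
    by_cases hd : d = 0
    · simp only [pd, hd, if_true, Option.map_eq_none_iff] at ht
      subst hd
      refine sW (q' := 13) (b := 3) rfl (sR (q' := 12) rfl (ih ht ?_))
      rw [List.length_cons, List.replicate_succ'] at h
      simpa using h
    · simp [pd, hd] at ht

theorem dec {k} {w : W} {s : List W} (h : H k (CR 12 (7 :: enc s) (w.reverse.map lt))) :
    H k (P (w :: s)) := by
  rw [P, enc]
  refine sweepL ?_ (sR (q' := 12) rfl ?_)
  · intro a ha
    obtain ⟨d, _, rfl⟩ := List.mem_map.1 ha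
    exact M_11_lt d
  · simpa using h

theorem dec_some {k} {w t : W} {s : List W} (ht : pd w.reverse = some t)
    (h : H k (St (t.reverse :: s))) : H k (P (w :: s)) := by
  refine dec (decD_some ht ?_)
  simpa [St, enc] using h

theorem dec_none {k} {w : W} {s : List W} (ht : pd w.reverse = none)
    (h : H k (P s)) : H k (P (w :: s)) :=
  dec (decD_none ht (eraseE h))

theorem halt_nil : H 0 (P []) := H_halt rfl

theorem init_step {k} (h : H k (St [[2, 2]])) : H (k + 2) (TM0.init []) := by
  have e : (TM0.init [] : TM0.Cfg (Fin 8) (Fin 44)) = CR 0 [] [] := rfl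
  rw [e, CR_nil]
  refine sW' (k := k + 1) (q' := 1) (b := 7) rfl (sR' (q' := 1) rfl ?_)
  rw [CR_nil]
  refine sW (q' := 2) (b := 3) rfl (sR (q' := 2) rfl ?_)
  rw [CR_nil]
  exact sW (q' := 3) (b := 3) rfl (sR (q' := 3) rfl h)

/-! ### Well-foundedness (Higman) and the search -/

/-- extension of a stack by an accepted word -/
def Ext (t s : List W) : Prop := ∃ w, t = w :: s ∧ ∀ x ∈ s, ¬ x.Sublist w

theorem higman (f : ℕ → W) : ∃ m n, m < n ∧ (f m).Sublist (f n) := by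
  have h0 : (Set.univ : Set (Fin 3)).PartiallyWellOrderedOn (· = ·) :=
    Set.partiallyWellOrderedOn_univ_iff.2 (Finite.wellQuasiOrdered _)
  obtain ⟨m, n, hmn, h⟩ := (Set.PartiallyWellOrderedOn.partiallyWellOrderedOn_sublistForall₂
    (· = ·) h0).exists_lt (f := f) (fun n => by simp)
  refine ⟨m, n, hmn, ?_⟩
  obtain ⟨l, h1, h2⟩ := List.sublistForall₂_iff.1 h
  rw [List.forall₂_eq_eq_eq] at h1
  subst h1
  exact h2

theorem ext_wf : WellFounded Ext := by
  rw [wellFounded_iff_isEmpty_descending_chain]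
  refine ⟨fun ⟨f, hf⟩ => ?_⟩
  choose w hw hn using hf
  have hmem : ∀ n m, m < n → w m ∈ f n := by
    intro n
    induction n with
    | zero => intro m hm; omega
    | succ n ih =>
      intro m hm
      rw [hw n]
      rcases Nat.lt_succ_iff_lt_or_eq.1 hm with h | rfl
      · exact List.mem_cons_of_mem _ (ih m h)
      · exact List.mem_cons_self
  obtain ⟨m, n, hmn, hs⟩ := higman w
  exact hn n (w m) (hmem n m hmn) hs

/-- the stack can be continued through `d` accepted words -/
def Dp : ℕ → W → List W → Prop
  | 0, _, _ => True
  | d + 1, w, s => (∀ x ∈ s, ¬ x.Sublist w) ∧ ∃ w' : W, w'.length = w.length + 1 ∧ Dp d w' (w :: s)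

theorem search_aux (s : List W) (IH : ∀ t, Ext t s → ∀ (v : ℕ) (w : W) (k : ℕ),
      val w.reverse = v → H k (P t) → ∀ (d : ℕ) (w' : W), w'.length = w.length →
      val w'.reverse ≤ v → Dp d w' t → H (k + 2 * d) (St (w :: t)))
    {k d} {w : W} (hP : H k (P (w :: s))) (hd : Dp d w s) : H (k + 2 * d) (St (w :: s)) := by
  by_cases hs : ∀ x ∈ s, ¬ x.Sublist w
  · have key : ∀ d (w' : W), w'.length = w.length + 1 → Dp d w' (w :: s) →
        H (k + 2 * d + 2) (St (w :: s)) := by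
      intro d w' hl hd
      refine accept hs (IH (w :: s) ⟨w, rfl, hs⟩ _ _ k rfl hP d w' (by simp [hl]) ?_ hd)
      have := val_le w'.reverse
      simpa [hl] using this
    rcases d with _ | d
    · exact H_mono (key 0 (List.replicate (w.length + 1) 2) (by simp) trivial) (by omega)
    · obtain ⟨_, w', hl, h'⟩ := hd
      exact H_mono (key d w' hl h') (by omega)
  · rcases d with _ | d
    · push Not at hs
      exact reject hs hP
    · exact absurd hd.1 hs

theorem search (s : List W) : ∀ (v : ℕ) (w : W) (k : ℕ), val w.reverse = v → H k (P s) →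
    ∀ (d : ℕ) (w' : W), w'.length = w.length → val w'.reverse ≤ v → Dp d w' s →
      H (k + 2 * d) (St (w :: s)) := by
  induction s using ext_wf.induction with
  | _ s IH =>
  intro v
  induction v with
  | zero =>
    intro w k hv hk d w' hl hle hd
    have hw : w' = w := List.reverse_injective (val_inj (by simpa using hl) (by omega))
    subst hw
    have hP : H k (P (w' :: s)) := by
      rcases ht : pd w'.reverse with _ | t
      · exact dec_none ht hk
      · have := pd_some ht; omega
    exact search_aux s IH hP hd
  | succ v ih =>
    intro w k hv hk d w' hl hle hd
    rcases ht : pd w.reverse with _ | t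
    · have := pd_none ht; omega
    obtain ⟨h1, h2⟩ := pd_some ht
    by_cases hw : w' = w
    · subst hw
      have hP : H k (P (w' :: s)) :=
        dec_some ht (ih t.reverse k (by simpa using (by omega : val t = v)) hk 0 t.reverse rfl
          (by simpa using (by omega : val t ≤ v)) trivial)
      exact search_aux s IH hP hd
    · have hne : val w'.reverse ≠ v + 1 := fun e =>
        hw (List.reverse_injective (val_inj (by simpa using hl) (by omega)))
      have hP : H (k + 2 * d) (P (w :: s)) :=
        dec_some ht (ih t.reverse k (by simpa using (by omega : val t = v)) hk d w'
          (by simp at h2 ⊢; omega) (by omega) hd)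
      exact search_aux s IH (d := 0) hP trivial

theorem main_halt (d : ℕ) (w : W) (hl : w.length = 2) (hd : Dp d w []) :
    H (2 * d + 2) (TM0.init []) := by
  refine init_step ?_
  have := search [] _ [2, 2] 0 rfl halt_nil d w (by simp [hl]) ?_ hd
  · simpa using this
  · have := val_le w.reverse
    simpa [hl] using this

/-! ### Friedman words -/

/-- stack of the first `j` blocks -/
def stk (s : W) : ℕ → List W
  | 0 => []
  | j + 1 => friedmanBlock s (j + 1) :: stk s j

theorem mem_stk {s : W} {j x} (h : x ∈ stk s j) : ∃ i, 1 ≤ i ∧ i ≤ j ∧ x = friedmanBlock s i := by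
  induction j with
  | zero => simp [stk] at h
  | succ j ih =>
    rcases List.mem_cons.1 h with rfl | h
    · exact ⟨j + 1, by omega, le_rfl, rfl⟩
    · obtain ⟨i, h1, h2, h3⟩ := ih h
      exact ⟨i, h1, by omega, h3⟩

theorem block_length {s : W} {j} (h1 : 1 ≤ j) (h : 2 * j ≤ s.length) :
    (friedmanBlock s j).length = j + 1 := by
  simp [friedmanBlock]; omega

theorem dp_star {s : W} (hs : SatisfiesStar s) (d j : ℕ) (h : 2 * (j + d) ≤ s.length) :
    Dp d (friedmanBlock s (j + 1)) (stk s j) := by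
  induction d generalizing j with
  | zero => trivial
  | succ d ih =>
    refine ⟨?_, ?_⟩
    · intro x hx
      obtain ⟨i, h1, h2, rfl⟩ := mem_stk hx
      exact hs i (j + 1) h1 (by omega) (by omega)
    · rcases d with _ | d
      · exact ⟨List.replicate _ 2, List.length_replicate, trivial⟩
      · refine ⟨friedmanBlock s (j + 1 + 1), ?_, ih (j + 1) (by omega)⟩
        rw [block_length (by omega) (by omega), block_length (by omega) (by omega)]

theorem star_bound {s : W} (hs : SatisfiesStar s) : H (s.length + 1) (TM0.init []) := by
  by_cases h2 : 2 ≤ s.length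
  · refine H_mono (main_halt (s.length / 2) (friedmanBlock s 1)
      (block_length le_rfl (by omega)) ?_) (by omega)
    exact dp_star hs (s.length / 2) 0 (by omega)
  · exact H_mono (main_halt 0 [2, 2] rfl trivial) (by omega)

theorem halt_unique {T T' : ℕ} {c : TM0.Cfg (Fin 8) (Fin 44)} (h : HaltsFromIn M c T)
    (h' : HaltsFromIn M c T') : T = T' := by
  induction T generalizing T' c with
  | zero =>
    obtain ⟨d, hd, hs⟩ := h
    obtain ⟨d', hd', hs'⟩ := h'
    rcases T' with _ | T'
    · rfl
    · simp only [multistep, Option.some.injEq] at hd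
      subst hd
      simp [multistep, hs] at hd'
  | succ T ih =>
    obtain ⟨d, hd, hs⟩ := h
    obtain ⟨d', hd', hs'⟩ := h'
    rcases hc : TM0.step M c with _ | c'
    · simp [multistep, hc] at hd
    · rcases T' with _ | T'
      · simp only [multistep, Option.some.injEq] at hd'
        subst hd'
        rw [hc] at hs'
        exact absurd hs' (by simp)
      · rw [ih (c := c') (T' := T') ⟨d, by simpa [multistep, hc] using hd, hs⟩
          ⟨d', by simpa [multistep, hc] using hd', hs'⟩]

end FTM

/-- There is a Turing machine with 44 states and 8 tape symbols which halts on
the blank tape after more than n(3) steps. -/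
theorem tm_44_8_exceeds_n3 :
    ∃ (M : Turing.TM0.Machine (Fin 8) (Fin 44)) (T : ℕ),
      HaltsIn M T ∧ friedmanN 3 < T := by
  obtain ⟨T, hT, hh⟩ := FTM.main_halt 0 [2, 2] rfl trivial
  refine ⟨FTM.M, T, hh, ?_⟩
  have hb : ∀ n ∈ {n : ℕ | ∃ s : List (Fin 3), s.length = n ∧ SatisfiesStar s}, n ≤ T - 1 := by
    rintro n ⟨s, rfl, hs⟩
    obtain ⟨T', hT', hh'⟩ := FTM.star_bound hs
    have := FTM.halt_unique hh hh'
    omega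
  have hn : {n : ℕ | ∃ s : List (Fin 3), s.length = n ∧ SatisfiesStar s}.Nonempty :=
    ⟨0, [], rfl, by
      intro i j hi hj h
      simp at h
      omega⟩
  have := csSup_le hn hb
  unfold friedmanN
  omega
end

section
/- There exists a Turing machine with 276 states and 2 tape symbols which, started on the blank tape, halts, and the number of steps it performs before halting is greater than n(3). -/
open Turing

namespace FriedmanTM

/-- Tracks of a cell: letter bits `A`, `B`, block-end flag `F`, marker `K`. -/
inductive Track
  | A | B | F | K

/-- Labels of the high level program. -/
inductive Lab
  | s0 | s1
  | i0 | i1 | i2 | i3 | i4 | i5 | i6 | i7 | i8 | aft | x0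
  | c0 | c1 | c2 | c3
  | r0 | r1 | r2 | r3 | r4 | r5 | r6 | r7 | r8 | r9
  | m0 | m1 | m2
  | pa1 | pa2 | pa3 | pa4 | pa5 | pa6
  | pb1 | pb2 | pb3 | pb4 | pb5 | pb6
  | pc1 | pc2 | pc3 | pc4 | pc5 | pc6 | pc7
  | n0 | n1 | n2 | n3 | n4 | n5 | n6
  | b0 | b1 | b2 | b3 | b4 | b5
  | f0 | f1 | f2 | f3 | f4
  | g0 | g1 | g2 | g3 | g4 | g5 | g6 | g7 | g8 | g9 | g10 | g11 | g12 | g12b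
  | g13 | g14 | g15 | g16 | g17 | g18 | g19 | g20
  | halt
  deriving DecidableEq

/-- High level instructions. `test t a b`: go to `a` if the bit is set, else to `b`. -/
inductive Ins
  | mvL (a : Lab)
  | mvR (a : Lab)
  | test (t : Track) (a b : Lab)
  | set (t : Track) (v : Bool) (a : Lab)

open Lab Ins Track in
/-- The high level program. -/
def prog : Lab → Ins
  | s0 => set F true s1
  | s1 => mvL i0
  -- increment the letter under the head
  | i0 => test B i2 i1
  | i1 => set B true aft
  | i2 => set B false i3
  | i3 => test A i5 i4
  | i4 => set A true aft
  | i5 => set A false i6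
  | i6 => mvL i7
  | i7 => test A i0 i8
  | i8 => test B i0 halt
  | aft => test F c0 x0
  | x0 => mvR i0
  -- check: go to the left end
  | c0 => test A c2 c1
  | c1 => test B c2 c3
  | c2 => mvL c0
  | c3 => mvR r0
  -- mark the start of a block, mark the cell before the last block
  | r0 => set K true r1
  | r1 => test A r3 r2
  | r2 => test B r3 r4
  | r3 => mvR r1
  | r4 => mvL r5
  | r5 => test K g0 r6
  | r6 => mvL r7
  | r7 => test F r8 r5
  | r8 => set K true r9
  | r9 => mvL m0
  | m0 => test K m1 r9
  -- read the letter
  | m1 => test A m2 pa1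
  | m2 => test B pc1 pb1
  | pa1 => mvR pa2
  | pa2 => test K pa3 pa1
  | pa3 => set K false pa4
  | pa4 => mvR pa5
  | pa5 => test A pa4 pa6
  | pa6 => test B n0 f0
  | pb1 => mvR pb2
  | pb2 => test K pb3 pb1
  | pb3 => set K false pb4
  | pb4 => mvR pb5
  | pb5 => test B pb4 pb6
  | pb6 => test A n0 f0
  | pc1 => mvR pc2
  | pc2 => test K pc3 pc1
  | pc3 => set K false pc4
  | pc4 => mvR pc5
  | pc5 => test A pc6 pc7
  | pc6 => test B n0 pc4
  | pc7 => test B pc4 f0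
  -- letter matched
  | n0 => set K true n1
  | n1 => mvL n2
  | n2 => test K n3 n1
  | n3 => set K false n4
  | n4 => test F b0 n5
  | n5 => mvR n6
  | n6 => set K true m1
  -- bad word: clean up and increment
  | b0 => mvR b1
  | b1 => test K b2 b0
  | b2 => set K false b3
  | b3 => test A b5 b4
  | b4 => test B b5 i6
  | b5 => mvR b3
  -- block does not embed: next block
  | f0 => mvL f1
  | f1 => test K f2 f0
  | f2 => set K false f3
  | f3 => test F c3 f4
  | f4 => mvR f3
  -- good word: create the flag of the next block
  | g0 => test A g2 g1
  | g1 => test B g2 g3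
  | g2 => mvR g0
  | g3 => set K true g4
  | g4 => mvL g5
  | g5 => test K g6 g4
  | g6 => set K false g7
  | g7 => test F g13 g8
  | g8 => mvR g9
  | g9 => set K true g10
  | g10 => mvR g11
  | g11 => test K g12 g10
  | g12 => set K false g12b
  | g12b => mvR g3
  | g13 => mvR g14
  | g14 => test K g15 g13
  | g15 => set K false g16
  | g16 => mvR g17
  | g17 => set F true g18
  | g18 => test A x0 g19
  | g19 => test B x0 g20
  | g20 => mvL g18
  | halt => mvL halt

open Lab in
/-- All labels except `halt`. -/
def labs : List Lab :=
  [s0, s1, i0, i1, i2, i3, i4, i5, i6, i7, i8, aft, x0, c0, c1, c2, c3,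
   r0, r1, r2, r3, r4, r5, r6, r7, r8, r9, m0, m1, m2,
   pa1, pa2, pa3, pa4, pa5, pa6, pb1, pb2, pb3, pb4, pb5, pb6,
   pc1, pc2, pc3, pc4, pc5, pc6, pc7, n0, n1, n2, n3, n4, n5, n6,
   b0, b1, b2, b3, b4, b5, f0, f1, f2, f3, f4,
   g0, g1, g2, g3, g4, g5, g6, g7, g8, g9, g10, g11, g12, g12b,
   g13, g14, g15, g16, g17, g18, g19, g20]

/-- Number of machine states used by an instruction. -/
def size : Ins → ℕ
  | .mvL _ => 4
  | .mvR _ => 4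
  | .test .K _ _ => 1
  | .test .A _ _ => 2
  | .test .B _ _ => 2
  | .test .F _ _ => 5
  | .set .K _ _ => 1
  | .set .A _ _ => 3
  | .set .B _ _ => 3
  | .set .F _ _ => 5

def baseAux : List Lab → Lab → ℕ
  | [], _ => 0
  | a :: r, l => if a = l then 0 else size (prog a) + baseAux r l

/-- First machine state of a label. -/
def base (l : Lab) : ℕ := baseAux labs l

abbrev Act := ℕ × TM0.Stmt (Fin 2)

def goL (n : ℕ) : Act := (n, TM0.Stmt.move Dir.left)
def goR (n : ℕ) : Act := (n, TM0.Stmt.move Dir.right)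
def bit (v : Bool) : Fin 2 := if v then 1 else 0
def wr (v : Bool) (n : ℕ) : Act := (n, TM0.Stmt.write (bit v))

/-- Both symbols lead to the same action. -/
def both (a : Act) : Act × Act := (a, a)

/-- Machine code of an instruction placed at state `b`: action on `0`, action on `1`. -/
def code (b : ℕ) : Ins → List (Act × Act)
  | .mvL a => [both (goL (b+1)), both (goL (b+2)), both (goL (b+3)), both (goL (base a))]
  | .mvR a => [both (goR (b+1)), both (goR (b+2)), both (goR (b+3)), both (goR (base a))]
  | .test .K a c => [(wr false (base c), wr true (base a))]
  | .test .A a c => [both (goL (b+1)), (goR (base c), goR (base a))]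
  | .test .B a c => [both (goR (b+1)), (goL (base c), goL (base a))]
  | .test .F a c => [both (goR (b+1)), both (goR (b+2)), (goL (b+3), goL (b+4)),
      both (goL (base c)), both (goL (base a))]
  | .set .K v a => [both (wr v (base a))]
  | .set .A v a => [both (goL (b+1)), both (wr v (b+2)), both (goR (base a))]
  | .set .B v a => [both (goR (b+1)), both (wr v (b+2)), both (goL (base a))]
  | .set .F v a => [both (goR (b+1)), both (goR (b+2)), both (wr v (b+3)),
      both (goL (b+4)), both (goL (base a))]

def table : List (Act × Act) := labs.flatMap fun l => code (base l) (prog l)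

def pick (e : Act × Act) (s : Fin 2) : Act := if s = 0 then e.1 else e.2

/-- State number `n`. -/
def st (n : ℕ) : Fin 276 := ⟨n % 276, Nat.mod_lt _ (by norm_num)⟩

/-- The machine. -/
def M : TM0.Machine (Fin 2) (Fin 276) := fun q s =>
  (table[q.val]?).map fun e => (st (pick e s).1, (pick e s).2)

lemma code_length (b : ℕ) (i : Ins) : (code b i).length = size i := by
  rcases i with a | a | ⟨t, a, c⟩ | ⟨t, v, a⟩ <;> try cases t
  all_goals rfl

lemma table_length : table.length = 235 := by
  have : table.length = (labs.map fun l => size (prog l)).sum := by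
    simp [table, List.length_flatMap, code_length]
  rw [this]; decide

lemma base_split (L : List Lab) (l : Lab) (h : l ∈ L) :
    ∃ pre post, L.flatMap (fun l => code (base l) (prog l)) =
      pre ++ (code (base l) (prog l) ++ post) ∧ pre.length = baseAux L l := by
  induction L with
  | nil => simp at h
  | cons a r ih =>
    by_cases e : a = l
    · subst e
      exact ⟨[], r.flatMap (fun l => code (base l) (prog l)), by simp, by simp [baseAux]⟩
    · have h' : l ∈ r := by
        rcases List.mem_cons.1 h with h | h
        · exact absurd h.symm e
        · exact h
      obtain ⟨pre, post, h1, h2⟩ := ih h'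
      refine ⟨code (base a) (prog a) ++ pre, post, by simp [h1], ?_⟩
      simp [baseAux, e, h2, code_length]

lemma mem_labs (l : Lab) (h : l ≠ .halt) : l ∈ labs := by
  revert h; cases l <;> decide

lemma table_get (l : Lab) (h : l ≠ .halt) (i : ℕ) (hi : i < size (prog l)) :
    table[base l + i]? = (code (base l) (prog l))[i]? := by
  obtain ⟨pre, post, h1, h2⟩ := base_split labs l (mem_labs l h)
  have hb : base l = pre.length := h2.symm
  have : table = pre ++ (code (base l) (prog l) ++ post) := h1
  rw [this, hb, List.getElem?_append_right (by omega), ← hb]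
  rw [show base l + i - base l = i by omega, List.getElem?_append_left (by rw [code_length]; exact hi)]

lemma base_halt : base .halt = 235 := by decide

/-- Low level configuration: state, tape, head position. -/
structure Low where
  q : ℕ
  t : ℤ → Fin 2
  p : ℤ

def Sim (a : Low) (C : TM0.Cfg (Fin 2) (Fin 276)) : Prop :=
  C.q = st a.q ∧ ∀ i, C.Tape.nth i = a.t (a.p + i)

/-- `Rch n a b`: from `a`, the machine reaches `b` after at least `n` steps. -/
def Rch (n : ℕ) (a b : Low) : Prop :=
  ∀ C, Sim a C → ∃ k, n ≤ k ∧ ∃ C', multistep M k C = some C' ∧ Sim b C'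

lemma multistep_add (m n : ℕ) (C : TM0.Cfg (Fin 2) (Fin 276)) :
    multistep M (m + n) C = (multistep M m C).bind (multistep M n) := by
  induction m generalizing C with
  | zero => simp [multistep]
  | succ m ih =>
    rw [show m + 1 + n = (m + n) + 1 by omega]
    simp only [multistep]
    cases TM0.step M C with
    | none => rfl
    | some D => simp [ih]

lemma Rch.refl (a : Low) : Rch 0 a a := fun C h => ⟨0, le_rfl, C, rfl, h⟩

lemma Rch.trans {m n : ℕ} {a b c : Low} (h1 : Rch m a b) (h2 : Rch n b c) :
    Rch (m + n) a c := by
  intro C hC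
  obtain ⟨k, hk, D, hD, sD⟩ := h1 C hC
  obtain ⟨k', hk', E, hE, sE⟩ := h2 D sD
  exact ⟨k + k', by omega, E, by rw [multistep_add, hD]; exact hE, sE⟩

lemma Rch.mono {m n : ℕ} {a b : Low} (h1 : Rch m a b) (h : n ≤ m) : Rch n a b := by
  intro C hC
  obtain ⟨k, hk, D⟩ := h1 C hC
  exact ⟨k, by omega, D⟩

lemma rch_one {a b : Low} (h : ∀ C, Sim a C → ∃ C', TM0.step M C = some C' ∧ Sim b C') :
    Rch 1 a b := by
  intro C hC
  obtain ⟨D, h1, h2⟩ := h C hC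
  exact ⟨1, le_rfl, D, by simp [multistep, h1], h2⟩

lemma M_eq {q : ℕ} {e : Act × Act} (h : table[q]? = some e) (s : Fin 2) :
    M (st q) s = some (st (pick e s).1, (pick e s).2) := by
  have hq : q < table.length := by
    by_contra hh
    rw [List.getElem?_eq_none (by omega)] at h; cases h
  rw [table_length] at hq
  have : (st q).val = q := Nat.mod_eq_of_lt (by omega)
  simp only [M, this, h, Option.map_some]

lemma step_left {q q' : ℕ} {t : ℤ → Fin 2} {p : ℤ} {e : Act × Act} (h : table[q]? = some e)
    (hp : pick e (t p) = goL q') : Rch 1 ⟨q, t, p⟩ ⟨q', t, p - 1⟩ := by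
  apply rch_one
  rintro ⟨cq, T⟩ ⟨h1, h2⟩
  simp only at h1 h2
  have h3 : T.1 = t p := by have := h2 0; simpa using this
  subst h1
  refine ⟨⟨st q', T.move Dir.left⟩, ?_, rfl, ?_⟩
  · simp only [TM0.step, h3, M_eq h, hp, goL, Option.map_some]
  · intro i
    simp only [Tape.move_left_nth, h2]
    congr 1; ring

lemma step_right {q q' : ℕ} {t : ℤ → Fin 2} {p : ℤ} {e : Act × Act} (h : table[q]? = some e)
    (hp : pick e (t p) = goR q') : Rch 1 ⟨q, t, p⟩ ⟨q', t, p + 1⟩ := by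
  apply rch_one
  rintro ⟨cq, T⟩ ⟨h1, h2⟩
  simp only at h1 h2
  have h3 : T.1 = t p := by have := h2 0; simpa using this
  subst h1
  refine ⟨⟨st q', T.move Dir.right⟩, ?_, rfl, ?_⟩
  · simp only [TM0.step, h3, M_eq h, hp, goR, Option.map_some]
  · intro i
    simp only [Tape.move_right_nth, h2]
    congr 1; ring

lemma step_write {q q' : ℕ} {t : ℤ → Fin 2} {p : ℤ} {e : Act × Act} {v : Bool}
    (h : table[q]? = some e)
    (hp : pick e (t p) = wr v q') : Rch 1 ⟨q, t, p⟩ ⟨q', Function.update t p (bit v), p⟩ := by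
  apply rch_one
  rintro ⟨cq, T⟩ ⟨h1, h2⟩
  simp only at h1 h2
  have h3 : T.1 = t p := by have := h2 0; simpa using this
  subst h1
  refine ⟨⟨st q', T.write (bit v)⟩, ?_, rfl, ?_⟩
  · simp only [TM0.step, h3, M_eq h, hp, wr, Option.map_some]
  · intro i
    simp only [Tape.write_nth, h2, Function.update_apply]
    by_cases hi : i = 0 <;> simp [hi]

/-- High level configuration. -/
structure HC where
  l : Lab
  x : ℤ
  A : ℤ → Bool
  B : ℤ → Bool
  F : ℤ → Bool
  K : ℤ → Bool

/-- The encoding of the four tracks on the tape. -/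
def enc (A B F K : ℤ → Bool) (y : ℤ) : Fin 2 :=
  bit (if y % 4 = 0 then K (y / 4) else if y % 4 = 1 then B (y / 4) else
    if y % 4 = 2 then F (y / 4) else A (y / 4 + 1))

def HC.low (c : HC) : Low := ⟨base c.l, enc c.A c.B c.F c.K, 4 * c.x⟩

/-- Reachability between high level configurations in at least `n` machine steps. -/
def HR (n : ℕ) (c d : HC) : Prop := Rch n c.low d.low

lemma HR.refl (a : HC) : HR 0 a a := Rch.refl _
lemma HR.trans {m n : ℕ} {a b c : HC} (h1 : HR m a b) (h2 : HR n b c) : HR (m + n) a c :=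
  Rch.trans h1 h2
lemma HR.mono {m n : ℕ} {a b : HC} (h1 : HR m a b) (h : n ≤ m) : HR n a b := Rch.mono h1 h

section
variable (A B F K : ℤ → Bool) (x : ℤ)

lemma enc_K : enc A B F K (4 * x) = bit (K x) := by
  have h1 : (4 * x) % 4 = 0 := by omega
  have h2 : (4 * x) / 4 = x := by omega
  simp [enc, h2]
lemma enc_B : enc A B F K (4 * x + 1) = bit (B x) := by
  have h1 : (4 * x + 1) % 4 = 1 := by omega
  have h2 : (4 * x + 1) / 4 = x := by omega
  simp only [enc, h1, h2]; simp
lemma enc_F : enc A B F K (4 * x + 1 + 1) = bit (F x) := by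
  have h1 : (4 * x + 1 + 1) % 4 = 2 := by omega
  have h2 : (4 * x + 1 + 1) / 4 = x := by omega
  simp only [enc, h1, h2]; simp
lemma enc_A : enc A B F K (4 * x - 1) = bit (A x) := by
  have h1 : (4 * x - 1) % 4 = 3 := by omega
  have h2 : (4 * x - 1) / 4 + 1 = x := by omega
  simp only [enc, h1, h2]; simp

variable (v : Bool)
lemma upd_K : Function.update (enc A B F K) (4 * x) (bit v) =
    enc A B F (Function.update K x v) := by
  funext y
  simp only [Function.update_apply, enc]
  by_cases h : y = 4 * x
  · have h1 : y % 4 = 0 := by omega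
    have h2 : y / 4 = x := by omega
    simp [h]
  · simp only [h, if_false]
    congr 1
    by_cases h1 : y % 4 = 0
    · have : y / 4 ≠ x := by omega
      simp [h1, this]
    · simp [h1]
lemma upd_B : Function.update (enc A B F K) (4 * x + 1) (bit v) =
    enc A (Function.update B x v) F K := by
  funext y
  simp only [Function.update_apply, enc]
  by_cases h : y = 4 * x + 1
  · have h1 : y % 4 = 1 := by omega
    have h2 : y / 4 = x := by omega
    rw [if_pos h, h1, h2]; simp
  · simp only [h, if_false]
    congr 1
    by_cases h1 : y % 4 = 1
    · have : y / 4 ≠ x := by omega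
      simp [h1, this]
    · simp [h1]
lemma upd_F : Function.update (enc A B F K) (4 * x + 1 + 1) (bit v) =
    enc A B (Function.update F x v) K := by
  funext y
  simp only [Function.update_apply, enc]
  by_cases h : y = 4 * x + 1 + 1
  · have h1 : y % 4 = 2 := by omega
    have h2 : y / 4 = x := by omega
    rw [if_pos h, h1, h2]; simp
  · simp only [h, if_false]
    congr 1
    by_cases h1 : y % 4 = 2
    · have : y / 4 ≠ x := by omega
      simp [h1, this]
    · simp [h1]
lemma upd_A : Function.update (enc A B F K) (4 * x - 1) (bit v) =
    enc (Function.update A x v) B F K := by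
  funext y
  simp only [Function.update_apply, enc]
  by_cases h : y = 4 * x - 1
  · have h1 : y % 4 = 3 := by omega
    have h2 : y / 4 + 1 = x := by omega
    rw [if_pos h, h1, h2]; simp
  · simp only [h, if_false]
    congr 1
    by_cases h1 : y % 4 = 3
    · have : y / 4 + 1 ≠ x := by omega
      simp [h1, this]
    · have : ¬ (y % 4 ≠ 0 ∧ y % 4 ≠ 1 ∧ y % 4 ≠ 2) := by omega
      split_ifs <;> simp_all

end

lemma ne_halt {l : Lab} {i : Ins} (h : prog l = i) (hi : i ≠ .mvL .halt) : l ≠ .halt := by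
  rintro rfl; exact hi (by rw [← h]; rfl)

lemma pick_both (a : Act) (s : Fin 2) : pick (both a) s = a := by
  simp [pick, both]

lemma pick_bit (a b : Act) (v : Bool) : pick (a, b) (bit v) = if v then b else a := by
  cases v <;> simp [pick, bit]

section
variable {l a b : Lab} {A B F K : ℤ → Bool} {x : ℤ} {v : Bool}

lemma h_mvR (h : prog l = .mvR a) : HR 1 ⟨l, x, A, B, F, K⟩ ⟨a, x + 1, A, B, F, K⟩ := by
  have hn := ne_halt h (by simp)
  have g := table_get l hn
  rw [h] at g
  have e0 := step_right (t := enc A B F K) (p := 4 * x) (g 0 (by simp [size])) (pick_both _ _)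
  have e1 := step_right (t := enc A B F K) (p := 4 * x + 1) (g 1 (by simp [size])) (pick_both _ _)
  have e2 := step_right (t := enc A B F K) (p := 4 * x + 1 + 1) (g 2 (by simp [size]))
    (pick_both _ _)
  have e3 := step_right (t := enc A B F K) (p := 4 * x + 1 + 1 + 1) (g 3 (by simp [size]))
    (pick_both _ _)
  have := ((e0.trans e1).trans e2).trans e3
  have e : 4 * x + 1 + 1 + 1 + 1 = 4 * (x + 1) := by ring
  rw [e] at this
  exact this.mono (by omega)

lemma h_mvL (h : prog l = .mvL a) (hn : l ≠ .halt) :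
    HR 1 ⟨l, x, A, B, F, K⟩ ⟨a, x - 1, A, B, F, K⟩ := by
  have g := table_get l hn
  rw [h] at g
  have e0 := step_left (t := enc A B F K) (p := 4 * x) (g 0 (by simp [size])) (pick_both _ _)
  have e1 := step_left (t := enc A B F K) (p := 4 * x - 1) (g 1 (by simp [size])) (pick_both _ _)
  have e2 := step_left (t := enc A B F K) (p := 4 * x - 1 - 1) (g 2 (by simp [size]))
    (pick_both _ _)
  have e3 := step_left (t := enc A B F K) (p := 4 * x - 1 - 1 - 1) (g 3 (by simp [size]))
    (pick_both _ _)
  have := ((e0.trans e1).trans e2).trans e3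
  have e : 4 * x - 1 - 1 - 1 - 1 = 4 * (x - 1) := by ring
  rw [e] at this
  exact this.mono (by omega)

lemma h_testK (h : prog l = .test .K a b) :
    HR 1 ⟨l, x, A, B, F, K⟩ ⟨if K x then a else b, x, A, B, F, K⟩ := by
  have hn := ne_halt h (by simp)
  have g := table_get l hn
  rw [h] at g
  have e0 := step_write (t := enc A B F K) (p := 4 * x) (v := K x)
    (q' := base (if K x then a else b)) (g 0 (by simp [size]))
    (by rw [enc_K, pick_bit]; cases K x <;> rfl)
  rw [upd_K, Function.update_eq_self] at e0
  exact e0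

lemma h_testA (h : prog l = .test .A a b) :
    HR 1 ⟨l, x, A, B, F, K⟩ ⟨if A x then a else b, x, A, B, F, K⟩ := by
  have hn := ne_halt h (by simp)
  have g := table_get l hn
  rw [h] at g
  have e0 := step_left (t := enc A B F K) (p := 4 * x) (g 0 (by simp [size])) (pick_both _ _)
  have e1 := step_right (t := enc A B F K) (p := 4 * x - 1)
    (q' := base (if A x then a else b)) (g 1 (by simp [size]))
    (by rw [enc_A, pick_bit]; cases A x <;> rfl)
  have := e0.trans e1
  rw [sub_add_cancel] at this
  exact this.mono (by omega)

lemma h_testB (h : prog l = .test .B a b) :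
    HR 1 ⟨l, x, A, B, F, K⟩ ⟨if B x then a else b, x, A, B, F, K⟩ := by
  have hn := ne_halt h (by simp)
  have g := table_get l hn
  rw [h] at g
  have e0 := step_right (t := enc A B F K) (p := 4 * x) (g 0 (by simp [size])) (pick_both _ _)
  have e1 := step_left (t := enc A B F K) (p := 4 * x + 1)
    (q' := base (if B x then a else b)) (g 1 (by simp [size]))
    (by rw [enc_B, pick_bit]; cases B x <;> rfl)
  have := e0.trans e1
  rw [add_sub_cancel_right] at this
  exact this.mono (by omega)

lemma h_testF (h : prog l = .test .F a b) :
    HR 1 ⟨l, x, A, B, F, K⟩ ⟨if F x then a else b, x, A, B, F, K⟩ := by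
  have hn := ne_halt h (by simp)
  have g := table_get l hn
  rw [h] at g
  have e0 := step_right (t := enc A B F K) (p := 4 * x) (g 0 (by simp [size])) (pick_both _ _)
  have e1 := step_right (t := enc A B F K) (p := 4 * x + 1) (g 1 (by simp [size])) (pick_both _ _)
  have e2 := step_left (t := enc A B F K) (p := 4 * x + 1 + 1)
    (q' := base l + (if F x then 4 else 3)) (g 2 (by simp [size]))
    (by rw [enc_F, pick_bit]; cases F x <;> rfl)
  have e3 : Rch 1 ⟨base l + (if F x then 4 else 3), enc A B F K, 4 * x + 1 + 1 - 1⟩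
      ⟨base (if F x then a else b), enc A B F K, 4 * x + 1 + 1 - 1 - 1⟩ := by
    cases F x
    · exact step_left (g 3 (by simp [size])) (pick_both _ _)
    · exact step_left (g 4 (by simp [size])) (pick_both _ _)
  have := ((e0.trans e1).trans e2).trans e3
  rw [add_sub_cancel_right, add_sub_cancel_right] at this
  exact this.mono (by omega)

lemma h_setK (h : prog l = .set .K v a) :
    HR 1 ⟨l, x, A, B, F, K⟩ ⟨a, x, A, B, F, Function.update K x v⟩ := by
  have hn := ne_halt h (by simp)
  have g := table_get l hn
  rw [h] at g
  have e0 := step_write (t := enc A B F K) (p := 4 * x) (v := v)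
    (g 0 (by simp [size])) (pick_both _ _)
  rw [upd_K] at e0
  exact e0

lemma h_setA (h : prog l = .set .A v a) :
    HR 1 ⟨l, x, A, B, F, K⟩ ⟨a, x, Function.update A x v, B, F, K⟩ := by
  have hn := ne_halt h (by simp)
  have g := table_get l hn
  rw [h] at g
  have e0 := step_left (t := enc A B F K) (p := 4 * x) (g 0 (by simp [size])) (pick_both _ _)
  have e1 := step_write (t := enc A B F K) (p := 4 * x - 1) (v := v)
    (g 1 (by simp [size])) (pick_both _ _)
  rw [upd_A] at e1
  have e2 := step_right (t := enc (Function.update A x v) B F K) (p := 4 * x - 1)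
    (g 2 (by simp [size])) (pick_both _ _)
  have := (e0.trans e1).trans e2
  rw [sub_add_cancel] at this
  exact this.mono (by omega)

lemma h_setB (h : prog l = .set .B v a) :
    HR 1 ⟨l, x, A, B, F, K⟩ ⟨a, x, A, Function.update B x v, F, K⟩ := by
  have hn := ne_halt h (by simp)
  have g := table_get l hn
  rw [h] at g
  have e0 := step_right (t := enc A B F K) (p := 4 * x) (g 0 (by simp [size])) (pick_both _ _)
  have e1 := step_write (t := enc A B F K) (p := 4 * x + 1) (v := v)
    (g 1 (by simp [size])) (pick_both _ _)
  rw [upd_B] at e1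
  have e2 := step_left (t := enc A (Function.update B x v) F K) (p := 4 * x + 1)
    (g 2 (by simp [size])) (pick_both _ _)
  have := (e0.trans e1).trans e2
  rw [add_sub_cancel_right] at this
  exact this.mono (by omega)

lemma h_setF (h : prog l = .set .F v a) :
    HR 1 ⟨l, x, A, B, F, K⟩ ⟨a, x, A, B, Function.update F x v, K⟩ := by
  have hn := ne_halt h (by simp)
  have g := table_get l hn
  rw [h] at g
  have e0 := step_right (t := enc A B F K) (p := 4 * x) (g 0 (by simp [size])) (pick_both _ _)
  have e1 := step_right (t := enc A B F K) (p := 4 * x + 1) (g 1 (by simp [size])) (pick_both _ _)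
  have e2 := step_write (t := enc A B F K) (p := 4 * x + 1 + 1) (v := v)
    (g 2 (by simp [size])) (pick_both _ _)
  rw [upd_F] at e2
  have e3 := step_left (t := enc A B (Function.update F x v) K) (p := 4 * x + 1 + 1)
    (g 3 (by simp [size])) (pick_both _ _)
  have e4 := step_left (t := enc A B (Function.update F x v) K) (p := 4 * x + 1 + 1 - 1)
    (g 4 (by simp [size])) (pick_both _ _)
  have := (((e0.trans e1).trans e2).trans e3).trans e4
  rw [add_sub_cancel_right, add_sub_cancel_right] at this
  exact this.mono (by omega)

end

lemma halts_of {c : HC} {n : ℕ} (hc : c.l = .halt)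
    (h : HR n ⟨.s0, 1, fun _ => false, fun _ => false, fun _ => false, fun _ => false⟩ c) :
    ∃ T, n ≤ T ∧ HaltsIn M T := by
  have hs : Sim (HC.low ⟨.s0, 1, fun _ => false, fun _ => false, fun _ => false,
      fun _ => false⟩) (TM0.init []) := by
    refine ⟨rfl, ?_⟩
    intro i
    have : ∀ y, enc (fun _ => false) (fun _ => false) (fun _ => false) (fun _ => false) y = 0 := by
      intro y; simp [enc, bit]
    simp only [HC.low, this]
    rcases i with (_ | i) | i
    · rfl
    · rfl
    · rfl
  obtain ⟨k, hk, C, hC, sC⟩ := h _ hs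
  refine ⟨k, hk, C, hC, ?_⟩
  have hq : C.q = st 235 := by
    rw [sC.1]; simp only [HC.low, hc, base_halt]
  obtain ⟨q, T⟩ := C
  simp only at hq
  subst hq
  have : M (st 235) T.1 = none := by
    have : table[(st 235).val]? = none :=
      List.getElem?_eq_none (by rw [table_length]; decide)
    simp only [M, this, Option.map_none]
  simp only [TM0.step, this, Option.map_none]

section
variable {l a b : Lab} {A B F K : ℤ → Bool} {x : ℤ}

lemma h_A1 (h : prog l = .test .A a b) (hx : A x = true) :
    HR 0 ⟨l, x, A, B, F, K⟩ ⟨a, x, A, B, F, K⟩ := by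
  have := h_testA (A := A) (B := B) (F := F) (K := K) (x := x) h
  rw [hx] at this; exact this.mono (by omega)
lemma h_A0 (h : prog l = .test .A a b) (hx : A x = false) :
    HR 0 ⟨l, x, A, B, F, K⟩ ⟨b, x, A, B, F, K⟩ := by
  have := h_testA (A := A) (B := B) (F := F) (K := K) (x := x) h
  rw [hx] at this; exact this.mono (by omega)
lemma h_B1 (h : prog l = .test .B a b) (hx : B x = true) :
    HR 0 ⟨l, x, A, B, F, K⟩ ⟨a, x, A, B, F, K⟩ := by
  have := h_testB (A := A) (B := B) (F := F) (K := K) (x := x) h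
  rw [hx] at this; exact this.mono (by omega)
lemma h_B0 (h : prog l = .test .B a b) (hx : B x = false) :
    HR 0 ⟨l, x, A, B, F, K⟩ ⟨b, x, A, B, F, K⟩ := by
  have := h_testB (A := A) (B := B) (F := F) (K := K) (x := x) h
  rw [hx] at this; exact this.mono (by omega)
lemma h_F1 (h : prog l = .test .F a b) (hx : F x = true) :
    HR 0 ⟨l, x, A, B, F, K⟩ ⟨a, x, A, B, F, K⟩ := by
  have := h_testF (A := A) (B := B) (F := F) (K := K) (x := x) h
  rw [hx] at this; exact this.mono (by omega)
lemma h_F0 (h : prog l = .test .F a b) (hx : F x = false) :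
    HR 0 ⟨l, x, A, B, F, K⟩ ⟨b, x, A, B, F, K⟩ := by
  have := h_testF (A := A) (B := B) (F := F) (K := K) (x := x) h
  rw [hx] at this; exact this.mono (by omega)
lemma h_K1 (h : prog l = .test .K a b) (hx : K x = true) :
    HR 0 ⟨l, x, A, B, F, K⟩ ⟨a, x, A, B, F, K⟩ := by
  have := h_testK (A := A) (B := B) (F := F) (K := K) (x := x) h
  rw [hx] at this; exact this.mono (by omega)
lemma h_K0 (h : prog l = .test .K a b) (hx : K x = false) :
    HR 0 ⟨l, x, A, B, F, K⟩ ⟨b, x, A, B, F, K⟩ := by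
  have := h_testK (A := A) (B := B) (F := F) (K := K) (x := x) h
  rw [hx] at this; exact this.mono (by omega)

end

lemma HR.t {m n : ℕ} {a b c : HC} (h1 : HR m a b) (h2 : HR n b c) : HR 0 a c :=
  (h1.trans h2).mono (by omega)

section
variable {A B F K : ℤ → Bool}

lemma loopR (l : Lab) (a b : ℤ) (hab : a ≤ b)
    (h : ∀ y, a ≤ y → y < b → HR 0 ⟨l, y, A, B, F, K⟩ ⟨l, y + 1, A, B, F, K⟩) :
    HR 0 ⟨l, a, A, B, F, K⟩ ⟨l, b, A, B, F, K⟩ := by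
  obtain ⟨n, rfl⟩ : ∃ n : ℕ, b = a + n := ⟨(b - a).toNat, by omega⟩
  clear hab
  induction n with
  | zero => simpa using HR.refl _
  | succ n ih =>
    have h1 := ih (fun y h1 h2 => h y h1 (by push_cast; omega))
    have h2 := h (a + n) (by omega) (by push_cast; omega)
    have := h1.t h2
    rw [show a + (n : ℤ) + 1 = a + ((n + 1 : ℕ) : ℤ) by push_cast; ring] at this
    exact this

lemma loopL (l : Lab) (a b : ℤ) (hab : b ≤ a)
    (h : ∀ y, b < y → y ≤ a → HR 0 ⟨l, y, A, B, F, K⟩ ⟨l, y - 1, A, B, F, K⟩) :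
    HR 0 ⟨l, a, A, B, F, K⟩ ⟨l, b, A, B, F, K⟩ := by
  obtain ⟨n, rfl⟩ : ∃ n : ℕ, b = a - n := ⟨(a - b).toNat, by omega⟩
  clear hab
  induction n with
  | zero => simpa using HR.refl _
  | succ n ih =>
    have h1 := ih (fun y h1 h2 => h y (by push_cast; omega) h2)
    have h2 := h (a - n) (by push_cast; omega) (by omega)
    have := h1.t h2
    rw [show a - (n : ℤ) - 1 = a - ((n + 1 : ℕ) : ℤ) by push_cast; ring] at this
    exact this

/-- Seek a marker to the right. -/
lemma seekKR {l l' a : Lab} (h1 : prog l = .mvR l') (h2 : prog l' = .test .K a l) (x q : ℤ)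
    (hx : x < q) (hK : ∀ y, x < y → y < q → K y = false) (hq : K q = true) :
    HR 0 ⟨l, x, A, B, F, K⟩ ⟨a, q, A, B, F, K⟩ := by
  have e1 : HR 0 ⟨l, x, A, B, F, K⟩ ⟨l, q - 1, A, B, F, K⟩ :=
    loopR l x (q - 1) (by omega) fun y hy hy' =>
      (h_mvR h1).t (h_K0 h2 (hK _ (by omega) (by omega)))
  have e2 := h_mvR (A := A) (B := B) (F := F) (K := K) (x := q - 1) h1
  rw [sub_add_cancel] at e2
  exact (e1.t e2).t (h_K1 h2 hq)

/-- Seek a marker to the left. -/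
lemma seekKL {l l' a : Lab} (h1 : prog l = .mvL l') (h2 : prog l' = .test .K a l)
    (hl : l ≠ .halt) (x q : ℤ)
    (hx : q < x) (hK : ∀ y, q < y → y < x → K y = false) (hq : K q = true) :
    HR 0 ⟨l, x, A, B, F, K⟩ ⟨a, q, A, B, F, K⟩ := by
  have e1 : HR 0 ⟨l, x, A, B, F, K⟩ ⟨l, q + 1, A, B, F, K⟩ :=
    loopL l x (q + 1) (by omega) fun y hy hy' =>
      (h_mvL h1 hl).t (h_K0 h2 (hK _ (by omega) (by omega)))
  have e2 := h_mvL (A := A) (B := B) (F := F) (K := K) (x := q + 1) h1 hl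
  rw [add_sub_cancel_right] at e2
  exact (e1.t e2).t (h_K1 h2 hq)

end

/-- Letter tracks of the word `g 0, …, g (N-1)`. Letters are coded `01`, `10`, `11`. -/
def Af (N : ℤ) (g : ℤ → Fin 3) (x : ℤ) : Bool := decide (0 ≤ x ∧ x < N ∧ g x ≠ 0)
def Bf (N : ℤ) (g : ℤ → Fin 3) (x : ℤ) : Bool := decide (0 ≤ x ∧ x < N ∧ g x ≠ 1)

section
variable {N : ℤ} {g : ℤ → Fin 3} {F K : ℤ → Bool}

lemma nb {l l' a b : Lab} (h1 : prog l = .test .A a l') (h2 : prog l' = .test .B a b) {x : ℤ}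
    (hx : 0 ≤ x) (hx' : x < N) :
    HR 0 ⟨l, x, Af N g, Bf N g, F, K⟩ ⟨a, x, Af N g, Bf N g, F, K⟩ := by
  by_cases h : g x = 0
  · exact (h_A0 h1 (by simp [Af, h])).t (h_B1 h2 (by simp [Bf, h, hx, hx']))
  · exact h_A1 h1 (by simp [Af, h, hx, hx'])

lemma bl {l l' a b : Lab} (h1 : prog l = .test .A a l') (h2 : prog l' = .test .B a b) {x : ℤ}
    (hx : x < 0 ∨ N ≤ x) :
    HR 0 ⟨l, x, Af N g, Bf N g, F, K⟩ ⟨b, x, Af N g, Bf N g, F, K⟩ :=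
  (h_A0 h1 (by simp only [Af, decide_eq_false_iff_not]; omega)).t
    (h_B0 h2 (by simp only [Bf, decide_eq_false_iff_not]; omega))

lemma seekBR {l l' r b : Lab} (h1 : prog l = .test .A r l') (h2 : prog l' = .test .B r b)
    (h3 : prog r = .mvR l) {x : ℤ} (hx : 0 ≤ x) (hx' : x ≤ N) :
    HR 0 ⟨l, x, Af N g, Bf N g, F, K⟩ ⟨b, N, Af N g, Bf N g, F, K⟩ :=
  (loopR l x N hx' fun _ hy hy' => (nb h1 h2 (by omega) hy').t (h_mvR h3)).t
    (bl h1 h2 (Or.inr le_rfl))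

end

def k0 : ℤ → Bool := fun _ => false
def k1 (p : ℤ) : ℤ → Bool := fun x => decide (x = p)
def k2 (p q : ℤ) : ℤ → Bool := fun x => decide (x = p ∨ x = q)

lemma k0_set (p : ℤ) : Function.update k0 p true = k1 p := by
  funext x; by_cases h : x = p <;> simp [k0, k1, h]
lemma k1_set (p q : ℤ) : Function.update (k1 p) q true = k2 p q := by
  funext x; by_cases h : x = q <;> simp [k2, k1, h]
lemma k1_clr (p : ℤ) : Function.update (k1 p) p false = k0 := by
  funext x; by_cases h : x = p <;> simp [k0, k1, h]
lemma k2_comm (p q : ℤ) : k2 p q = k2 q p := by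
  funext x; simp [k2, or_comm]
lemma k2_clrR (p q : ℤ) (hpq : p ≠ q) : Function.update (k2 p q) q false = k1 p := by
  funext x
  by_cases h : x = q
  · subst h; simp [k1, hpq.symm]
  · simp [k1, k2, h]
lemma k2_clrL (p q : ℤ) (hpq : p ≠ q) : Function.update (k2 p q) p false = k1 q := by
  rw [k2_comm, k2_clrR _ _ hpq.symm]

lemma k1_self (p : ℤ) : k1 p p = true := by simp [k1]
lemma k1_ne {p y : ℤ} (h : y ≠ p) : k1 p y = false := by simp [k1, h]
lemma k2_l (p q : ℤ) : k2 p q p = true := by simp [k2]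
lemma k2_r (p q : ℤ) : k2 p q q = true := by simp [k2]
lemma k2_ne {p q y : ℤ} (h : y ≠ p) (h' : y ≠ q) : k2 p q y = false := by simp [k2, h, h']

/-- The segment of `g` of length `n` starting at `a`. -/
def seg (g : ℤ → Fin 3) : ℤ → ℕ → List (Fin 3)
  | _, 0 => []
  | a, n + 1 => g a :: seg g (a + 1) n

lemma seg_congr {g g' : ℤ → Fin 3} (a : ℤ) (n : ℕ) (h : ∀ x, a ≤ x → x < a + n → g x = g' x) :
    seg g a n = seg g' a n := by
  induction n generalizing a with
  | zero => rfl
  | succ n ih =>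
    simp only [seg]
    rw [h a le_rfl (by push_cast; omega),
      ih (a + 1) (fun x h1 h2 => h x (by omega) (by push_cast; omega))]

lemma seg_length (g : ℤ → Fin 3) (a : ℤ) (n : ℕ) : (seg g a n).length = n := by
  induction n generalizing a with
  | zero => rfl
  | succ n ih => simp [seg, ih]

lemma seg_get (g : ℤ → Fin 3) (a : ℤ) (n : ℕ) (d : ℕ) (h : d < (seg g a n).length) :
    (seg g a n)[d] = g (a + d) := by
  induction n generalizing a d with
  | zero => simp [seg] at h
  | succ n ih =>
    cases d with
    | zero => simp [seg]
    | succ d =>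
      simp only [seg, List.getElem_cons_succ]
      rw [ih]; congr 1; push_cast; ring

/-- Entry points of the letter search. -/
def lp1 (c : Fin 3) : Lab := if c = 0 then .pa1 else if c = 1 then .pb1 else .pc1
def lp4 (c : Fin 3) : Lab := if c = 0 then .pa4 else if c = 1 then .pb4 else .pc4
def lp5 (c : Fin 3) : Lab := if c = 0 then .pa5 else if c = 1 then .pb5 else .pc5

section
variable {N : ℤ} {g : ℤ → Fin 3} {F K : ℤ → Bool}

lemma fin3 (c : Fin 3) : c = 0 ∨ c = 1 ∨ c = 2 := by
  revert c; decide

lemma rd {p : ℤ} (hp : 0 ≤ p) (hp' : p < N) :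
    HR 0 ⟨.m1, p, Af N g, Bf N g, F, K⟩ ⟨lp1 (g p), p, Af N g, Bf N g, F, K⟩ := by
  rcases fin3 (g p) with h | h | h <;> rw [h]
  · exact h_A0 rfl (by simp [Af, h])
  · exact (h_A1 (l := .m1) rfl (by simp [Af, h, hp, hp'])).t (h_B0 rfl (by simp [Bf, h]))
  · exact (h_A1 (l := .m1) rfl (by simp [Af, h, hp, hp'])).t
      (h_B1 rfl (by simp [Bf, h, hp, hp']))

lemma sc_go {c : Fin 3} {q p : ℤ} (hpq : p < q) :
    HR 0 ⟨lp1 c, p, Af N g, Bf N g, F, k2 p q⟩ ⟨lp5 c, q + 1, Af N g, Bf N g, F, k1 p⟩ := by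
  have hK : ∀ y, p < y → y < q → k2 p q y = false := fun y h1 h2 =>
    k2_ne (by omega) (by omega)
  have e := k2_clrR p q (by omega)
  rw [← e]
  rcases fin3 c with h | h | h <;> subst h
  · exact ((seekKR (l := .pa1) (a := .pa3) rfl rfl p q hpq hK (k2_r p q)).t
      (h_setK (a := .pa4) (v := false) rfl)).t (h_mvR (l := .pa4) rfl)
  · exact ((seekKR (l := .pb1) (a := .pb3) rfl rfl p q hpq hK (k2_r p q)).t
      (h_setK (a := .pb4) (v := false) rfl)).t (h_mvR (l := .pb4) rfl)
  · exact ((seekKR (l := .pc1) (a := .pc3) rfl rfl p q hpq hK (k2_r p q)).t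
      (h_setK (a := .pc4) (v := false) rfl)).t (h_mvR (l := .pc4) rfl)

lemma sc_hit {c : Fin 3} {y : ℤ} (hy : 0 ≤ y) (hy' : y < N) (hc : g y = c) :
    HR 0 ⟨lp5 c, y, Af N g, Bf N g, F, K⟩ ⟨.n0, y, Af N g, Bf N g, F, K⟩ := by
  rcases fin3 c with h | h | h <;> subst h
  · exact (h_A0 (l := .pa5) rfl (by simp [Af, hc])).t (h_B1 rfl (by simp [Bf, hc, hy, hy']))
  · exact (h_B0 (l := .pb5) rfl (by simp [Bf, hc])).t (h_A1 rfl (by simp [Af, hc, hy, hy']))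
  · exact (h_A1 (l := .pc5) rfl (by simp [Af, hc, hy, hy'])).t
      (h_B1 rfl (by simp [Bf, hc, hy, hy']))

lemma sc_miss {c : Fin 3} {y : ℤ} (hy : 0 ≤ y) (hy' : y < N) (hc : g y ≠ c) :
    HR 0 ⟨lp5 c, y, Af N g, Bf N g, F, K⟩ ⟨lp5 c, y + 1, Af N g, Bf N g, F, K⟩ := by
  rcases fin3 c with h | h | h <;> subst h
  · exact (h_A1 (l := .pa5) rfl (by simp [Af, hc, hy, hy'])).t (h_mvR rfl)
  · exact (h_B1 (l := .pb5) rfl (by simp [Bf, hc, hy, hy'])).t (h_mvR rfl)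
  · by_cases h : g y = 0
    · exact ((h_A0 (l := .pc5) rfl (by simp [Af, h])).t
        (h_B1 rfl (by simp [Bf, h, hy, hy']))).t (h_mvR rfl)
    · have h1 : g y = 1 := by
        rcases fin3 (g y) with e | e | e
        · exact absurd e h
        · exact e
        · exact absurd e hc
      exact ((h_A1 (l := .pc5) rfl (by simp [Af, h, hy, hy'])).t
        (h_B0 rfl (by simp [Bf, h1]))).t (h_mvR rfl)

lemma sc_end {c : Fin 3} :
    HR 0 ⟨lp5 c, N, Af N g, Bf N g, F, K⟩ ⟨.f0, N, Af N g, Bf N g, F, K⟩ := by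
  have a : Af N g N = false := by simp [Af]
  have b : Bf N g N = false := by simp [Bf]
  rcases fin3 c with h | h | h <;> subst h
  · exact (h_A0 (l := .pa5) rfl a).t (h_B0 rfl b)
  · exact (h_B0 (l := .pb5) rfl b).t (h_A0 rfl a)
  · exact (h_A0 (l := .pc5) rfl a).t (h_B0 rfl b)

lemma scan (c : Fin 3) (n : ℕ) (y : ℤ) (hy : 0 ≤ y) (hN : y + n = N) :
    (∃ (y' : ℤ) (n' : ℕ), y ≤ y' ∧ y' + 1 + n' = N ∧
      (∀ u, (c :: u).Sublist (seg g y n) ↔ u.Sublist (seg g (y' + 1) n')) ∧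
      HR 0 ⟨lp5 c, y, Af N g, Bf N g, F, K⟩ ⟨.n0, y', Af N g, Bf N g, F, K⟩) ∨
    ((∀ u, ¬ (c :: u).Sublist (seg g y n)) ∧
      HR 0 ⟨lp5 c, y, Af N g, Bf N g, F, K⟩ ⟨.f0, N, Af N g, Bf N g, F, K⟩) := by
  induction n generalizing y with
  | zero =>
    right
    refine ⟨by simp [seg], ?_⟩
    have : y = N := by simpa using hN
    subst this
    exact sc_end
  | succ n ih =>
    push_cast at hN
    by_cases h : g y = c
    · left
      refine ⟨y, n, le_rfl, by omega, ?_, sc_hit hy (by omega) h⟩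
      intro u
      simp only [seg, h, List.cons_sublist_cons]
    · have e := sc_miss (F := F) (K := K) hy (by omega : y < N) h
      have hs : ∀ u, (c :: u).Sublist (seg g y (n + 1)) ↔ (c :: u).Sublist (seg g (y + 1) n) := by
        intro u
        simp only [seg, List.cons_sublist_cons']
        constructor
        · rintro (h' | h')
          · exact h'
          · exact absurd h'.1.symm h
        · exact Or.inl
      rcases ih (y + 1) (by omega) (by omega) with ⟨y', n', h1, h2, h3, h4⟩ | ⟨h3, h4⟩
      · left
        exact ⟨y', n', by omega, h2, fun u => (hs u).trans (h3 u), e.t h4⟩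
      · right
        exact ⟨fun u => by rw [hs u]; exact h3 u, e.t h4⟩

/-- Exit of a successful embedding. -/
lemma bad_exit (x q : ℤ) (hx : 0 ≤ x) (hxq : x < q) (hq : q < N) :
    HR 0 ⟨.b0, x, Af N g, Bf N g, F, k1 q⟩ ⟨.i0, N - 1, Af N g, Bf N g, F, k0⟩ := by
  have e1 := seekKR (A := Af N g) (B := Bf N g) (F := F) (K := k1 q) (l := .b0) (a := .b2) rfl rfl
    x q hxq (fun y h1 h2 => k1_ne (by omega)) (k1_self q)
  have e2 := h_setK (A := Af N g) (B := Bf N g) (F := F) (K := k1 q) (x := q) (l := .b2)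
    (a := .b3) (v := false) rfl
  rw [k1_clr] at e2
  have e3 := seekBR (N := N) (g := g) (F := F) (K := k0) (x := q) (l := .b3) (b := .i6) rfl rfl rfl
    (by omega) (by omega)
  have e4 := h_mvL (A := Af N g) (B := Bf N g) (F := F) (K := k0) (x := N) (l := .i6) (a := .i7)
    rfl (by decide)
  have e5 := nb (N := N) (g := g) (F := F) (K := k0) (x := N - 1) (l := .i7) (l' := .i8) (a := .i0)
    rfl rfl (by omega) (by omega)
  exact (((e1.t e2).t e3).t e4).t e5

/-- Exit of a failed embedding. -/
lemma fail_exit (p k : ℤ) (hk : 0 ≤ k) (hkN : p + k < N) (hF : F (p + k) = true)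
    (hF' : ∀ y, p ≤ y → y < p + k → F y = false) :
    HR 0 ⟨.f0, N, Af N g, Bf N g, F, k1 p⟩ ⟨.r0, p + k + 1, Af N g, Bf N g, F, k0⟩ := by
  have e1 := seekKL (A := Af N g) (B := Bf N g) (F := F) (K := k1 p) (l := .f0) (a := .f2) rfl rfl
    (by decide) N p (by omega) (fun y h1 h2 => k1_ne (by omega)) (k1_self p)
  have e2 := h_setK (A := Af N g) (B := Bf N g) (F := F) (K := k1 p) (x := p) (l := .f2)
    (a := .f3) (v := false) rfl
  rw [k1_clr] at e2
  have e3 : HR 0 ⟨.f3, p, Af N g, Bf N g, F, k0⟩ ⟨.f3, p + k, Af N g, Bf N g, F, k0⟩ :=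
    loopR _ _ _ (by omega) fun y h1 h2 => (h_F0 (l := .f3) rfl (hF' y h1 h2)).t (h_mvR rfl)
  have e4 := h_F1 (A := Af N g) (B := Bf N g) (K := k0) (l := .f3) rfl hF
  exact (((e1.t e2).t e3).t e4).t (h_mvR rfl)

lemma matching (k : ℕ) (p q : ℤ) (n : ℕ) (hp : 0 ≤ p) (hpq : p < q) (hkq : p + k ≤ q)
    (hN : q + 1 + n = N) (hF : F (p + k) = true)
    (hF' : ∀ y, p ≤ y → y < p + k → F y = false) :
    ((seg g p (k + 1)).Sublist (seg g (q + 1) n) ∧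
      HR 0 ⟨.m1, p, Af N g, Bf N g, F, k2 p q⟩ ⟨.i0, N - 1, Af N g, Bf N g, F, k0⟩) ∨
    (¬ (seg g p (k + 1)).Sublist (seg g (q + 1) n) ∧
      HR 0 ⟨.m1, p, Af N g, Bf N g, F, k2 p q⟩ ⟨.r0, p + k + 1, Af N g, Bf N g, F, k0⟩) := by
  induction k generalizing p q n with
  | zero =>
    have e1 := (rd (N := N) (g := g) (F := F) (K := k2 p q) hp (by omega)).t
      (sc_go (N := N) (g := g) (F := F) (c := g p) hpq)
    rcases scan (N := N) (g := g) (F := F) (K := k1 p) (g p) n (q + 1) (by omega) hN with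
      ⟨y', n', h1, h2, h3, h4⟩ | ⟨h3, h4⟩
    · left
      refine ⟨by simp only [seg, h3]; exact List.nil_sublist _, ?_⟩
      have e2 := h_setK (A := Af N g) (B := Bf N g) (F := F) (K := k1 p) (x := y') (l := .n0)
        (a := .n1) (v := true) rfl
      rw [k1_set] at e2
      have e3 := seekKL (A := Af N g) (B := Bf N g) (F := F) (K := k2 p y') (l := .n1) (a := .n3)
        rfl rfl (by decide) y' p (by omega) (fun y h1 h2 => k2_ne (by omega) (by omega)) (k2_l _ _)
      have e4 := h_setK (A := Af N g) (B := Bf N g) (F := F) (K := k2 p y') (x := p) (l := .n3)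
        (a := .n4) (v := false) rfl
      rw [k2_clrL _ _ (by omega)] at e4
      have e5 := h_F1 (A := Af N g) (B := Bf N g) (K := k1 y') (l := .n4) (a := .b0) rfl hF
      simp only [Nat.cast_zero, add_zero] at e5
      exact (((((e1.t h4).t e2).t e3).t e4).t e5).t (bad_exit p y' hp (by omega) (by omega))
    · right
      refine ⟨h3 _, (e1.t h4).t (fail_exit p _ (by omega) (by omega) hF hF')⟩
  | succ k ih =>
    push_cast at hkq hF hF'
    have e1 := (rd (N := N) (g := g) (F := F) (K := k2 p q) hp (by omega)).t
      (sc_go (N := N) (g := g) (F := F) (c := g p) hpq)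
    rcases scan (N := N) (g := g) (F := F) (K := k1 p) (g p) n (q + 1) (by omega) hN with
      ⟨y', n', h1, h2, h3, h4⟩ | ⟨h3, h4⟩
    · have e2 := h_setK (A := Af N g) (B := Bf N g) (F := F) (K := k1 p) (x := y') (l := .n0)
        (a := .n1) (v := true) rfl
      rw [k1_set] at e2
      have e3 := seekKL (A := Af N g) (B := Bf N g) (F := F) (K := k2 p y') (l := .n1) (a := .n3)
        rfl rfl (by decide) y' p (by omega) (fun y h1 h2 => k2_ne (by omega) (by omega)) (k2_l _ _)
      have e4 := h_setK (A := Af N g) (B := Bf N g) (F := F) (K := k2 p y') (x := p) (l := .n3)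
        (a := .n4) (v := false) rfl
      rw [k2_clrL _ _ (by omega)] at e4
      have e5 := h_F0 (A := Af N g) (B := Bf N g) (K := k1 y') (l := .n4) (b := .n5) rfl
        (hF' p le_rfl (by omega))
      have e6 := h_mvR (A := Af N g) (B := Bf N g) (F := F) (K := k1 y') (x := p) (l := .n5)
        (a := .n6) rfl
      have e7 := h_setK (A := Af N g) (B := Bf N g) (F := F) (K := k1 y') (x := p + 1) (l := .n6)
        (a := .m1) (v := true) rfl
      rw [k1_set, k2_comm] at e7
      have e := ((((((e1.t h4).t e2).t e3).t e4).t e5).t e6).t e7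
      have hs := h3 (seg g (p + 1) (k + 1))
      have hs' : (seg g p (k + 1 + 1)) = g p :: seg g (p + 1) (k + 1) := rfl
      rw [hs', hs]
      have hk : p + 1 + (k : ℤ) = p + ((k : ℤ) + 1) := by ring
      rcases ih (p + 1) y' n' (by omega) (by omega) (by omega) h2 (by rw [hk]; exact hF)
        (fun y h1 h2 => hF' y (by omega) (by omega)) with ⟨h5, h6⟩ | ⟨h5, h6⟩
      · exact Or.inl ⟨h5, e.t h6⟩
      · refine Or.inr ⟨h5, ?_⟩
        have := e.t h6
        rw [hk] at this
        push_cast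
        exact this
    · right
      refine ⟨h3 _, (e1.t h4).t (fail_exit p _ (by omega) (by push_cast; omega) ?_ ?_)⟩
      · push_cast; exact hF
      · push_cast; exact hF'

end

/-- Start of block number `m`; block `m` has length `m + 2`. -/
def S : ℕ → ℤ
  | 0 => 0
  | m + 1 => S m + m + 2

lemma S_succ (m : ℕ) : S (m + 1) = S m + m + 2 := rfl

lemma S_strict : StrictMono S := strictMono_nat_of_lt_succ fun m => by rw [S_succ]; omega

lemma S_nonneg (m : ℕ) : 0 ≤ S m := by
  have := S_strict.monotone (Nat.zero_le m)
  simpa [S] using this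

/-- Block number `k` of `g`. -/
def blk (g : ℤ → Fin 3) (k : ℕ) : List (Fin 3) := seg g (S k) (k + 2)

lemma blk_congr {g g' : ℤ → Fin 3} (k : ℕ) (h : ∀ x, 0 ≤ x → x < S (k + 1) → g x = g' x) :
    blk g k = blk g' k := by
  apply seg_congr
  intro x h1 h2
  have := S_nonneg k
  exact h x (by omega) (by rw [S_succ]; push_cast at h2; omega)

/-- All flags are at block ends. -/
def FlagSub (F : ℤ → Bool) : Prop := ∀ x, F x = true → ∃ k, x = S (k + 1) - 1

lemma flag_false {F : ℤ → Bool} (h : FlagSub F) (k : ℕ) (y : ℤ) (h1 : S k ≤ y)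
    (h2 : y < S (k + 1) - 1) : F y = false := by
  by_contra hh
  obtain ⟨j, hj⟩ := h y (by simpa using hh)
  have a1 : S k < S (j + 1) := by omega
  have a2 : S (j + 1) < S (k + 1) := by omega
  have b1 := S_strict.lt_iff_lt.1 a1
  have b2 := S_strict.lt_iff_lt.1 a2
  omega

section
variable {g : ℤ → Fin 3} {F : ℤ → Bool} {m : ℕ}

/-- The marker reaches the last block, or the cell before it. -/
lemma reset_last (hF : FlagSub F) :
    HR 0 ⟨.r0, S m, Af (S (m + 1)) g, Bf (S (m + 1)) g, F, k0⟩
      ⟨.g0, S m, Af (S (m + 1)) g, Bf (S (m + 1)) g, F, k1 (S m)⟩ := by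
  have hm := S_nonneg m
  have hs := S_succ m
  generalize hN : S (m + 1) = N at *
  have e1 := h_setK (A := Af N g) (B := Bf N g) (F := F) (K := k0) (x := S m) (l := .r0)
    (a := .r1) (v := true) rfl
  rw [k0_set] at e1
  have e2 := seekBR (N := N) (g := g) (F := F) (K := k1 (S m)) (x := S m) (l := .r1) (b := .r4)
    rfl rfl rfl (by omega) (by omega)
  have e3 := h_mvL (A := Af N g) (B := Bf N g) (F := F) (K := k1 (S m)) (x := N) (l := .r4)
    (a := .r5) rfl (by decide)
  have e4 : HR 0 ⟨.r5, N - 1, Af N g, Bf N g, F, k1 (S m)⟩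
      ⟨.r5, S m, Af N g, Bf N g, F, k1 (S m)⟩ :=
    loopL _ _ _ (by omega) fun y h1 h2 =>
      ((h_K0 (l := .r5) rfl (k1_ne (by omega))).t (h_mvL (l := .r6) rfl (by decide))).t
        (h_F0 rfl (flag_false hF m (y - 1) (by omega) (by omega)))
  have e5 := h_K1 (A := Af N g) (B := Bf N g) (F := F) (K := k1 (S m)) (x := S m) (l := .r5)
    (a := .g0) rfl (k1_self _)
  exact (((e1.t e2).t e3).t e4).t e5

lemma reset_mid (hF : FlagSub F) (hF1 : ∀ k, k ≤ m → F (S (k + 1) - 1) = true) (i : ℕ)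
    (hi : i < m) :
    HR 0 ⟨.r0, S i, Af (S (m + 1)) g, Bf (S (m + 1)) g, F, k0⟩
      ⟨.m1, S i, Af (S (m + 1)) g, Bf (S (m + 1)) g, F, k2 (S i) (S m - 1)⟩ := by
  have hi0 := S_nonneg i
  have hs := S_succ m
  have hs' := S_succ i
  have him : S (i + 1) ≤ S m := S_strict.monotone hi
  have hJ : F (S m - 1) = true := by
    have := hF1 (m - 1) (by omega)
    rwa [show m - 1 + 1 = m by omega] at this
  generalize hN : S (m + 1) = N at *
  have e1 := h_setK (A := Af N g) (B := Bf N g) (F := F) (K := k0) (x := S i) (l := .r0)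
    (a := .r1) (v := true) rfl
  rw [k0_set] at e1
  have e2 := seekBR (N := N) (g := g) (F := F) (K := k1 (S i)) (x := S i) (l := .r1) (b := .r4)
    rfl rfl rfl (by omega) (by omega)
  have e3 := h_mvL (A := Af N g) (B := Bf N g) (F := F) (K := k1 (S i)) (x := N) (l := .r4)
    (a := .r5) rfl (by decide)
  have e4 : HR 0 ⟨.r5, N - 1, Af N g, Bf N g, F, k1 (S i)⟩
      ⟨.r5, S m, Af N g, Bf N g, F, k1 (S i)⟩ :=
    loopL _ _ _ (by omega) fun y h1 h2 =>
      ((h_K0 (l := .r5) rfl (k1_ne (by omega))).t (h_mvL (l := .r6) rfl (by decide))).t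
        (h_F0 rfl (flag_false hF m (y - 1) (by omega) (by omega)))
  have e5 := ((h_K0 (A := Af N g) (B := Bf N g) (F := F) (K := k1 (S i)) (x := S m) (l := .r5)
    (b := .r6) rfl (k1_ne (by omega))).t (h_mvL (l := .r6) rfl (by decide))).t
    (h_F1 (l := .r7) (a := .r8) rfl hJ)
  have e6 := h_setK (A := Af N g) (B := Bf N g) (F := F) (K := k1 (S i)) (x := S m - 1) (l := .r8)
    (a := .r9) (v := true) rfl
  rw [k1_set] at e6
  have e7 := seekKL (A := Af N g) (B := Bf N g) (F := F) (K := k2 (S i) (S m - 1)) (l := .r9)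
    (a := .m1) rfl rfl (by decide) (S m - 1) (S i) (by omega)
    (fun y h1 h2 => k2_ne (by omega) (by omega)) (k2_l _ _)
  exact (((((e1.t e2).t e3).t e4).t e5).t e6).t e7

lemma blocks_loop (hF : FlagSub F) (hF1 : ∀ k, k ≤ m → F (S (k + 1) - 1) = true) (d i : ℕ)
    (hd : i + d = m) :
    (∃ j, i ≤ j ∧ j < m ∧ (blk g j).Sublist (blk g m) ∧
      HR 0 ⟨.r0, S i, Af (S (m + 1)) g, Bf (S (m + 1)) g, F, k0⟩
        ⟨.i0, S (m + 1) - 1, Af (S (m + 1)) g, Bf (S (m + 1)) g, F, k0⟩) ∨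
    ((∀ j, i ≤ j → j < m → ¬ (blk g j).Sublist (blk g m)) ∧
      HR 0 ⟨.r0, S i, Af (S (m + 1)) g, Bf (S (m + 1)) g, F, k0⟩
        ⟨.g0, S m, Af (S (m + 1)) g, Bf (S (m + 1)) g, F, k1 (S m)⟩) := by
  induction d generalizing i with
  | zero =>
    right
    have : i = m := by omega
    subst this
    exact ⟨fun j h1 h2 => by omega, reset_last hF⟩
  | succ d ih =>
    have e1 := reset_mid (g := g) hF hF1 i (by omega)
    have hi0 := S_nonneg i
    have hs := S_succ m
    have hs' := S_succ i
    have him : S (i + 1) ≤ S m := S_strict.monotone (by omega)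
    have hend : S i + ((i + 1 : ℕ) : ℤ) = S (i + 1) - 1 := by push_cast; omega
    have hstart : S m - 1 + 1 = S m := by ring
    have key := matching (N := S (m + 1)) (g := g) (F := F) (i + 1) (S i) (S m - 1) (m + 2)
      (by omega) (by omega) (by push_cast; omega) (by push_cast; omega)
      (by rw [hend]; exact hF1 i (by omega))
      (fun y h1 h2 => flag_false hF i y h1 (by omega))
    rw [hend, hstart, sub_add_cancel] at key
    rcases key with ⟨h1, h2⟩ | ⟨h1, h2⟩
    · exact Or.inl ⟨i, le_rfl, by omega, h1, e1.t h2⟩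
    · rcases ih (i + 1) (by omega) with ⟨j, h3, h4, h5, h6⟩ | ⟨h5, h6⟩
      · exact Or.inl ⟨j, by omega, h4, h5, (e1.t h2).t h6⟩
      · refine Or.inr ⟨?_, (e1.t h2).t h6⟩
        intro j h7 h8
        rcases Nat.eq_or_lt_of_le h7 with h9 | h9
        · subst h9; exact h1
        · exact h5 j h9 h8

lemma shuttle (hF : FlagSub F) (d : ℕ) (hd : d ≤ m + 1) :
    HR 0 ⟨.g3, S (m + 1), Af (S (m + 1)) g, Bf (S (m + 1)) g, F, k1 (S m)⟩
      ⟨.g3, S (m + 1) + d, Af (S (m + 1)) g, Bf (S (m + 1)) g, F, k1 (S m + d)⟩ := by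
  induction d with
  | zero => simpa using HR.refl _
  | succ d ih =>
    have h0 := ih (by omega)
    have hs := S_succ m
    have hFp : F (S m + d) = false := flag_false hF m _ (by omega) (by omega)
    generalize hN : S (m + 1) = N at *
    generalize hp : S m + (d : ℤ) = p at *
    generalize hr : N + (d : ℤ) = r at *
    have e1 := h_setK (A := Af N g) (B := Bf N g) (F := F) (K := k1 p) (x := r) (l := .g3)
      (a := .g4) (v := true) rfl
    rw [k1_set] at e1
    have e2 := seekKL (A := Af N g) (B := Bf N g) (F := F) (K := k2 p r) (l := .g4)
      (a := .g6) rfl rfl (by decide) r p (by omega)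
      (fun y h1 h2 => k2_ne (by omega) (by omega)) (k2_l _ _)
    have e3 := h_setK (A := Af N g) (B := Bf N g) (F := F) (K := k2 p r) (x := p) (l := .g6)
      (a := .g7) (v := false) rfl
    rw [k2_clrL _ _ (by omega)] at e3
    have e4 := h_F0 (A := Af N g) (B := Bf N g) (K := k1 r) (l := .g7) (b := .g8) rfl hFp
    have e5 := h_mvR (A := Af N g) (B := Bf N g) (F := F) (K := k1 r) (x := p) (l := .g8)
      (a := .g9) rfl
    have e6 := h_setK (A := Af N g) (B := Bf N g) (F := F) (K := k1 r) (x := p + 1) (l := .g9)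
      (a := .g10) (v := true) rfl
    rw [k1_set, k2_comm] at e6
    have e7 := seekKR (A := Af N g) (B := Bf N g) (F := F) (K := k2 (p + 1) r) (l := .g10)
      (a := .g12) rfl rfl (p + 1) r (by omega)
      (fun y h1 h2 => k2_ne (by omega) (by omega)) (k2_r _ _)
    have e8 := h_setK (A := Af N g) (B := Bf N g) (F := F) (K := k2 (p + 1) r) (x := r)
      (l := .g12) (a := .g12b) (v := false) rfl
    rw [k2_clrR _ _ (by omega)] at e8
    have e9 := h_mvR (A := Af N g) (B := Bf N g) (F := F) (K := k1 (p + 1)) (x := r) (l := .g12b)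
      (a := .g3) rfl
    have := (((((((((h0.t e1).t e2).t e3).t e4).t e5).t e6).t e7).t e8).t e9)
    have hp' : S m + ((d + 1 : ℕ) : ℤ) = p + 1 := by push_cast; omega
    have hr' : N + ((d + 1 : ℕ) : ℤ) = r + 1 := by push_cast; omega
    rw [hp', hr']
    exact this

lemma extend (hF : FlagSub F) (hF1 : F (S (m + 1) - 1) = true) :
    HR 0 ⟨.g0, S m, Af (S (m + 1)) g, Bf (S (m + 1)) g, F, k1 (S m)⟩
      ⟨.i0, S (m + 1), Af (S (m + 1)) g, Bf (S (m + 1)) g,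
        Function.update F (S (m + 2) - 1) true, k0⟩ := by
  have hm := S_nonneg m
  have hs := S_succ m
  have hs2 : S (m + 2) = S (m + 1) + ((m + 1 : ℕ) : ℤ) + 2 := S_succ (m + 1)
  have e0 := shuttle (g := g) hF (m + 1) le_rfl
  have e00 := seekBR (N := S (m + 1)) (g := g) (F := F) (K := k1 (S m)) (x := S m) (l := .g0)
    (b := .g3) rfl rfl rfl (by omega) (by omega)
  have hp : S m + ((m + 1 : ℕ) : ℤ) = S (m + 1) - 1 := by push_cast; omega
  rw [hp] at e0
  have hG : S (m + 2) - 1 = S (m + 1) + ((m + 1 : ℕ) : ℤ) + 1 := by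
    push_cast at *; omega
  rw [hG]
  generalize hN : S (m + 1) = N at *
  generalize hr : N + ((m + 1 : ℕ) : ℤ) = r at *
  have hrN : N < r := by push_cast at hr; omega
  have e1 := h_setK (A := Af N g) (B := Bf N g) (F := F) (K := k1 (N - 1)) (x := r) (l := .g3)
    (a := .g4) (v := true) rfl
  rw [k1_set] at e1
  have e2 := seekKL (A := Af N g) (B := Bf N g) (F := F) (K := k2 (N - 1) r) (l := .g4)
    (a := .g6) rfl rfl (by decide) r (N - 1) (by omega)
    (fun y h1 h2 => k2_ne (by omega) (by omega)) (k2_l _ _)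
  have e3 := h_setK (A := Af N g) (B := Bf N g) (F := F) (K := k2 (N - 1) r) (x := N - 1)
    (l := .g6) (a := .g7) (v := false) rfl
  rw [k2_clrL _ _ (by omega)] at e3
  have e4 := h_F1 (A := Af N g) (B := Bf N g) (K := k1 r) (l := .g7) (a := .g13) rfl hF1
  have e5 := seekKR (A := Af N g) (B := Bf N g) (F := F) (K := k1 r) (l := .g13)
    (a := .g15) rfl rfl (N - 1) r (by omega)
    (fun y h1 h2 => k1_ne (by omega)) (k1_self _)
  have e6 := h_setK (A := Af N g) (B := Bf N g) (F := F) (K := k1 r) (x := r)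
    (l := .g15) (a := .g16) (v := false) rfl
  rw [k1_clr] at e6
  have e7 := h_mvR (A := Af N g) (B := Bf N g) (F := F) (K := k0) (x := r) (l := .g16)
    (a := .g17) rfl
  have e8 := h_setF (A := Af N g) (B := Bf N g) (F := F) (K := k0) (x := r + 1)
    (l := .g17) (a := .g18) (v := true) rfl
  generalize Function.update F (r + 1) true = F' at *
  have e9 : HR 0 ⟨.g18, r + 1, Af N g, Bf N g, F', k0⟩ ⟨.g18, N - 1, Af N g, Bf N g, F', k0⟩ :=
    loopL _ _ _ (by omega) fun y h1 h2 =>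
      (bl (l := .g18) (l' := .g19) rfl rfl (Or.inr (by omega))).t (h_mvL (l := .g20) rfl (by decide))
  have e10 := nb (N := N) (g := g) (F := F') (K := k0) (x := N - 1) (l := .g18) (l' := .g19)
    (a := .x0) rfl rfl (by omega) (by omega)
  have e11 := h_mvR (A := Af N g) (B := Bf N g) (F := F') (K := k0) (x := N - 1) (l := .x0)
    (a := .i0) rfl
  rw [sub_add_cancel] at e11
  exact ((((((((((((e00.t e0).t e1).t e2).t e3).t e4).t e5).t e6).t e7).t e8).t e9).t e10).t e11)

lemma check_start (hm : 0 < S (m + 1)) :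
    HR 0 ⟨.c0, S (m + 1) - 1, Af (S (m + 1)) g, Bf (S (m + 1)) g, F, k0⟩
      ⟨.r0, S 0, Af (S (m + 1)) g, Bf (S (m + 1)) g, F, k0⟩ := by
  generalize hN : S (m + 1) = N at *
  have e1 : HR 0 ⟨.c0, N - 1, Af N g, Bf N g, F, k0⟩ ⟨.c0, -1, Af N g, Bf N g, F, k0⟩ :=
    loopL _ _ _ (by omega) fun y h1 h2 =>
      (nb (l := .c0) (l' := .c1) rfl rfl (by omega) (by omega)).t
        (h_mvL (l := .c2) rfl (by decide))
  have e2 := bl (N := N) (g := g) (F := F) (K := k0) (x := -1) (l := .c0) (l' := .c1) (b := .c3)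
    rfl rfl (Or.inl (by omega))
  have e3 := h_mvR (A := Af N g) (B := Bf N g) (F := F) (K := k0) (x := -1) (l := .c3)
    (a := .r0) rfl
  exact (e1.t e2).t e3

end

/-- No block embeds into a later block, among the blocks contained in `[0, n)`. -/
def OK (n : ℕ) (g : ℤ → Fin 3) : Prop :=
  ∀ i j, i < j → S (j + 1) ≤ n → ¬ (blk g i).Sublist (blk g j)

/-- The tree relation. -/
def Child (b a : ℕ × (ℤ → Fin 3)) : Prop :=
  b.1 = a.1 + 1 ∧ (∀ x : ℤ, 0 ≤ x → x < (a.1 : ℤ) → b.2 x = a.2 x) ∧ OK b.1 b.2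

lemma higman (w : ℕ → List (Fin 3)) : ∃ i j, i < j ∧ (w i).Sublist (w j) := by
  have h := Set.PartiallyWellOrderedOn.partiallyWellOrderedOn_sublistForall₂
    (α := Fin 3) (r := fun a b => a = b) (s := Set.univ)
    (Set.Finite.partiallyWellOrderedOn Set.finite_univ)
  obtain ⟨i, j, h1, h2⟩ := Set.partiallyWellOrderedOn_iff_exists_lt.1 h w (by simp)
  refine ⟨i, j, h1, ?_⟩
  obtain ⟨l, h3, h4⟩ := List.sublistForall₂_iff.1 h2
  rw [List.forall₂_eq_eq_eq] at h3
  subst h3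
  exact h4

lemma child_wf : WellFounded Child := by
  rw [wellFounded_iff_isEmpty_descending_chain]
  refine ⟨?_⟩
  rintro ⟨f, hf⟩
  have hn : ∀ k, k ≤ (f k).1 := by
    intro k
    induction k with
    | zero => omega
    | succ k ih => rw [(hf k).1]; omega
  have hn' : ∀ i d, (f i).1 ≤ (f (i + d)).1 := by
    intro i d
    induction d with
    | zero => exact le_rfl
    | succ d ih => rw [← add_assoc, (hf (i + d)).1]; omega
  have ag : ∀ i d x, 0 ≤ x → x < ((f i).1 : ℤ) → (f (i + d)).2 x = (f i).2 x := by
    intro i d x h1 h2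
    induction d with
    | zero => rfl
    | succ d ih =>
      rw [← ih, ← add_assoc]
      have := hn' i d
      exact (hf (i + d)).2.1 x h1 (by omega)
  let X : ℤ → Fin 3 := fun y => (f (y.toNat + 1)).2 y
  have hX : ∀ (k : ℕ) (y : ℤ), 0 ≤ y → y < (k : ℤ) → (f k).2 y = X y := by
    intro k y h1 h2
    have := ag (y.toNat + 1) (k - (y.toNat + 1)) y h1 (by have := hn (y.toNat + 1); omega)
    rw [show y.toNat + 1 + (k - (y.toNat + 1)) = k by omega] at this
    exact this
  obtain ⟨i, j, hij, hs⟩ := higman (blk X)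
  have hpos : 0 < S (j + 1) := by have := S_nonneg j; rw [S_succ]; omega
  obtain ⟨k, hk⟩ : ∃ k : ℕ, ((k + 1 : ℕ) : ℤ) = S (j + 1) := ⟨(S (j + 1) - 1).toNat, by omega⟩
  have ok := (hf k).2.2
  have hle := hn (k + 1)
  refine ok i j hij (by omega) ?_
  have him : S (i + 1) ≤ S (j + 1) := S_strict.monotone (by omega)
  rw [blk_congr (g' := X) i (fun x h1 h2 => hX _ x h1 (by omega)),
    blk_congr (g' := X) j (fun x h1 h2 => hX _ x h1 (by omega))]
  exact hs

/-- Flag invariant when the cells `[0, n)` are filled. -/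
def Inv (n : ℕ) (F : ℤ → Bool) : Prop :=
  FlagSub F ∧ ∀ k, S k ≤ n → F (S (k + 1) - 1) = true

/-- The main claim for a node. -/
def Claim (n : ℕ) (g : ℤ → Fin 3) : Prop :=
  ∀ F, Inv n F → ∃ F' s, Inv n F' ∧
    HR s ⟨.i0, n, Af n g, Bf n g, F, k0⟩ ⟨.i7, n - 1, Af n g, Bf n g, F', k0⟩ ∧
    ∀ n' g', OK n' g' → n ≤ n' → (∀ x : ℤ, 0 ≤ x → x < (n : ℤ) → g' x = g x) → n' < n + s

/-- Processing of one child. -/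
lemma visit (n : ℕ) (g : ℤ → Fin 3) (hok : ∀ i j, i < j → S (j + 1) ≤ n →
      ¬ (blk g i).Sublist (blk g j))
    (ih : OK (n + 1) g → Claim (n + 1) g) (F : ℤ → Bool) (hI : Inv n F) :
    ∃ F' s, Inv n F' ∧
      HR s ⟨.aft, n, Af (n + 1) g, Bf (n + 1) g, F, k0⟩
        ⟨.i0, n, Af (n + 1) g, Bf (n + 1) g, F', k0⟩ ∧
      ∀ n' g', OK n' g' → n + 1 ≤ n' → (∀ x, 0 ≤ x → x < (n : ℤ) + 1 → g' x = g x) →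
        n' < n + 1 + s := by
  -- run the induction hypothesis from the entry configuration
  have run : OK (n + 1) g → ∀ F1, Inv (n + 1) F1 →
      HR 0 ⟨.aft, n, Af (n + 1) g, Bf (n + 1) g, F, k0⟩
        ⟨.i0, (n : ℤ) + 1, Af (n + 1) g, Bf (n + 1) g, F1, k0⟩ →
      ∃ F' s, Inv n F' ∧
      HR s ⟨.aft, n, Af (n + 1) g, Bf (n + 1) g, F, k0⟩
        ⟨.i0, n, Af (n + 1) g, Bf (n + 1) g, F', k0⟩ ∧
      ∀ n' g', OK n' g' → n + 1 ≤ n' → (∀ x, 0 ≤ x → x < (n : ℤ) + 1 → g' x = g x) →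
        n' < n + 1 + s := by
    intro h1 F1 h2 h3
    obtain ⟨F', s, h4, h5, h6⟩ := ih h1 F1 h2
    push_cast at h5 h6
    rw [add_sub_cancel_right] at h5
    have e := nb (N := (n : ℤ) + 1) (g := g) (F := F') (K := k0) (x := n) (l := .i7) (l' := .i8)
      (a := .i0) rfl rfl (by omega) (by omega)
    refine ⟨F', s, ⟨h4.1, fun k hk => h4.2 k (by push_cast; omega)⟩,
      ((h3.trans h5).trans e).mono (by omega), ?_⟩
    exact h6
  cases hFn : F n with
  | false =>
    have hne : ∀ j, S j ≤ ((n + 1 : ℕ) : ℤ) → S j ≤ n := by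
      intro j hj
      by_contra hh
      have e : S j = n + 1 := by push_cast at hj; omega
      cases j with
      | zero => simp [S] at e; omega
      | succ j =>
        have : F (S (j + 1) - 1) = true := hI.2 j (by
          have := S_succ j; omega)
        rw [e, add_sub_cancel_right, hFn] at this
        cases this
    apply run (fun i j h1 h2 => hok i j h1 (hne _ h2)) F
      ⟨hI.1, fun k hk => hI.2 k (hne _ hk)⟩
    exact (h_F0 (l := .aft) rfl hFn).t (h_mvR rfl)
  | true =>
    obtain ⟨m, hm⟩ := hI.1 n hFn
    have hN : (n : ℤ) + 1 = S (m + 1) := by omega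
    have hF1 : ∀ k, k ≤ m → F (S (k + 1) - 1) = true := by
      intro k hk
      apply hI.2
      have h1 : S k < S (m + 1) := S_strict (by omega)
      omega
    have e0 := h_F1 (A := Af (n + 1) g) (B := Bf (n + 1) g) (K := k0) (l := .aft) (a := .c0)
      rfl hFn
    have e1 := check_start (g := g) (F := F) (m := m) (by omega)
    rw [← hm, ← hN] at e1
    rcases blocks_loop (g := g) hI.1 hF1 m 0 (by omega) with ⟨j, h1, h2, h3, h4⟩ | ⟨h3, h4⟩
    · rw [← hm, ← hN] at h4
      refine ⟨F, 0, hI, (e0.t e1).t h4, ?_⟩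
      intro n' g' ok hn ag
      exfalso
      refine ok j m h2 (by omega) ?_
      have hj : S (j + 1) ≤ S (m + 1) := S_strict.monotone (by omega)
      rw [blk_congr (g' := g) j (fun x h1 h2 => ag x h1 (by omega)),
        blk_congr (g' := g) m (fun x h1 h2 => ag x h1 (by omega))]
      exact h3
    · have e2 := extend (g := g) hI.1 (hF1 m le_rfl)
      rw [← hN] at e2 h4
      apply run _ _ _ (((e0.t e1).t h4).t e2)
      · intro i j hij hj
        have hj' : j ≤ m := by
          have : S (j + 1) ≤ S (m + 1) := by push_cast at hj; omega
          have := S_strict.le_iff_le.1 this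
          omega
        rcases Nat.eq_or_lt_of_le hj' with h | h
        · subst h
          exact h3 i (by omega) hij
        · apply hok i j hij
          have : S (j + 1) < S (m + 1) := S_strict (by omega)
          omega
      · constructor
        · intro x hx
          by_cases h : x = S (m + 2) - 1
          · exact ⟨m + 1, h⟩
          · rw [Function.update_of_ne h] at hx
            exact hI.1 x hx
        · intro k hk
          by_cases h : k = m + 1
          · subst h
            simp
          · have : k ≤ m := by
              have : S k ≤ S (m + 1) := by push_cast at hk; omega
              have := S_strict.le_iff_le.1 this
              omega
            have hne : S (k + 1) - 1 ≠ S (m + 2) - 1 := by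
              have : S (k + 1) < S (m + 2) := S_strict (by omega)
              omega
            rw [Function.update_of_ne hne]
            exact hF1 k this

section
variable (n : ℕ) (g : ℤ → Fin 3)

lemma A_0 : Af n g = Af (n + 1) (Function.update g n 0) := by
  funext x
  by_cases h : x = n
  · subst h; simp [Af]
  · simp only [Af, Function.update_of_ne h, decide_eq_decide]
    constructor <;> rintro ⟨h1, h2, h3⟩ <;> exact ⟨h1, by omega, h3⟩
lemma B_0 : Function.update (Bf n g) n true = Bf (n + 1) (Function.update g n 0) := by
  funext x
  by_cases h : x = n
  · subst h; simp [Bf]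
  · simp only [Bf, Function.update_of_ne h, decide_eq_decide]
    constructor <;> rintro ⟨h1, h2, h3⟩ <;> exact ⟨h1, by omega, h3⟩
lemma A_1 : Function.update (Af (n + 1) (Function.update g n 0)) n true =
    Af (n + 1) (Function.update g n 1) := by
  funext x
  by_cases h : x = n
  · subst h; simp [Af]
  · simp only [Af, Function.update_of_ne h]
lemma B_1 : Function.update (Bf (n + 1) (Function.update g n 0)) n false =
    Bf (n + 1) (Function.update g n 1) := by
  funext x
  by_cases h : x = n
  · subst h; simp [Bf]
  · simp only [Bf, Function.update_of_ne h]
lemma A_2 : Af (n + 1) (Function.update g n 1) = Af (n + 1) (Function.update g n 2) := by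
  funext x
  by_cases h : x = n
  · subst h; simp [Af]
  · simp only [Af, Function.update_of_ne h]
lemma B_2 : Function.update (Bf (n + 1) (Function.update g n 1)) n true =
    Bf (n + 1) (Function.update g n 2) := by
  funext x
  by_cases h : x = n
  · subst h; simp [Bf]
  · simp only [Bf, Function.update_of_ne h]
lemma A_3 : Function.update (Af (n + 1) (Function.update g n 2)) n false = Af n g := by
  funext x
  by_cases h : x = n
  · subst h; simp [Af]
  · simp only [Af, Function.update_of_ne h, decide_eq_decide]
    constructor <;> rintro ⟨h1, h2, h3⟩ <;> exact ⟨h1, by omega, h3⟩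
lemma B_3 : Function.update (Bf (n + 1) (Function.update g n 2)) n false = Bf n g := by
  funext x
  by_cases h : x = n
  · subst h; simp [Bf]
  · simp only [Bf, Function.update_of_ne h, decide_eq_decide]
    constructor <;> rintro ⟨h1, h2, h3⟩ <;> exact ⟨h1, by omega, h3⟩

end

lemma claim_all (a : ℕ × (ℤ → Fin 3)) : OK a.1 a.2 → Claim a.1 a.2 := by
  induction a using child_wf.induction with
  | _ a ih =>
    obtain ⟨n, g⟩ := a
    intro ok F hI
    simp only at ok ih ⊢
    have agr : ∀ c : Fin 3, ∀ x : ℤ, 0 ≤ x → x < n → (Function.update g (n : ℤ) c) x = g x :=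
      fun c x h1 h2 => Function.update_of_ne (by omega) _ _
    have V : ∀ c : Fin 3, _ := fun c => visit n (Function.update g (n : ℤ) c)
      (fun i j hij hj => by
        have hi : S (i + 1) ≤ S (j + 1) := S_strict.monotone (by omega)
        rw [blk_congr (g' := g) i (fun x h1 h2 => agr c x h1 (by omega)),
          blk_congr (g' := g) j (fun x h1 h2 => agr c x h1 (by omega))]
        exact ok i j hij hj)
      (fun h => ih (n + 1, Function.update g (n : ℤ) c) ⟨rfl, agr c, h⟩ h)
    obtain ⟨F0, s0, I0, R0, L0⟩ := V 0 F hI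
    obtain ⟨F1, s1, I1, R1, L1⟩ := V 1 F0 I0
    obtain ⟨F2, s2, I2, R2, L2⟩ := V 2 F1 I1
    -- blank to first letter
    have a1 := h_B0 (A := Af n g) (B := Bf n g) (F := F) (K := k0) (x := n) (l := .i0) (b := .i1)
      rfl (by simp [Bf])
    have a2 := h_setB (A := Af n g) (B := Bf n g) (F := F) (K := k0) (x := n) (l := .i1)
      (a := .aft) (v := true) rfl
    rw [B_0] at a2
    have a : HR 1 ⟨.i0, n, Af n g, Bf n g, F, k0⟩
        ⟨.aft, n, Af (n + 1) (Function.update g n 0), Bf (n + 1) (Function.update g n 0),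
          F, k0⟩ := by
      rw [← A_0 n g]
      exact (a1.trans a2).mono (by omega)
    -- first to second letter
    have b1 := h_B1 (A := Af (n + 1) (Function.update g n 0))
      (B := Bf (n + 1) (Function.update g n 0)) (F := F0) (K := k0) (x := n) (l := .i0) (a := .i2)
      rfl (by simp [Bf])
    have b2 := h_setB (A := Af (n + 1) (Function.update g n 0))
      (B := Bf (n + 1) (Function.update g n 0)) (F := F0) (K := k0) (x := n) (l := .i2)
      (a := .i3) (v := false) rfl
    rw [B_1] at b2
    have b3 := h_A0 (A := Af (n + 1) (Function.update g n 0))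
      (B := Bf (n + 1) (Function.update g n 1)) (F := F0) (K := k0) (x := n) (l := .i3) (b := .i4)
      rfl (by simp [Af])
    have b4 := h_setA (A := Af (n + 1) (Function.update g n 0))
      (B := Bf (n + 1) (Function.update g n 1)) (F := F0) (K := k0) (x := n) (l := .i4)
      (a := .aft) (v := true) rfl
    rw [A_1] at b4
    have b := ((b1.t b2).t b3).t b4
    -- second to third letter
    have c1 := h_B0 (A := Af (n + 1) (Function.update g n 1))
      (B := Bf (n + 1) (Function.update g n 1)) (F := F1) (K := k0) (x := n) (l := .i0) (b := .i1)
      rfl (by simp [Bf])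
    have c2 := h_setB (A := Af (n + 1) (Function.update g n 1))
      (B := Bf (n + 1) (Function.update g n 1)) (F := F1) (K := k0) (x := n) (l := .i1)
      (a := .aft) (v := true) rfl
    rw [B_2] at c2
    have c : HR 0 ⟨.i0, n, Af (n + 1) (Function.update g n 1),
          Bf (n + 1) (Function.update g n 1), F1, k0⟩
        ⟨.aft, n, Af (n + 1) (Function.update g n 2), Bf (n + 1) (Function.update g n 2),
          F1, k0⟩ := by
      rw [← A_2 n g]
      exact c1.t c2
    -- third letter to blank
    have d1 := h_B1 (A := Af (n + 1) (Function.update g n 2))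
      (B := Bf (n + 1) (Function.update g n 2)) (F := F2) (K := k0) (x := n) (l := .i0) (a := .i2)
      rfl (by simp [Bf])
    have d2 := h_setB (A := Af (n + 1) (Function.update g n 2))
      (B := Bf (n + 1) (Function.update g n 2)) (F := F2) (K := k0) (x := n) (l := .i2)
      (a := .i3) (v := false) rfl
    rw [B_3] at d2
    have d3 := h_A1 (A := Af (n + 1) (Function.update g n 2))
      (B := Bf n g) (F := F2) (K := k0) (x := n) (l := .i3) (a := .i5)
      rfl (by simp [Af])
    have d4 := h_setA (A := Af (n + 1) (Function.update g n 2))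
      (B := Bf n g) (F := F2) (K := k0) (x := n) (l := .i5)
      (a := .i6) (v := false) rfl
    rw [A_3] at d4
    have d5 := h_mvL (A := Af n g) (B := Bf n g) (F := F2) (K := k0) (x := n) (l := .i6)
      (a := .i7) rfl (by decide)
    have d := (((d1.t d2).t d3).t d4).t d5
    have e := (((((a.trans R0).trans b).trans R1).trans c).trans R2).trans d
    refine ⟨F2, 1 + s0 + s1 + s2, I2, e.mono (by omega), ?_⟩
    intro n' g' ok' hn ag
    rcases Nat.eq_or_lt_of_le hn with h | h
    · omega
    · have agc : ∀ x : ℤ, 0 ≤ x → x < (n : ℤ) + 1 → g' x = Function.update g (n : ℤ) (g' n) x := by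
        intro x h1 h2
        by_cases hx : x = n
        · subst hx; simp
        · rw [Function.update_of_ne hx]; exact ag x h1 (by omega)
      rcases fin3 (g' n) with hc | hc | hc <;> rw [hc] at agc
      · have := L0 n' g' ok' h agc; omega
      · have := L1 n' g' ok' h agc; omega
      · have := L2 n' g' ok' h agc; omega

/-- The machine halts after more steps than the length of any good word. -/
lemma main_run : ∃ T, HaltsIn M T ∧ ∀ n' g', OK n' g' → n' < T := by
  let g : ℤ → Fin 3 := fun _ => 0
  have ok0 : OK 0 g := by
    intro i j _ hj
    have := S_nonneg j
    rw [S_succ] at hj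
    push_cast at hj
    omega
  let F0 : ℤ → Bool := Function.update (fun _ => false) 1 true
  have hI : Inv 0 F0 := by
    constructor
    · intro x hx
      by_cases h : x = 1
      · exact ⟨0, by simp [S, h]⟩
      · simp [F0, Function.update_of_ne h] at hx
    · intro k hk
      have : k = 0 := by
        by_contra h
        have : S 0 < S k := S_strict (by omega)
        simp [S] at this
        push_cast at hk
        omega
      subst this
      simp [S, F0]
  obtain ⟨F', s, _, h2, h3⟩ := claim_all (0, g) ok0 F0 hI
  simp only [Nat.cast_zero] at h2 h3
  have hA : Af 0 g = fun _ => false := by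
    funext x; simp only [Af, decide_eq_false_iff_not]; omega
  have hB : Bf 0 g = fun _ => false := by
    funext x; simp only [Bf, decide_eq_false_iff_not]; omega
  have e1 := h_setF (A := fun _ => false) (B := fun _ => false) (F := fun _ => false)
    (K := fun _ => false) (x := 1) (l := .s0) (a := .s1) (v := true) rfl
  have e2 := h_mvL (A := fun _ => false) (B := fun _ => false) (F := F0)
    (K := fun _ => false) (x := 1) (l := .s1) (a := .i0) rfl (by decide)
  have e3 := bl (N := 0) (g := g) (F := F') (K := k0) (x := 0 - 1) (l := .i7) (l' := .i8)
    (b := .halt) rfl rfl (Or.inl (by omega))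
  rw [hA, hB] at h2 e3
  have e := ((e1.trans e2).trans h2).trans e3
  obtain ⟨T, hT, hH⟩ := halts_of rfl e
  refine ⟨T, hH, ?_⟩
  intro n' g' ok
  have := h3 n' g' ok (by omega) (fun x h1 h2 => by omega)
  omega

/-- The word whose blocks are the Friedman blocks of `s`. -/
lemma exists_word (s : List (Fin 3)) : ∃ g : ℤ → Fin 3, ∀ k d : ℕ, d < k + 2 →
    g (S k + d) = s.getD (k + d) 0 := by
  classical
  refine ⟨fun x => if h : ∃ kd : ℕ × ℕ, kd.2 < kd.1 + 2 ∧ x = S kd.1 + kd.2 then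
    s.getD (h.choose.1 + h.choose.2) 0 else 0, ?_⟩
  intro k d hd
  have h : ∃ kd : ℕ × ℕ, kd.2 < kd.1 + 2 ∧ S k + (d : ℤ) = S kd.1 + kd.2 := ⟨(k, d), hd, rfl⟩
  beta_reduce
  rw [dif_pos h]
  obtain ⟨h1, h2⟩ := h.choose_spec
  generalize h.choose = kd at *
  obtain ⟨k', d'⟩ := kd
  simp only at h1 h2 ⊢
  have a1 := S_succ k
  have a2 := S_succ k'
  have b1 : S k < S (k' + 1) := by omega
  have b2 : S k' < S (k + 1) := by omega
  have c1 := S_strict.lt_iff_lt.1 b1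
  have c2 := S_strict.lt_iff_lt.1 b2
  have : k' = k := by omega
  subst this
  have : d' = d := by omega
  subst this
  rfl

lemma word_bound {T : ℕ} (hT : ∀ n' g', OK n' g' → n' < T) (s : List (Fin 3))
    (hs : SatisfiesStar s) : s.length < T := by
  by_cases h4 : s.length ≤ 4
  · have : OK 4 (fun _ => 0) := by
      intro i j hij hj
      have h2 : S 2 ≤ S (j + 1) := S_strict.monotone (by omega)
      have h5 : S 2 = 5 := by simp [S]
      rw [h5] at h2
      push_cast at hj
      omega
    have := hT _ _ this
    omega
  obtain ⟨g, hg⟩ := exists_word s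
  obtain ⟨m, hm⟩ : ∃ m, m = s.length / 2 := ⟨_, rfl⟩
  have hb : ∀ k, k < m → blk g k = friedmanBlock s (k + 1) := by
    intro k hk
    apply List.ext_getElem
    · simp only [blk, seg_length, friedmanBlock, List.length_take, List.length_drop]
      omega
    · intro d h1 h2
      simp only [blk] at h1 ⊢
      rw [seg_get]
      rw [seg_length] at h1
      rw [hg k d h1]
      simp only [friedmanBlock, List.getElem_take, List.getElem_drop]
      rw [List.getD_eq_getElem _ _ (by omega)]
      congr 1
  have hS := S_nonneg m
  obtain ⟨n, hn⟩ : ∃ n : ℕ, (n : ℤ) = S m := ⟨(S m).toNat, by omega⟩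
  have ok : OK n g := by
    intro i j hij hj
    rw [hn] at hj
    have hjm : j < m := by
      have := S_strict.le_iff_le.1 hj
      omega
    rw [hb i (by omega), hb j hjm]
    exact hs (i + 1) (j + 1) (by omega) (by omega) (by omega)
  have h1 := hT _ _ ok
  have h2 : ∀ m : ℕ, 2 * ((m + 2 : ℕ) : ℤ) + 1 ≤ S (m + 2) := by
    intro m
    induction m with
    | zero => simp [S]
    | succ m ih => rw [S_succ]; push_cast at ih ⊢; omega
  have h3 := h2 (m - 2)
  rw [show m - 2 + 2 = m by omega] at h3
  omega

end FriedmanTM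


/-- There is a Turing machine with 276 states and 2 tape symbols which halts on
the blank tape after more than n(3) steps. -/
theorem tm_276_2_exceeds_n3 :
    ∃ (M : Turing.TM0.Machine (Fin 2) (Fin 276)) (T : ℕ),
      HaltsIn M T ∧ friedmanN 3 < T := by
  obtain ⟨T, h1, h2⟩ := FriedmanTM.main_run
  refine ⟨FriedmanTM.M, T, h1, ?_⟩
  have hb : ∀ n ∈ {n : ℕ | ∃ s : List (Fin 3), s.length = n ∧ SatisfiesStar s}, n < T := by
    rintro n ⟨s, rfl, hs⟩
    exact FriedmanTM.word_bound h2 s hs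
  have hne : {n : ℕ | ∃ s : List (Fin 3), s.length = n ∧ SatisfiesStar s}.Nonempty :=
    ⟨0, [], rfl, fun i j h3 h4 h5 => by simp at h5; omega⟩
  exact hb _ (Nat.sSup_mem hne ⟨T, fun n hn => (hb n hn).le⟩)
end
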